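/- Let Ω₀ ⊂ ℝⁿ be a bounded C^{1,1} domain. There exists r₀ = r₀(Ω₀) > 0 such that for every r < r₀/16 there exists C = C(r,Ω₀) with the following property: for every u ∈ C²(Ω₀) ∩ C¹(Ω̄₀) with Δu + λu = 0 in Ω₀ and ∂u/∂ν₀ = 0 on ∂Ω₀ (λ > 0), the harmonic extension h(x,t) = e^{√λ t} u(x) on Ω = Ω₀ × ℝ ⊂ ℝ^{n+1} satisfies N_h(y,r) ≤ C√λ for every y ∈ Ω̄ = Ω̄₀ × ℝ. -/

import Mathlib

noncomputable section

open MeasureTheory Metric Set Filter Asymptotics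
open scoped Topology NNReal ENNReal RealInnerProductSpace

namespace NodalNeumann

/-- Euclidean space `ℝⁿ`. -/
abbrev Euc (n : ℕ) : Type := EuclideanSpace ℝ (Fin n)

/-- The first `n` coordinates `y'` of a point `y = (y', y'') ∈ ℝ^{n+1}`. -/
def front {n : ℕ} (y : Euc (n + 1)) : Euc n :=
  (EuclideanSpace.equiv (Fin n) ℝ).symm fun i => y i.castSucc

/-- The last coordinate `y''` of a point `y = (y', y'') ∈ ℝ^{n+1}`. -/
def lastc {n : ℕ} (y : Euc (n + 1)) : ℝ := y (Fin.last n)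

/-- `(v, a) ∈ ℝ^{n+1}` built from `v ∈ ℝⁿ` and `a ∈ ℝ`. -/
def snocVec {n : ℕ} (v : Euc n) (a : ℝ) : Euc (n + 1) :=
  (EuclideanSpace.equiv (Fin (n + 1)) ℝ).symm
    fun i => if h : i = Fin.last n then a else v (i.castPred h)

/-- The Laplacian of `u : ℝⁿ → ℝ`. -/
def laplacian {n : ℕ} (u : Euc n → ℝ) (x : Euc n) : ℝ :=
  ∑ i : Fin n, fderiv ℝ (fun y => fderiv ℝ u y (EuclideanSpace.single i 1)) x
    (EuclideanSpace.single i 1)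

/-- `u` is harmonic on `s`. -/
def HarmonicOn {n : ℕ} (u : Euc n → ℝ) (s : Set (Euc n)) : Prop :=
  ContDiffOn ℝ 2 u s ∧ ∀ x ∈ s, laplacian u x = 0

/-- `ν` is the outward unit normal vector of `Ω` at the boundary point `x`:
it is a unit vector, points out of `Ω`, `-ν` points into `Ω`, and it is
orthogonal to the boundary at `x` (in the little-o sense). -/
def OutwardNormalAt {n : ℕ} (Ω : Set (Euc n)) (x ν : Euc n) : Prop :=
  ‖ν‖ = 1 ∧
  (∀ᶠ t : ℝ in 𝓝[>] (0 : ℝ), x + t • ν ∉ closure Ω) ∧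
  (∀ᶠ t : ℝ in 𝓝[>] (0 : ℝ), x - t • ν ∈ Ω) ∧
  (fun y : Euc n => (⟪ν, y - x⟫)) =o[𝓝[frontier Ω] x] fun y => ‖y - x‖

/-- `ν` is an outward unit normal field of `Ω` along `∂Ω ∩ s`. -/
def OutwardNormalFieldOn {n : ℕ} (Ω : Set (Euc n)) (ν : Euc n → Euc n)
    (s : Set (Euc n)) : Prop :=
  ∀ x ∈ frontier Ω ∩ s, OutwardNormalAt Ω x (ν x)

/-- The homogeneous Neumann boundary condition `∂h/∂ν = 0` on `∂Ω ∩ s`. -/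
def NeumannBC {n : ℕ} (Ω : Set (Euc n)) (ν : Euc n → Euc n) (h : Euc n → ℝ)
    (s : Set (Euc n)) : Prop :=
  ∀ x ∈ frontier Ω ∩ s, DifferentiableWithinAt ℝ h (closure Ω) x ∧
    fderivWithin ℝ h (closure Ω) x (ν x) = 0

/-- `f : ℝⁿ → ℝ` is `C^{1,1}` with character `M`: differentiable with `M`-Lipschitz
derivative (and itself `M`-Lipschitz). -/
def IsC11FunWith {n : ℕ} (M : ℝ≥0) (f : Euc n → ℝ) : Prop :=
  Differentiable ℝ f ∧ LipschitzWith M f ∧ LipschitzWith M fun x => fderiv ℝ f x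

/-- `Ω ∩ B(x,r)` is, after an isometry `T` of `ℝ^{n+1}` with `T 0 = x`, the region
in the ball above the graph of a function `f` with `f 0 = 0` satisfying `P`. -/
def IsGraphBall {n : ℕ} (Ω : Set (Euc (n + 1))) (x : Euc (n + 1)) (r : ℝ)
    (P : (Euc n → ℝ) → Prop) : Prop :=
  ∃ (T : Euc (n + 1) ≃ᵃⁱ[ℝ] Euc (n + 1)) (f : Euc n → ℝ), P f ∧ T 0 = x ∧ f 0 = 0 ∧
    Ω ∩ ball x r =
      ⇑T '' {y : Euc (n + 1) | y ∈ ball (0 : Euc (n + 1)) r ∧ f (front y) < lastc y}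

/-- `∂Ω ∩ B(x,r) ∈ Lip(τ)`. -/
def LipGraphBall {n : ℕ} (Ω : Set (Euc (n + 1))) (x : Euc (n + 1)) (r τ : ℝ) : Prop :=
  IsGraphBall Ω x r fun f => LipschitzWith (Real.toNNReal τ) f

/-- `Ω` is a `C^{1,1}` domain with character `(ρ, M)`. -/
def IsC11DomainWith {n : ℕ} (Ω : Set (Euc (n + 1))) (ρ : ℝ) (M : ℝ≥0) : Prop :=
  IsOpen Ω ∧ IsConnected Ω ∧ 0 < ρ ∧
    ∀ x ∈ frontier Ω, IsGraphBall Ω x ρ (IsC11FunWith M)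

/-- `Ω` is a `C^{1,1}` domain. -/
def IsC11Domain {n : ℕ} (Ω : Set (Euc (n + 1))) : Prop :=
  ∃ (ρ : ℝ) (M : ℝ≥0), IsC11DomainWith Ω ρ M

/-- `Ω` is a Lipschitz domain with character `(ρ, M)`. -/
def IsLipDomainWith {n : ℕ} (Ω : Set (Euc (n + 1))) (ρ : ℝ) (M : ℝ≥0) : Prop :=
  IsOpen Ω ∧ IsConnected Ω ∧ 0 < ρ ∧
    ∀ x ∈ frontier Ω, IsGraphBall Ω x ρ fun f => LipschitzWith M f

/-- The portion `∂Ω ∩ s` of the boundary has `C^{1,1}` character `(ρ, M)`. -/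
def HasC11CharacterOn {n : ℕ} (Ω : Set (Euc (n + 1))) (s : Set (Euc (n + 1)))
    (ρ : ℝ) (M : ℝ≥0) : Prop :=
  0 < ρ ∧ ∀ x ∈ frontier Ω ∩ s, IsGraphBall Ω x ρ (IsC11FunWith M)

/-- `H_h(x,r) = ∫_{B(x,r) ∩ Ω} h²`. -/
def Hfun {n : ℕ} (Ω : Set (Euc n)) (h : Euc n → ℝ) (x : Euc n) (r : ℝ) : ℝ :=
  ∫ y in ball x r ∩ Ω, h y ^ 2

/-- The doubling index `N_h(x,r) = log (H_h(x,2r) / H_h(x,r))`. -/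
def Nfun {n : ℕ} (Ω : Set (Euc n)) (h : Euc n → ℝ) (x : Euc n) (r : ℝ) : ℝ :=
  Real.log (Hfun Ω h x (2 * r) / Hfun Ω h x r)

/-- Closed axis-parallel cube with centre `c` and side length `s`. -/
def cube {n : ℕ} (c : Euc n) (s : ℝ) : Set (Euc n) :=
  {y : Euc n | ∀ i, |y i - c i| ≤ s / 2}

/-- Maximal doubling index `N*_h(Q)` over the cube of centre `c` and side `s`
(whose diameter is `√n · s`). -/
def Nstar {n : ℕ} (Ω : Set (Euc n)) (h : Euc n → ℝ) (c : Euc n) (s : ℝ) : ℝ :=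
  sSup {N : ℝ | ∃ x ∈ cube c s ∩ closure Ω, ∃ r : ℝ,
    0 < r ∧ r ≤ Real.sqrt n * s ∧ N = Nfun Ω h x r}

/-- The nodal set `Z(h) = {x ∈ Ω : h x = 0}`. -/
def zeroSet {n : ℕ} (Ω : Set (Euc n)) (h : Euc n → ℝ) : Set (Euc n) :=
  {x ∈ Ω | h x = 0}

/-- `sup_s g`. -/
def supOn {α : Type*} (g : α → ℝ) (s : Set α) : ℝ := sSup (g '' s)

/-- The open cylinder `S(x,r,t)` of radius `r` and height `t` whose lower face is
centred at `x`. -/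
def cyl {n : ℕ} (x : Euc (n + 1)) (r t : ℝ) : Set (Euc (n + 1)) :=
  {y : Euc (n + 1) | ‖front y - front x‖ < r ∧ 0 < lastc y - lastc x ∧
    lastc y - lastc x < t}

/-- In the chosen coordinates (centred at `x`, with `e_n = -ν(x)`), `Ω ∩ B(x,R)`
is the region above the graph of the `τ`-Lipschitz function `f` with `f 0 = 0`. -/
def AlignedLipGraphOn {n : ℕ} (Ω : Set (Euc (n + 1))) (x : Euc (n + 1)) (R τ : ℝ)
    (f : Euc n → ℝ) : Prop :=
  LipschitzWith (Real.toNNReal τ) f ∧ f 0 = 0 ∧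
    Ω ∩ ball x R = {y ∈ ball x R | f (front (y - x)) < lastc (y - x)}

/-- `z` is the centre of one of the boundary cubes `q ∈ 𝓑_k(Q)` of the standard
construction for the cube `Q` of centre `xQ` and side `s`: the projection of `z` is
the centre of one of the `2^{k·n}` subcubes of side `s/2^k` of the projection of
`Q`, and `z` lies on `∂Ω`. The cube `q` itself is `cube z (s/2^k)`. -/
def IsBdryCubeCenter {n : ℕ} (Ω : Set (Euc (n + 1))) (xQ : Euc (n + 1)) (s : ℝ)
    (k : ℕ) (z : Euc (n + 1)) : Prop :=
  z ∈ frontier Ω ∧ ∃ a : Fin n → ℕ, (∀ i, a i < 2 ^ k) ∧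
    ∀ i : Fin n, z i.castSucc = xQ i.castSucc - s / 2 + ((a i : ℝ) + 1 / 2) * (s / 2 ^ k)

/-- The infinite cylinder `Ω₀ × ℝ ⊂ ℝ^{n+1}` over `Ω₀ ⊂ ℝⁿ`. -/
def prodDomain {n : ℕ} (Ω₀ : Set (Euc n)) : Set (Euc (n + 1)) :=
  {y : Euc (n + 1) | front y ∈ Ω₀}

/-- The harmonic extension `h(x,t) = e^{√λ t} u(x)` of `u` to `Ω₀ × ℝ`. -/
def hExt {n : ℕ} (lam : ℝ) (u : Euc n → ℝ) : Euc (n + 1) → ℝ :=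
  fun y => Real.exp (Real.sqrt lam * lastc y) * u (front y)


section

/-! ### Local Lipschitz maps -/

/-- `F` is Lipschitz in a neighbourhood of `x`. -/
def LLipAt {X Y : Type*} [PseudoEMetricSpace X] [PseudoEMetricSpace Y] (F : X → Y) (x : X) : Prop :=
  ∃ K : ℝ≥0, ∃ t ∈ 𝓝 x, LipschitzOnWith K F t

theorem LLipAt.continuousAt {X Y : Type*} [PseudoEMetricSpace X] [PseudoEMetricSpace Y]
    {F : X → Y} {x : X} (h : LLipAt F x) : ContinuousAt F x := by
  obtain ⟨K, t, ht, hK⟩ := h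
  exact hK.continuousOn.continuousAt ht

theorem LLipAt.comp {X Y Z : Type*} [PseudoEMetricSpace X] [PseudoEMetricSpace Y]
    [PseudoEMetricSpace Z] {F : X → Y} {g : Y → Z} {x : X}
    (hg : LLipAt g (F x)) (h : LLipAt F x) : LLipAt (fun y => g (F y)) x := by
  have hc := h.continuousAt
  obtain ⟨K, t, ht, hK⟩ := h
  obtain ⟨K', t', ht', hK'⟩ := hg
  refine ⟨K' * K, t ∩ F ⁻¹' t', inter_mem ht (hc ht'), ?_⟩
  exact hK'.comp (hK.mono inter_subset_left) (fun y hy => hy.2)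

theorem LLipAt.prodMk {X Y Z : Type*} [PseudoEMetricSpace X] [PseudoEMetricSpace Y]
    [PseudoEMetricSpace Z] {F : X → Y} {g : X → Z} {x : X}
    (h : LLipAt F x) (hg : LLipAt g x) : LLipAt (fun y => (F y, g y)) x := by
  obtain ⟨K, t, ht, hK⟩ := h
  obtain ⟨K', t', ht', hK'⟩ := hg
  exact ⟨_, t ∩ t', inter_mem ht ht',
    (hK.mono inter_subset_left).prodMk (hK'.mono inter_subset_right)⟩

theorem LLipAt.congr {X Y : Type*} [PseudoEMetricSpace X] [PseudoEMetricSpace Y]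
    {F g : X → Y} {x : X} (h : LLipAt F x) (hg : g =ᶠ[𝓝 x] F) : LLipAt g x := by
  obtain ⟨K, t, ht, hK⟩ := h
  refine ⟨K, t ∩ {y | g y = F y}, inter_mem ht hg, ?_⟩
  intro a ha b hb
  rw [ha.2, hb.2]
  exact hK ha.1 hb.1

theorem _root_.LipschitzWith.llipAt {X Y : Type*} [PseudoEMetricSpace X] [PseudoEMetricSpace Y]
    {F : X → Y} {K : ℝ≥0} (h : LipschitzWith K F) (x : X) : LLipAt F x :=
  ⟨K, univ, univ_mem, h.lipschitzOnWith⟩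

section
variable {X : Type*} [PseudoEMetricSpace X]
variable {V W : Type*} [NormedAddCommGroup V] [NormedSpace ℝ V]
  [NormedAddCommGroup W] [NormedSpace ℝ W]

theorem _root_.ContDiffAt.llipAt {F : V → W} {x : V} (h : ContDiffAt ℝ 1 F x) : LLipAt F x :=
  h.exists_lipschitzOnWith

theorem LLipAt.smul {f : X → ℝ} {F : X → W} {x : X} (hf : LLipAt f x) (hF : LLipAt F x) :
    LLipAt (fun y => f y • F y) x := by
  have : ContDiff ℝ 1 (fun p : ℝ × W => p.1 • p.2) := contDiff_fst.smul contDiff_snd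
  exact LLipAt.comp (g := fun p : ℝ × W => p.1 • p.2) this.contDiffAt.llipAt (hf.prodMk hF)

theorem LLipAt.mul {f g : X → ℝ} {x : X} (hf : LLipAt f x) (hF : LLipAt g x) :
    LLipAt (fun y => f y * g y) x := hf.smul hF

theorem LLipAt.add {f g : X → W} {x : X} (hf : LLipAt f x) (hF : LLipAt g x) :
    LLipAt (fun y => f y + g y) x := by
  have : ContDiff ℝ 1 (fun p : W × W => p.1 + p.2) := contDiff_fst.add contDiff_snd
  exact LLipAt.comp (g := fun p : W × W => p.1 + p.2) this.contDiffAt.llipAt (hf.prodMk hF)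

theorem LLipAt.sub {f g : X → W} {x : X} (hf : LLipAt f x) (hF : LLipAt g x) :
    LLipAt (fun y => f y - g y) x := by
  have : ContDiff ℝ 1 (fun p : W × W => p.1 - p.2) := contDiff_fst.sub contDiff_snd
  exact LLipAt.comp (g := fun p : W × W => p.1 - p.2) this.contDiffAt.llipAt (hf.prodMk hF)

theorem LLipAt.inner {V : Type*} [NormedAddCommGroup V] [InnerProductSpace ℝ V]
    {f g : X → V} {x : X} (hf : LLipAt f x) (hF : LLipAt g x) :
    LLipAt (fun y => ⟪f y, g y⟫) x := by
  have : ContDiff ℝ 1 (fun p : V × V => ⟪p.1, p.2⟫) := contDiff_fst.inner ℝ contDiff_snd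
  exact LLipAt.comp (g := fun p : V × V => ⟪p.1, p.2⟫) this.contDiffAt.llipAt (hf.prodMk hF)

end

theorem LLipAt.const {X W : Type*} [PseudoEMetricSpace X] [PseudoEMetricSpace W] (c : W) (x : X) :
    LLipAt (fun _ : X => c) x :=
  (LipschitzWith.const c).llipAt x

/-- A locally Lipschitz map with compact support is Lipschitz. -/
theorem exists_lipschitz_of_compactSupport {V W : Type*} [NormedAddCommGroup V] [ProperSpace V]
    [NormedAddCommGroup W]
    {F : V → W} (h : ∀ x, LLipAt F x) (hs : HasCompactSupport F) : ∃ K : ℝ≥0, LipschitzWith K F := by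
  have hcont : Continuous F := continuous_iff_continuousAt.2 fun x => (h x).continuousAt
  obtain ⟨M, hM⟩ := hcont.bounded_above_of_compact_support hs
  obtain ⟨R, hR⟩ := hs.isCompact.isBounded.subset_closedBall (0 : V)
  obtain ⟨K, hK⟩ := LocallyLipschitzOn.exists_lipschitzOnWith_of_compact
    (isCompact_closedBall (0 : V) (R + 1))
    (LocallyLipschitz.locallyLipschitzOn (f := F) h)
  have hM0 : 0 ≤ M := (norm_nonneg _).trans (hM 0)
  have hz : ∀ x, x ∉ closedBall (0 : V) R → F x = 0 := fun x hx =>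
    image_eq_zero_of_notMem_tsupport fun h' => hx (hR h')
  refine ⟨K + (2 * M).toNNReal, LipschitzWith.of_dist_le_mul fun x y => ?_⟩
  push_cast
  rw [Real.coe_toNNReal _ (by positivity)]
  have hd := dist_nonneg (x := x) (y := y)
  have hK0 : (0 : ℝ) ≤ K := K.2
  by_cases hxy : 1 ≤ dist x y
  · have : dist (F x) (F y) ≤ 2 * M := by
      rw [dist_eq_norm]
      linarith [norm_sub_le (F x) (F y), hM x, hM y]
    nlinarith
  push Not at hxy
  by_cases hx : x ∈ closedBall (0 : V) R
  · have hy : y ∈ closedBall (0 : V) (R + 1) := by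
      simp only [mem_closedBall] at *
      linarith [dist_triangle y x 0, dist_comm x y]
    have hx' : x ∈ closedBall (0 : V) (R + 1) := by
      simp only [mem_closedBall] at *
      linarith
    have := hK.dist_le_mul x hx' y hy
    nlinarith
  by_cases hy : y ∈ closedBall (0 : V) R
  · have hx' : x ∈ closedBall (0 : V) (R + 1) := by
      simp only [mem_closedBall] at *
      linarith [dist_triangle x y 0, dist_comm x y]
    have hy' : y ∈ closedBall (0 : V) (R + 1) := by
      simp only [mem_closedBall] at *
      linarith
    have := hK.dist_le_mul x hx' y hy'
    nlinarith
  · rw [hz x hx, hz y hy, dist_self]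
    positivity

/-! ### Divergence -/

/-- The trace of an endomorphism of Euclidean space. -/
def dv {m : ℕ} (L : Euc m →L[ℝ] Euc m) : ℝ :=
  ∑ i : Fin m, ⟪L (EuclideanSpace.single i 1), EuclideanSpace.single i (1 : ℝ)⟫

variable {m : ℕ}

theorem dv_add (L M : Euc m →L[ℝ] Euc m) : dv (L + M) = dv L + dv M := by
  simp [dv, inner_add_left, Finset.sum_add_distrib]

theorem dv_sub (L M : Euc m →L[ℝ] Euc m) : dv (L - M) = dv L - dv M := by
  simp [dv, inner_sub_left, Finset.sum_sub_distrib]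

theorem dv_smul (c : ℝ) (L : Euc m →L[ℝ] Euc m) : dv (c • L) = c * dv L := by
  simp [dv, Finset.mul_sum, real_inner_smul_left]

theorem dv_neg (L : Euc m →L[ℝ] Euc m) : dv (-L) = - dv L := by
  simp [dv]

theorem dv_zero : dv (0 : Euc m →L[ℝ] Euc m) = 0 := by simp [dv]

theorem euc_sum_single (V : Euc m) : ∑ i, V i • EuclideanSpace.single i (1 : ℝ) = V := by
  have := (EuclideanSpace.basisFun (Fin m) ℝ).sum_repr V
  simpa using this

theorem dv_smulRight (l : Euc m →L[ℝ] ℝ) (V : Euc m) : dv (l.smulRight V) = l V := by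
  conv_rhs => rw [← euc_sum_single V]
  simp only [dv, ContinuousLinearMap.smulRight_apply, inner_smul_left, map_sum, map_smul]
  refine Finset.sum_congr rfl fun i _ => ?_
  simp [EuclideanSpace.inner_single_right, mul_comm]

theorem abs_dv_le (L : Euc m →L[ℝ] Euc m) : |dv L| ≤ m * ‖L‖ := by
  calc |dv L| ≤ ∑ i : Fin m, ‖L‖ := by
        refine (Finset.abs_sum_le_sum_abs _ _).trans (Finset.sum_le_sum fun i _ => ?_)
        refine (abs_real_inner_le_norm _ _).trans ?_
        have := L.le_opNorm (EuclideanSpace.single i 1)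
        simp only [PiLp.norm_single, norm_one, mul_one] at *
        exact this
    _ = m * ‖L‖ := by simp

theorem dv_continuous : Continuous (dv : (Euc m →L[ℝ] Euc m) → ℝ) := by
  unfold dv
  fun_prop

theorem measurable_dv_fderiv (F : Euc m → Euc m) : Measurable fun x => dv (fderiv ℝ F x) :=
  dv_continuous.measurable.comp (measurable_fderiv ℝ F)

/-- The divergence theorem for compactly supported Lipschitz fields. -/
theorem integral_dv_eq_zero {F : Euc m → Euc m} {K : ℝ≥0} (hF : LipschitzWith K F)
    (hs : HasCompactSupport F) : ∫ x, dv (fderiv ℝ F x) = 0 := by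
  have hcomp : ∀ i : Fin m, LipschitzWith K fun x => (F x) i := fun i => by
    have h1 : LipschitzWith 1 (fun v : Euc m => v i) := by
      refine LipschitzWith.of_dist_le_mul fun x y => ?_
      have := PiLp.norm_apply_le (x - y) i
      simpa [dist_eq_norm] using this
    have h2 := h1.comp hF
    rw [one_mul] at h2
    exact h2
  have hcs : ∀ i : Fin m, HasCompactSupport fun x => (F x) i := fun i =>
    hs.comp_left (g := fun v : Euc m => v i) (by simp)
  have key : ∀ i : Fin m, ∫ x, ⟪fderiv ℝ F x (EuclideanSpace.single i 1),
      EuclideanSpace.single i (1 : ℝ)⟫ = 0 := fun i => by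
    have h1 := LipschitzWith.integral_lineDeriv_mul_eq (μ := volume) (LipschitzWith.const (1 : ℝ))
      (hcomp i) (hcs i) (-(EuclideanSpace.single i (1 : ℝ) : Euc m))
    have h0 : ∀ x : Euc m, lineDeriv ℝ (fun _ : Euc m => (1 : ℝ)) x
        (-(EuclideanSpace.single i (1 : ℝ) : Euc m)) = 0 := fun x => by
      simp [lineDeriv]
    simp only [h0, zero_mul, integral_zero, neg_neg, mul_one] at h1
    rw [h1]
    refine integral_congr_ae ?_
    filter_upwards [hF.ae_differentiableAt (μ := volume)] with x hx
    have h2 : HasFDerivAt (fun y => (F y) i)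
        ((EuclideanSpace.proj i : Euc m →L[ℝ] ℝ).comp (fderiv ℝ F x)) x :=
      (EuclideanSpace.proj i : Euc m →L[ℝ] ℝ).hasFDerivAt.comp x hx.hasFDerivAt
    rw [h2.differentiableAt.lineDeriv_eq_fderiv, h2.fderiv]
    simp [EuclideanSpace.inner_single_right]
  have hIntg : ∀ i : Fin m, Integrable fun x => ⟪fderiv ℝ F x (EuclideanSpace.single i 1),
      EuclideanSpace.single i (1 : ℝ)⟫ := fun i => by
    have hc : Continuous fun L : Euc m →L[ℝ] Euc m =>
        ⟪L (EuclideanSpace.single i 1), EuclideanSpace.single i (1 : ℝ)⟫ := by fun_prop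
    have hm : Measurable fun x => ⟪fderiv ℝ F x (EuclideanSpace.single i 1),
      EuclideanSpace.single i (1 : ℝ)⟫ := hc.measurable.comp (measurable_fderiv ℝ F)
    have hs' := hs.fderiv ℝ
    have : IntegrableOn (fun x => ⟪fderiv ℝ F x (EuclideanSpace.single i 1),
      EuclideanSpace.single i (1 : ℝ)⟫) (tsupport (fderiv ℝ F)) := by
      refine IntegrableOn.of_bound (C := K) hs'.isCompact.measure_lt_top hm.aestronglyMeasurable ?_
      refine ae_of_all _ fun x => ?_
      refine (norm_inner_le_norm _ _).trans ?_
      have h1 := (fderiv ℝ F x).le_opNorm (EuclideanSpace.single i 1)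
      have h2 := norm_fderiv_le_of_lipschitz ℝ (x₀ := x) hF
      simp only [PiLp.norm_single, norm_one, mul_one] at *
      linarith
    refine (integrableOn_iff_integrable_of_support_subset ?_).1 this
    intro x hx
    by_contra h
    apply hx
    have h3 : fderiv ℝ F x = 0 := image_eq_zero_of_notMem_tsupport h
    simp only [h3]
    simp
  simp only [dv]
  rw [integral_finsetSum _ fun i _ => hIntg i]
  exact Finset.sum_eq_zero fun i _ => key i

end


section
variable {m : ℕ}

/-! ### Defining functions and the divergence theorem on the domain -/

/-- `ψ` is a `C^{1,1}` defining function, with gradient `P`, of the bounded open set `Ω`. -/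
structure IsDef (Ω : Set (Euc m)) (ψ : Euc m → ℝ) (P : Euc m → Euc m) : Prop where
  isOpen : IsOpen Ω
  bdd : Bornology.IsBounded Ω
  grad : ∀ x, HasFDerivAt ψ (innerSL ℝ (P x)) x
  lip : ∃ K : ℝ≥0, LipschitzWith K P
  pos : ∀ x ∈ Ω, 0 < ψ x
  zero : ∀ x ∈ frontier Ω, ψ x = 0
  ne : ∀ x ∈ frontier Ω, P x ≠ 0

theorem contDiff_one_of_grad {ψ : Euc m → ℝ} {P : Euc m → Euc m}
    (h : ∀ x, HasFDerivAt ψ (innerSL ℝ (P x)) x) (hP : Continuous P) : ContDiff ℝ 1 ψ := by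
  rw [contDiff_one_iff_fderiv]
  refine ⟨fun x => (h x).differentiableAt, ?_⟩
  have : fderiv ℝ ψ = fun x => innerSL ℝ (P x) := funext fun x => (h x).fderiv
  rw [this]
  exact (innerSL ℝ).continuous.comp hP

namespace IsDef

variable {Ω : Set (Euc m)} {ψ : Euc m → ℝ} {P : Euc m → Euc m}

theorem contP (h : IsDef Ω ψ P) : Continuous P := by
  obtain ⟨K, hK⟩ := h.lip
  exact hK.continuous

theorem contDiff (h : IsDef Ω ψ P) : ContDiff ℝ 1 ψ := contDiff_one_of_grad h.grad h.contP

theorem cont (h : IsDef Ω ψ P) : Continuous ψ := h.contDiff.continuous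

theorem compact (h : IsDef Ω ψ P) : IsCompact (closure Ω) := h.bdd.isCompact_closure

theorem vol_lt (h : IsDef Ω ψ P) : volume Ω < ∞ :=
  (measure_mono subset_closure).trans_lt h.compact.measure_lt_top

theorem closure_eq (h : IsDef Ω ψ P) {x : Euc m} (hx : x ∈ closure Ω) : x ∈ Ω ∨ x ∈ frontier Ω := by
  by_cases hx' : x ∈ Ω
  · exact Or.inl hx'
  · right
    rw [frontier, h.isOpen.interior_eq]
    exact ⟨hx, hx'⟩

theorem pos_on_compact (h : IsDef Ω ψ P) {K : Set (Euc m)} (hK : IsCompact K)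
    (hK' : K ⊆ closure Ω) (hd : ∀ x ∈ frontier Ω, x ∉ K) : ∃ δ : ℝ, 0 < δ ∧ ∀ x ∈ K, δ ≤ ψ x := by
  refine hK.exists_forall_le' h.cont.continuousOn fun x hx => ?_
  rcases h.closure_eq (hK' hx) with h1 | h1
  · exact h.pos x h1
  · exact absurd hx (hd x h1)

theorem exists_small (h : IsDef Ω ψ P) {g : Euc m → ℝ} (hg : ContinuousOn g (closure Ω))
    {η : ℝ} (hη : ∀ x ∈ frontier Ω, g x < η) :
    ∃ δ : ℝ, 0 < δ ∧ ∀ x ∈ closure Ω, ψ x < δ → g x < η := by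
  have hK : IsCompact (closure Ω ∩ g ⁻¹' Ici η) :=
    h.compact.of_isClosed_subset (hg.preimage_isClosed_of_isClosed isClosed_closure isClosed_Ici)
      inter_subset_left
  obtain ⟨δ, hδ, h'⟩ := h.pos_on_compact hK inter_subset_left
    (fun x hx hx' => absurd (hη x hx) (not_lt.2 hx'.2))
  refine ⟨δ, hδ, fun x hx hlt => ?_⟩
  by_contra hc
  exact absurd (h' x ⟨hx, not_lt.1 hc⟩) (not_le.2 hlt)

theorem exists_grad_lower (h : IsDef Ω ψ P) : ∃ c δ : ℝ, 0 < c ∧ 0 < δ ∧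
    ∀ x ∈ closure Ω, ψ x < δ → c < ‖P x‖ ^ 2 := by
  have hfc : IsCompact (frontier Ω) := h.compact.of_isClosed_subset isClosed_frontier
    frontier_subset_closure
  have hc : Continuous fun x => ‖P x‖ ^ 2 := by have := h.contP; fun_prop
  obtain ⟨a, ha, ha'⟩ := hfc.exists_forall_le' (a := 0) hc.continuousOn
    (fun x hx => by have := norm_pos_iff.2 (h.ne x hx); positivity)
  obtain ⟨δ, hδ, h'⟩ := h.exists_small (g := fun x => - ‖P x‖ ^ 2) (η := - (a / 2))
    hc.neg.continuousOn (fun x hx => by have := ha' x hx; linarith)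
  exact ⟨a / 2, δ, by positivity, hδ, fun x hx hlt => by have := h' x hx hlt; linarith⟩

theorem cut (h : IsDef Ω ψ P) {κ : ℝ → ℝ} (hκ : ContDiff ℝ 1 κ) {ε : ℝ} (hε : 0 < ε)
    (hz : ∀ s ≤ ε, κ s = 0) {W : Euc m → Euc m} (hW : ∀ x ∈ Ω, LLipAt W x)
    (hWd : ∀ᵐ x ∂(volume.restrict Ω), DifferentiableAt ℝ W x) :
    ∫ x in Ω, (κ (ψ x) * dv (fderiv ℝ W x) + deriv κ (ψ x) * ⟪P x, W x⟫) = 0 := by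
  set F : Euc m → Euc m := Ω.indicator fun x => κ (ψ x) • W x with hF
  have hin : ∀ x ∈ Ω, F =ᶠ[𝓝 x] fun x => κ (ψ x) • W x := fun x hx => by
    filter_upwards [h.isOpen.mem_nhds hx] with y hy
    simp [hF, hy]
  have hout : ∀ x, x ∉ Ω → F =ᶠ[𝓝 x] fun _ => 0 := fun x hx => by
    by_cases hc : x ∈ closure Ω
    · have hfr : x ∈ frontier Ω := (h.closure_eq hc).resolve_left hx
      have : ∀ᶠ y in 𝓝 x, ψ y < ε :=
        h.cont.continuousAt.eventually_lt_const (by rw [h.zero x hfr]; exact hε)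
      filter_upwards [this] with y hy
      by_cases hyΩ : y ∈ Ω
      · rw [hF, indicator_of_mem hyΩ, hz _ hy.le, zero_smul]
      · rw [hF, indicator_of_notMem hyΩ]
    · filter_upwards [isClosed_closure.isOpen_compl.mem_nhds hc] with y hy
      have : y ∉ Ω := fun h' => hy (subset_closure h')
      simp [hF, this]
  have hL : ∀ x, LLipAt F x := fun x => by
    by_cases hx : x ∈ Ω
    · refine LLipAt.congr ?_ (hin x hx)
      exact (LLipAt.comp hκ.contDiffAt.llipAt h.contDiff.contDiffAt.llipAt).smul (hW x hx)
    · exact (LLipAt.const 0 x).congr (hout x hx)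
  have hcs : HasCompactSupport F := by
    refine HasCompactSupport.of_support_subset_isCompact h.compact ?_
    exact (support_indicator_subset).trans subset_closure
  obtain ⟨K, hK⟩ := exists_lipschitz_of_compactSupport hL hcs
  have h0 := integral_dv_eq_zero hK hcs
  rw [← setIntegral_eq_integral_of_forall_compl_eq_zero (s := Ω)] at h0
  · rw [← h0]
    refine integral_congr_ae ?_
    filter_upwards [hWd, ae_restrict_mem h.isOpen.measurableSet] with x hx hxΩ
    have h1 : HasFDerivAt (fun x => κ (ψ x)) (deriv κ (ψ x) • innerSL ℝ (P x)) x :=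
      ((hκ.differentiable one_ne_zero (ψ x)).hasDerivAt).comp_hasFDerivAt x (h.grad x)
    have h2 := h1.fun_smul hx.hasFDerivAt
    rw [(hin x hxΩ).fderiv_eq, h2.fderiv, dv_add, dv_smul, dv_smulRight]
    simp
  · intro x hx
    rw [(hout x hx).fderiv_eq]
    simp [dv_zero]

end IsDef

/-- Smooth cutoff `0` for `s ≤ ε` and `1` for `s ≥ 2ε`. -/
def kap (ε s : ℝ) : ℝ := Real.smoothTransition (s / ε - 1)

theorem kap_contDiff (ε : ℝ) {k : ℕ∞} : ContDiff ℝ k (kap ε) := by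
  unfold kap
  exact Real.smoothTransition.contDiff.comp ((contDiff_id.div_const ε).sub contDiff_const)

theorem kap_zero {ε : ℝ} (hε : 0 < ε) {s : ℝ} (hs : s ≤ ε) : kap ε s = 0 := by
  apply Real.smoothTransition.zero_of_nonpos
  have : s / ε ≤ 1 := (div_le_one hε).2 hs
  linarith

theorem kap_one {ε : ℝ} (hε : 0 < ε) {s : ℝ} (hs : 2 * ε ≤ s) : kap ε s = 1 := by
  apply Real.smoothTransition.one_of_one_le
  have : 2 ≤ s / ε := (le_div_iff₀ hε).2 hs
  linarith

theorem kap_nonneg (ε s : ℝ) : 0 ≤ kap ε s := Real.smoothTransition.nonneg _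

theorem kap_le_one (ε s : ℝ) : kap ε s ≤ 1 := Real.smoothTransition.le_one _

theorem kap_mono {ε : ℝ} (hε : 0 < ε) : Monotone (kap ε) := fun a b hab =>
  Real.smoothTransition.monotone (by have := div_le_div_of_nonneg_right hab hε.le; linarith)

theorem deriv_kap_nonneg {ε : ℝ} (hε : 0 < ε) (s : ℝ) : 0 ≤ deriv (kap ε) s :=
  (kap_mono hε).deriv_nonneg

theorem deriv_kap_eq_zero {ε : ℝ} (hε : 0 < ε) {s : ℝ} (hs : 2 * ε < s) : deriv (kap ε) s = 0 := by
  have : kap ε =ᶠ[𝓝 s] fun _ => 1 := by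
    filter_upwards [lt_mem_nhds hs] with t ht
    exact kap_one hε ht.le
  rw [this.deriv_eq]
  simp

theorem deriv_kap_cont (ε : ℝ) : Continuous (deriv (kap ε)) :=
  (kap_contDiff ε (k := 1)).continuous_deriv le_rfl

namespace IsDef

variable {Ω : Set (Euc m)} {ψ : Euc m → ℝ} {P : Euc m → Euc m}

theorem integrableOn_cont (h : IsDef Ω ψ P) {g : Euc m → ℝ} (hg : ContinuousOn g (closure Ω)) :
    IntegrableOn g Ω :=
  (hg.integrableOn_compact h.compact).mono_set subset_closure

theorem surface_bound (h : IsDef Ω ψ P) : ∃ C ε₀ : ℝ, 0 ≤ C ∧ 0 < ε₀ ∧ ∀ ε : ℝ, 0 < ε → ε < ε₀ →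
    ∫ x in Ω, deriv (kap ε) (ψ x) ≤ C := by
  obtain ⟨c, δ, hc, hδ, hcδ⟩ := h.exists_grad_lower
  obtain ⟨K, hK⟩ := h.lip
  have hP := h.contP
  have hψ := h.cont
  refine ⟨(m * K * (volume Ω).toReal) / c, δ / 2, by positivity, by positivity,
    fun ε hε hεδ => ?_⟩
  have hk := deriv_kap_cont ε
  have hkc : Continuous (kap ε) := (kap_contDiff ε (k := 0)).continuous
  have h0 := h.cut (kap_contDiff ε (k := 1)) hε (fun s hs => kap_zero hε hs) (W := P)
    (fun x _ => hK.llipAt x) (ae_restrict_of_ae hK.ae_differentiableAt)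
  have hb : ∀ x, |dv (fderiv ℝ P x)| ≤ m * K := fun x => (abs_dv_le _).trans
    (mul_le_mul_of_nonneg_left (norm_fderiv_le_of_lipschitz ℝ hK) (by positivity))
  have hb' : ∀ x, |kap ε (ψ x) * dv (fderiv ℝ P x)| ≤ m * K := fun x => by
    rw [abs_mul, abs_of_nonneg (kap_nonneg _ _)]
    nlinarith [hb x, kap_nonneg ε (ψ x), kap_le_one ε (ψ x), abs_nonneg (dv (fderiv ℝ P x))]
  have hi1 : IntegrableOn (fun x => kap ε (ψ x) * dv (fderiv ℝ P x)) Ω := by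
    refine IntegrableOn.of_bound (C := m * K) h.vol_lt ?_ (ae_of_all _ hb')
    exact ((hkc.comp hψ).measurable.mul (measurable_dv_fderiv P)).aestronglyMeasurable
  have hi2 : IntegrableOn (fun x => deriv (kap ε) (ψ x) * ⟪P x, P x⟫) Ω :=
    h.integrableOn_cont (by fun_prop)
  rw [integral_add hi1 hi2] at h0
  have h3 : ‖∫ x in Ω, kap ε (ψ x) * dv (fderiv ℝ P x)‖ ≤ m * K * (volume Ω).toReal :=
    norm_setIntegral_le_of_norm_le_const h.vol_lt (fun x _ => hb' x)
  have h4 : ∫ x in Ω, c * deriv (kap ε) (ψ x) ≤ ∫ x in Ω, deriv (kap ε) (ψ x) * ⟪P x, P x⟫ := by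
    refine setIntegral_mono_on (h.integrableOn_cont (by fun_prop)) hi2 h.isOpen.measurableSet
      fun x hx => ?_
    rw [real_inner_self_eq_norm_sq]
    have := deriv_kap_nonneg hε (ψ x)
    by_cases hl : ψ x < δ
    · nlinarith [hcδ x (subset_closure hx) hl]
    · rw [deriv_kap_eq_zero hε (by linarith)]
      simp
  rw [integral_const_mul] at h4
  rw [le_div_iff₀ hc]
  have := (abs_le.1 h3).1
  nlinarith

/-- The divergence theorem on `Ω` for tangential fields. -/
theorem div_thm (h : IsDef Ω ψ P) {F : Euc m → Euc m} {D : Euc m → ℝ} (hF : ∀ x ∈ Ω, LLipAt F x)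
    (hFc : ContinuousOn F (closure Ω)) (hFt : ∀ x ∈ frontier Ω, ⟪P x, F x⟫ = 0)
    {B : ℝ} (hB : ∀ x ∈ Ω, |D x| ≤ B)
    (hD : ∀ᵐ x ∂(volume.restrict Ω), DifferentiableAt ℝ F x ∧ dv (fderiv ℝ F x) = D x) :
    IntegrableOn D Ω ∧ ∫ x in Ω, D x = 0 := by
  have hP := h.contP
  have hψ := h.cont
  have hDm : AEStronglyMeasurable D (volume.restrict Ω) :=
    (measurable_dv_fderiv F).aestronglyMeasurable.congr (hD.mono fun x hx => hx.2)
  have hBae : ∀ᵐ x ∂(volume.restrict Ω), ‖D x‖ ≤ B :=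
    (ae_restrict_mem h.isOpen.measurableSet).mono hB
  have hDi : IntegrableOn D Ω := IntegrableOn.of_bound h.vol_lt hDm B hBae
  refine ⟨hDi, ?_⟩
  obtain ⟨C, ε₀, hC, hε₀, hsurf⟩ := h.surface_bound
  have hPF : ContinuousOn (fun x => ⟪P x, F x⟫) (closure Ω) := hP.continuousOn.inner hFc
  have hlim : Tendsto (fun ε : ℝ => ∫ x in Ω, kap ε (ψ x) * D x) (𝓝[>] 0) (𝓝 (∫ x in Ω, D x)) := by
    refine tendsto_integral_filter_of_dominated_convergence (fun x => |D x|) ?_ ?_ hDi.abs ?_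
    · refine Eventually.of_forall fun ε => ?_
      exact ((kap_contDiff ε (k := 0)).continuous.comp hψ).aestronglyMeasurable.mul hDm
    · refine Eventually.of_forall fun ε => ae_of_all _ fun x => ?_
      rw [norm_mul, Real.norm_of_nonneg (kap_nonneg _ _)]
      exact mul_le_of_le_one_left (norm_nonneg _) (kap_le_one _ _)
    · filter_upwards [ae_restrict_mem h.isOpen.measurableSet] with x hx
      have : ∀ᶠ ε : ℝ in 𝓝[>] 0, kap ε (ψ x) * D x = D x := by
        have h1 : ∀ᶠ ε : ℝ in 𝓝[>] 0, ε < ψ x / 2 :=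
          nhdsWithin_le_nhds (gt_mem_nhds (half_pos (h.pos x hx)))
        filter_upwards [h1, self_mem_nhdsWithin] with ε h2 h3
        rw [kap_one h3 (by linarith), one_mul]
      exact tendsto_const_nhds.congr' (this.mono fun _ h => h.symm)
  have hsmall : ∀ η : ℝ, 0 < η → ∀ᶠ ε : ℝ in 𝓝[>] 0, |∫ x in Ω, kap ε (ψ x) * D x| ≤ η * C := by
    intro η hη
    obtain ⟨δ, hδ, hδ'⟩ := h.exists_small (g := fun x => |⟪P x, F x⟫|) hPF.abs
      (fun x hx => by rw [hFt x hx, abs_zero]; exact hη)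
    have h1 : ∀ᶠ ε : ℝ in 𝓝[>] 0, ε < min ε₀ (δ / 2) :=
      nhdsWithin_le_nhds (gt_mem_nhds (by positivity))
    filter_upwards [h1, self_mem_nhdsWithin] with ε h2 h3
    have h3' : 0 < ε := h3
    have hkc : Continuous (kap ε) := (kap_contDiff ε (k := 0)).continuous
    have hk := deriv_kap_cont ε
    have hcut := h.cut (kap_contDiff ε (k := 1)) h3 (fun s hs => kap_zero h3 hs) hF
      (hD.mono fun x hx => hx.1)
    have e1 : ∫ x in Ω, (kap ε (ψ x) * dv (fderiv ℝ F x) + deriv (kap ε) (ψ x) * ⟪P x, F x⟫)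
        = ∫ x in Ω, (kap ε (ψ x) * D x + deriv (kap ε) (ψ x) * ⟪P x, F x⟫) :=
      integral_congr_ae (hD.mono fun x hx => by simp only [hx.2])
    have hi1 : IntegrableOn (fun x => kap ε (ψ x) * D x) Ω := by
      refine IntegrableOn.of_bound (C := B) h.vol_lt
        ((hkc.comp hψ).aestronglyMeasurable.mul hDm) ?_
      filter_upwards [hBae] with x hx
      rw [norm_mul, Real.norm_of_nonneg (kap_nonneg _ _)]
      exact (mul_le_of_le_one_left (norm_nonneg _) (kap_le_one _ _)).trans hx
    have hi2 : IntegrableOn (fun x => deriv (kap ε) (ψ x) * ⟪P x, F x⟫) Ω :=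
      h.integrableOn_cont ((hk.comp hψ).continuousOn.mul hPF)
    rw [e1, integral_add hi1 hi2] at hcut
    have e2 : ∫ x in Ω, kap ε (ψ x) * D x = - ∫ x in Ω, deriv (kap ε) (ψ x) * ⟪P x, F x⟫ := by
      linarith
    rw [e2, abs_neg]
    calc |∫ x in Ω, deriv (kap ε) (ψ x) * ⟪P x, F x⟫|
        ≤ ∫ x in Ω, η * deriv (kap ε) (ψ x) := by
          rw [← Real.norm_eq_abs]
          refine norm_integral_le_of_norm_le (h.integrableOn_cont ?_) ?_
          · exact (continuous_const.mul (hk.comp hψ)).continuousOn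
          · filter_upwards [ae_restrict_mem h.isOpen.measurableSet] with x hx
            rw [norm_mul, Real.norm_of_nonneg (deriv_kap_nonneg h3 _), mul_comm]
            by_cases hl : ψ x < δ
            · exact mul_le_mul_of_nonneg_right (hδ' x (subset_closure hx) hl).le
                (deriv_kap_nonneg h3 _)
            · rw [deriv_kap_eq_zero h3 (by
                have := min_le_right ε₀ (δ / 2)
                push Not at hl
                linarith)]
              simp
      _ ≤ η * C := by
          rw [integral_const_mul]
          exact mul_le_mul_of_nonneg_left (hsurf ε h3 (h2.trans_le (min_le_left _ _))) hη.le
  have hle : ∀ η : ℝ, 0 < η → |∫ x in Ω, D x| ≤ η * C := fun η hη =>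
    le_of_tendsto hlim.abs (hsmall η hη)
  have hle2 : |∫ x in Ω, D x| ≤ 0 := by
    refine le_of_forall_pos_le_add fun e he => ?_
    have := hle (e / (C + 1)) (by positivity)
    have h5 : e / (C + 1) * C ≤ e := by
      rw [div_mul_eq_mul_div, div_le_iff₀ (by positivity)]
      nlinarith
    linarith
  exact abs_nonpos_iff.1 hle2

end IsDef

end


section
variable {m : ℕ}

/-! ### Neumann data and multiplier identities -/

/-- A function `u` with gradient `G` solving `Δ u = - lam u + f` in `Ω`, with Neumann condition
(expressed through the normal direction `P₀`). -/
structure NData (Ω : Set (Euc m)) (P₀ : Euc m → Euc m) (lam : ℝ) (u : Euc m → ℝ)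
    (G : Euc m → Euc m) (f : Euc m → ℝ) : Prop where
  uc : ContinuousOn u (closure Ω)
  Gc : ContinuousOn G (closure Ω)
  fc : ContinuousOn f (closure Ω)
  ug : ∀ x ∈ Ω, HasFDerivAt u (innerSL ℝ (G x)) x
  Gd : ∀ x ∈ Ω, ContDiffAt ℝ 1 G x
  symm : ∀ x ∈ Ω, ∀ v w, ⟪fderiv ℝ G x v, w⟫ = ⟪v, fderiv ℝ G x w⟫
  lap : ∀ x ∈ Ω, dv (fderiv ℝ G x) = - lam * u x + f x
  bc : ∀ x ∈ frontier Ω, ⟪P₀ x, G x⟫ = 0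

/-- Bounded on `Ω`. -/
def BddF (Ω : Set (Euc m)) (φ : Euc m → ℝ) : Prop := ∃ B : ℝ, ∀ x ∈ Ω, |φ x| ≤ B

theorem BddF.add {Ω : Set (Euc m)} {f g : Euc m → ℝ} (hf : BddF Ω f) (hg : BddF Ω g) :
    BddF Ω fun x => f x + g x := by
  obtain ⟨A, hA⟩ := hf
  obtain ⟨B, hB⟩ := hg
  exact ⟨A + B, fun x hx => (abs_add_le _ _).trans (add_le_add (hA x hx) (hB x hx))⟩

theorem BddF.mul {Ω : Set (Euc m)} {f g : Euc m → ℝ} (hf : BddF Ω f) (hg : BddF Ω g) :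
    BddF Ω fun x => f x * g x := by
  obtain ⟨A, hA⟩ := hf
  obtain ⟨B, hB⟩ := hg
  refine ⟨A * B, fun x hx => ?_⟩
  rw [abs_mul]
  exact mul_le_mul (hA x hx) (hB x hx) (abs_nonneg _) ((abs_nonneg _).trans (hA x hx))

theorem BddF.const (Ω : Set (Euc m)) (c : ℝ) : BddF Ω fun _ => c := ⟨|c|, fun _ _ => le_rfl⟩

theorem BddF.sub {Ω : Set (Euc m)} {f g : Euc m → ℝ} (hf : BddF Ω f) (hg : BddF Ω g) :
    BddF Ω fun x => f x - g x := by
  obtain ⟨A, hA⟩ := hf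
  obtain ⟨B, hB⟩ := hg
  exact ⟨A + B, fun x hx => (abs_sub _ _).trans (add_le_add (hA x hx) (hB x hx))⟩

theorem IsDef.bddF {Ω : Set (Euc m)} {ψ : Euc m → ℝ} {P : Euc m → Euc m} (h : IsDef Ω ψ P)
    {f : Euc m → ℝ} (hf : ContinuousOn f (closure Ω)) : BddF Ω f := by
  obtain ⟨B, hB⟩ := h.compact.exists_bound_of_continuousOn hf
  exact ⟨B, fun x hx => hB x (subset_closure hx)⟩

theorem bddF_dv {Ω : Set (Euc m)} {N : Euc m → Euc m} {K : ℝ≥0} (hK : LipschitzWith K N) :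
    BddF Ω fun x => dv (fderiv ℝ N x) :=
  ⟨m * K, fun _ _ => (abs_dv_le _).trans
    (mul_le_mul_of_nonneg_left (norm_fderiv_le_of_lipschitz ℝ hK) (by positivity))⟩

theorem abs_inner_fderiv_le {N : Euc m → Euc m} {K : ℝ≥0} (hK : LipschitzWith K N) (x v : Euc m) :
    |⟪fderiv ℝ N x v, v⟫| ≤ K * ‖v‖ ^ 2 := by
  have h1 := abs_real_inner_le_norm (fderiv ℝ N x v) v
  have h2 := (fderiv ℝ N x).le_opNorm v
  have h3 := norm_fderiv_le_of_lipschitz ℝ (x₀ := x) hK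
  have h4 := norm_nonneg v
  have h5 : ‖fderiv ℝ N x v‖ ≤ K * ‖v‖ := h2.trans (mul_le_mul_of_nonneg_right h3 h4)
  nlinarith

variable {Ω : Set (Euc m)} {ψ₀ : Euc m → ℝ} {P₀ : Euc m → Euc m} {lam : ℝ} {u : Euc m → ℝ}
  {G : Euc m → Euc m} {f : Euc m → ℝ}

theorem NData.u_llip (h : NData Ω P₀ lam u G f) (hΩ : IsOpen Ω) {x : Euc m} (hx : x ∈ Ω) :
    LLipAt u x := by
  apply ContDiffAt.llipAt
  rw [contDiffAt_one_iff]
  refine ⟨fun y => innerSL ℝ (G y), Ω, hΩ.mem_nhds hx, ?_, fun y hy => h.ug y hy⟩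
  exact (innerSL ℝ).continuous.comp_continuousOn (h.Gc.mono subset_closure)

theorem NData.G_diff (h : NData Ω P₀ lam u G f) {x : Euc m} (hx : x ∈ Ω) :
    HasFDerivAt G (fderiv ℝ G x) x :=
  ((h.Gd x hx).differentiableAt one_ne_zero).hasFDerivAt

/-- Energy identity with weight `ω`. -/
theorem NData.energy (h : NData Ω P₀ lam u G f) (hd : IsDef Ω ψ₀ P₀) {ω : Euc m → ℝ}
    {Q : Euc m → Euc m} (hω : ∀ x, HasFDerivAt ω (innerSL ℝ (Q x)) x) (hQ : Continuous Q) :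
    IntegrableOn (fun x => ω x * (‖G x‖ ^ 2 - lam * u x ^ 2 + u x * f x) + u x * ⟪Q x, G x⟫) Ω ∧
    ∫ x in Ω, (ω x * (‖G x‖ ^ 2 - lam * u x ^ 2 + u x * f x) + u x * ⟪Q x, G x⟫) = 0 := by
  have hωc := contDiff_one_of_grad hω hQ
  have uc := h.uc
  have Gc := h.Gc
  have fc := h.fc
  have hωcc := hωc.continuous
  obtain ⟨B, hB⟩ := hd.bddF (f := fun x => ω x * (‖G x‖ ^ 2 - lam * u x ^ 2 + u x * f x)
    + u x * ⟪Q x, G x⟫) (by fun_prop)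
  refine hd.div_thm (F := fun x => ω x • u x • G x) ?_ (by fun_prop) ?_ hB ?_
  · intro x hx
    exact hωc.contDiffAt.llipAt.smul ((h.u_llip hd.isOpen hx).smul (h.Gd x hx).llipAt)
  · intro x hx
    simp [inner_smul_right, h.bc x hx]
  · filter_upwards [ae_restrict_mem hd.isOpen.measurableSet] with x hx
    have h1 := (hω x).fun_smul ((h.ug x hx).fun_smul (h.G_diff hx))
    refine ⟨h1.differentiableAt, ?_⟩
    rw [h1.fderiv]
    simp only [dv_add, dv_smul, dv_smulRight, innerSL_apply_apply, inner_smul_right, h.lap x hx,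
      real_inner_self_eq_norm_sq, smul_add]
    ring

/-- Hardy-type identity. -/
theorem NData.hardy (h : NData Ω P₀ lam u G f) (hd : IsDef Ω ψ₀ P₀) {ω : Euc m → ℝ}
    {Q : Euc m → Euc m} (hω : ∀ x, HasFDerivAt ω (innerSL ℝ (Q x)) x) (hQ : Continuous Q)
    {P : Euc m → Euc m} {K : ℝ≥0} (hP : LipschitzWith K P)
    (hbd : ∀ x ∈ frontier Ω, ω x = 0 ∨ u x = 0) :
    IntegrableOn (fun x => ⟪Q x, P x⟫ * u x ^ 2 + 2 * (ω x * u x) * ⟪P x, G x⟫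
      + (ω x * u x ^ 2) * dv (fderiv ℝ P x)) Ω ∧
    ∫ x in Ω, (⟪Q x, P x⟫ * u x ^ 2 + 2 * (ω x * u x) * ⟪P x, G x⟫
      + (ω x * u x ^ 2) * dv (fderiv ℝ P x)) = 0 := by
  have hωc := contDiff_one_of_grad hω hQ
  have uc := h.uc
  have Gc := h.Gc
  have fc := h.fc
  have hPc := hP.continuous
  have hωcc := hωc.continuous
  have hb1 : BddF Ω fun x => ⟪Q x, P x⟫ * u x ^ 2 + 2 * (ω x * u x) * ⟪P x, G x⟫ :=
    hd.bddF (by fun_prop)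
  have hb2 : BddF Ω fun x => ω x * u x ^ 2 := hd.bddF (by fun_prop)
  obtain ⟨B, hB⟩ := hb1.add (hb2.mul (bddF_dv hP))
  refine hd.div_thm (F := fun x => ω x • u x • u x • P x) ?_ (by fun_prop) ?_ hB ?_
  · intro x hx
    have hu := h.u_llip hd.isOpen hx
    exact hωc.contDiffAt.llipAt.smul (hu.smul (hu.smul (hP.llipAt x)))
  · intro x hx
    rcases hbd x hx with h0 | h0 <;> simp [h0]
  · filter_upwards [ae_restrict_mem hd.isOpen.measurableSet,
      ae_restrict_of_ae (hP.ae_differentiableAt (μ := volume))] with x hx hPx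
    have hu := h.ug x hx
    have h1 := (hω x).fun_smul (hu.fun_smul (hu.fun_smul hPx.hasFDerivAt))
    refine ⟨h1.differentiableAt, ?_⟩
    rw [h1.fderiv]
    simp only [dv_add, dv_smul, dv_smulRight, innerSL_apply_apply, inner_smul_right, smul_add]
    rw [real_inner_comm (P x) (G x)]
    ring

/-- Rellich-type identity. -/
theorem NData.rellich (h : NData Ω P₀ lam u G f) (hd : IsDef Ω ψ₀ P₀) {ω : Euc m → ℝ}
    {Q : Euc m → Euc m} (hω : ∀ x, HasFDerivAt ω (innerSL ℝ (Q x)) x) (hQ : Continuous Q)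
    {N : Euc m → Euc m} {K : ℝ≥0} (hN : LipschitzWith K N)
    (hbd : ∀ x ∈ frontier Ω, ω x = 0 ∨ (u x = 0 ∧ G x = 0)) :
    IntegrableOn (fun x => (‖G x‖ ^ 2 - lam * u x ^ 2) * (ω x * dv (fderiv ℝ N x) + ⟪Q x, N x⟫)
      - 2 * (ω x * ⟪fderiv ℝ N x (G x), G x⟫ + ⟪Q x, G x⟫ * ⟪N x, G x⟫)
      - 2 * ω x * ⟪N x, G x⟫ * f x) Ω ∧
    ∫ x in Ω, ((‖G x‖ ^ 2 - lam * u x ^ 2) * (ω x * dv (fderiv ℝ N x) + ⟪Q x, N x⟫)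
      - 2 * (ω x * ⟪fderiv ℝ N x (G x), G x⟫ + ⟪Q x, G x⟫ * ⟪N x, G x⟫)
      - 2 * ω x * ⟪N x, G x⟫ * f x) = 0 := by
  have hωc := contDiff_one_of_grad hω hQ
  have uc := h.uc
  have Gc := h.Gc
  have fc := h.fc
  have hNc := hN.continuous
  have hωcc := hωc.continuous
  have hb1 : BddF Ω fun x => ‖G x‖ ^ 2 - lam * u x ^ 2 := hd.bddF (by fun_prop)
  have hb2 : BddF Ω ω := hd.bddF (by fun_prop)
  have hb3 : BddF Ω fun x => ⟪Q x, N x⟫ := hd.bddF (by fun_prop)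
  have hb4 : BddF Ω fun x => ⟪Q x, G x⟫ * ⟪N x, G x⟫ := hd.bddF (by fun_prop)
  have hb5 : BddF Ω fun x => 2 * ω x * ⟪N x, G x⟫ * f x := hd.bddF (by fun_prop)
  have hb6 : BddF Ω fun x => ⟪fderiv ℝ N x (G x), G x⟫ := by
    obtain ⟨B, hB⟩ := hd.bddF (f := fun x => K * ‖G x‖ ^ 2) (by fun_prop)
    exact ⟨B, fun x hx => (abs_inner_fderiv_le hN x (G x)).trans ((le_abs_self _).trans (hB x hx))⟩
  obtain ⟨B, hB⟩ := ((hb1.mul ((hb2.mul (bddF_dv hN)).add hb3)).sub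
    ((BddF.const Ω 2).mul ((hb2.mul hb6).add hb4))).sub hb5
  refine hd.div_thm (F := fun x => (⟪G x, G x⟫ - lam * (u x * u x)) • ω x • N x
    - (2 * (ω x * ⟪N x, G x⟫)) • G x) ?_ (by fun_prop) ?_ hB ?_
  · intro x hx
    have hu := h.u_llip hd.isOpen hx
    have hG := (h.Gd x hx).llipAt
    have hω' : LLipAt ω x := hωc.contDiffAt.llipAt
    have hN' := hN.llipAt x
    exact (((hG.inner hG).sub ((LLipAt.const lam x).mul (hu.mul hu))).smul (hω'.smul hN')).sub
      (((LLipAt.const (2 : ℝ) x).mul (hω'.mul (hN'.inner hG))).smul hG)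
  · intro x hx
    rw [inner_sub_right, inner_smul_right (P₀ x) (G x), h.bc x hx]
    rcases hbd x hx with h0 | ⟨h0, h1⟩
    · simp [h0]
    · simp [h0, h1]
  · filter_upwards [ae_restrict_mem hd.isOpen.measurableSet,
      ae_restrict_of_ae (hN.ae_differentiableAt (μ := volume))] with x hx hNx
    have hu := h.ug x hx
    have hG := h.G_diff hx
    have hN' := hNx.hasFDerivAt
    have h1 := (((hG.inner ℝ hG).fun_sub ((hu.fun_mul hu).const_mul lam)).fun_smul
      ((hω x).fun_smul hN')).fun_sub
      ((((hω x).fun_mul (hN'.inner ℝ hG)).const_mul 2).fun_smul hG)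
    refine ⟨h1.differentiableAt, ?_⟩
    rw [h1.fderiv]
    have hs := h.symm x hx (N x) (G x)
    simp only [dv_add, dv_sub, dv_smul, dv_smulRight, innerSL_apply_apply, inner_smul_right,
      smul_add, h.lap x hx, add_apply, sub_apply,
      smul_apply, ContinuousLinearMap.comp_apply,
      ContinuousLinearMap.prod_apply, fderivInnerCLM_apply, smul_eq_mul, map_smul,
      ← real_inner_self_eq_norm_sq]
    rw [real_inner_comm (N x) (G x), real_inner_comm (fderiv ℝ G x (N x)) (G x), ← hs]
    ring

end


section

/-! ### Scalar weight functions -/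

/-- Convexified weight. -/
def cPhi (K s : ℝ) : ℝ := (Real.exp (K * s) - 1) / K

/-- The Carleman weight. -/
def cA (K τ s : ℝ) : ℝ := Real.cosh (2 * τ * cPhi K s)

/-- Half the derivative of `cA`. -/
def cb (K τ s : ℝ) : ℝ := τ * Real.exp (K * s) * Real.sinh (2 * τ * cPhi K s)

/-- Derivative of `cb`. -/
def cb' (K τ s : ℝ) : ℝ := K * cb K τ s + 2 * (τ * Real.exp (K * s)) ^ 2 * cA K τ s

/-- Primitive of `cA`. -/
def ca (K τ s : ℝ) : ℝ := ∫ t in (0 : ℝ)..s, cA K τ t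

theorem cPhi_hasDerivAt {K : ℝ} (hK : 0 < K) (s : ℝ) :
    HasDerivAt (cPhi K) (Real.exp (K * s)) s := by
  have h := (((hasDerivAt_id s).const_mul K).exp.sub_const 1).div_const K
  refine h.congr_deriv ?_
  simp only [id, mul_one]
  field_simp

theorem cPhi_mono {K : ℝ} (hK : 0 < K) : StrictMono (cPhi K) := fun a b hab => by
  unfold cPhi
  have : Real.exp (K * a) < Real.exp (K * b) := Real.exp_lt_exp.2 (by nlinarith)
  exact div_lt_div_of_pos_right (by linarith) hK

theorem cPhi_zero (K : ℝ) : cPhi K 0 = 0 := by simp [cPhi]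

theorem cPhi_nonneg {K : ℝ} (hK : 0 < K) {s : ℝ} (hs : 0 ≤ s) : 0 ≤ cPhi K s := by
  rw [← cPhi_zero K]
  exact (cPhi_mono hK).monotone hs

theorem cA_hasDerivAt {K : ℝ} (hK : 0 < K) (τ s : ℝ) :
    HasDerivAt (cA K τ) (2 * cb K τ s) s := by
  have h := ((cPhi_hasDerivAt hK s).const_mul (2 * τ)).cosh
  refine h.congr_deriv ?_
  unfold cb
  ring

theorem cSinh_hasDerivAt {K : ℝ} (hK : 0 < K) (τ s : ℝ) :
    HasDerivAt (fun s => Real.sinh (2 * τ * cPhi K s)) (2 * (τ * Real.exp (K * s)) * cA K τ s) s := by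
  have h := ((cPhi_hasDerivAt hK s).const_mul (2 * τ)).sinh
  refine h.congr_deriv ?_
  unfold cA
  ring

theorem cb_hasDerivAt {K : ℝ} (hK : 0 < K) (τ s : ℝ) :
    HasDerivAt (cb K τ) (cb' K τ s) s := by
  have h := ((((hasDerivAt_id s).const_mul K).exp.const_mul τ).fun_mul (cSinh_hasDerivAt hK τ s))
  refine h.congr_deriv ?_
  simp only [id, mul_one, cb', cb]
  ring

theorem cA_cont {K : ℝ} (hK : 0 < K) (τ : ℝ) : Continuous (cA K τ) :=
  continuous_iff_continuousAt.2 fun s => (cA_hasDerivAt hK τ s).continuousAt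

theorem cb_cont {K : ℝ} (hK : 0 < K) (τ : ℝ) : Continuous (cb K τ) :=
  continuous_iff_continuousAt.2 fun s => (cb_hasDerivAt hK τ s).continuousAt

theorem cb'_cont {K : ℝ} (hK : 0 < K) (τ : ℝ) : Continuous (cb' K τ) := by
  have := cb_cont hK τ
  have := cA_cont hK τ
  unfold cb'
  fun_prop

theorem ca_hasDerivAt {K : ℝ} (hK : 0 < K) (τ s : ℝ) : HasDerivAt (ca K τ) (cA K τ s) s :=
  (cA_cont hK τ).integral_hasStrictDerivAt 0 s |>.hasDerivAt

theorem one_le_cA (K τ s : ℝ) : 1 ≤ cA K τ s := Real.one_le_cosh _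

theorem cb_zero (K τ : ℝ) : cb K τ 0 = 0 := by simp [cb, cPhi_zero]

theorem ca_zero (K τ : ℝ) : ca K τ 0 = 0 := by simp [ca]

theorem ca_nonneg (K τ : ℝ) {s : ℝ} (hs : 0 ≤ s) : 0 ≤ ca K τ s :=
  intervalIntegral.integral_nonneg hs fun t _ => zero_le_one.trans (one_le_cA K τ t)

theorem ca_le {K τ : ℝ} (hK : 0 < K) (hτ : 1 ≤ τ) {s : ℝ} (hs : 0 ≤ s) :
    2 * τ * ca K τ s ≤ Real.sinh (2 * τ * cPhi K s) := by
  have hd : ∀ t, HasDerivAt (fun s => Real.sinh (2 * τ * cPhi K s) - 2 * τ * ca K τ s)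
      (2 * (τ * Real.exp (K * t)) * cA K τ t - 2 * τ * cA K τ t) t := fun t =>
    (cSinh_hasDerivAt hK τ t).fun_sub ((ca_hasDerivAt hK τ t).const_mul (2 * τ))
  have hm : MonotoneOn (fun s => Real.sinh (2 * τ * cPhi K s) - 2 * τ * ca K τ s) (Ici 0) := by
    refine monotoneOn_of_deriv_nonneg (convex_Ici 0)
      (fun t _ => (hd t).continuousAt.continuousWithinAt)
      (fun t _ => (hd t).differentiableAt.differentiableWithinAt) fun t ht => ?_
    rw [(hd t).deriv]
    rw [interior_Ici] at ht
    have h1 : 1 ≤ Real.exp (K * t) := Real.one_le_exp (by have : 0 < t := ht; positivity)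
    have h2 := one_le_cA K τ t
    have h3 : 0 ≤ τ * (Real.exp (K * t) - 1) * cA K τ t := by
      have : 0 ≤ Real.exp (K * t) - 1 := by linarith
      positivity
    nlinarith
  have := hm (mem_Ici.2 le_rfl) (mem_Ici.2 hs) hs
  simp only [cPhi_zero, ca_zero, mul_zero, Real.sinh_zero, sub_zero] at this
  linarith

theorem cSinh_nonneg {K τ : ℝ} (hK : 0 < K) (hτ : 1 ≤ τ) {s : ℝ} (hs : 0 ≤ s) :
    0 ≤ Real.sinh (2 * τ * cPhi K s) := by
  have := cPhi_nonneg hK hs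
  exact Real.sinh_nonneg_iff.2 (by positivity)

theorem cb_ge {K τ : ℝ} (hK : 0 < K) (hτ : 1 ≤ τ) {s : ℝ} (hs : 0 ≤ s) :
    τ * Real.sinh (2 * τ * cPhi K s) ≤ cb K τ s := by
  have h1 : 1 ≤ Real.exp (K * s) := Real.one_le_exp (by positivity)
  have := cSinh_nonneg hK hτ hs
  unfold cb
  have h3 : 0 ≤ τ * (Real.exp (K * s) - 1) * Real.sinh (2 * τ * cPhi K s) := by
    have : 0 ≤ Real.exp (K * s) - 1 := by linarith
    positivity
  nlinarith

theorem cb_nonneg {K τ : ℝ} (hK : 0 < K) (hτ : 1 ≤ τ) {s : ℝ} (hs : 0 ≤ s) : 0 ≤ cb K τ s :=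
  le_trans (by have := cSinh_nonneg hK hτ hs; positivity) (cb_ge hK hτ hs)

theorem sq_mul_ca_le {K τ : ℝ} (hK : 0 < K) (hτ : 1 ≤ τ) {s : ℝ} (hs : 0 ≤ s) :
    τ ^ 2 * ca K τ s ≤ cb K τ s := by
  have h1 := ca_le hK hτ hs
  have h2 := cb_ge hK hτ hs
  have h3 := ca_nonneg K τ hs
  nlinarith [mul_nonneg (sq_nonneg τ) h3]

theorem ca_le_cA {K τ : ℝ} (hK : 0 < K) (hτ : 1 ≤ τ) {s : ℝ} (hs : 0 ≤ s) :
    ca K τ s ≤ cA K τ s := by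
  have h1 := ca_le hK hτ hs
  have h3 := ca_nonneg K τ hs
  have h4 : Real.sinh (2 * τ * cPhi K s) < cA K τ s := Real.sinh_lt_cosh _
  nlinarith

theorem cb'_ge {K₁ τ : ℝ} (hK : 0 < K₁) (hτ : 1 ≤ τ) (hτK : K₁ ≤ 2 * τ ^ 2) {s : ℝ} (hs : 0 ≤ s) :
    K₁ * (cb (2 * K₁) τ s + cA (2 * K₁) τ s) * cA (2 * K₁) τ s + 2 * cb (2 * K₁) τ s ^ 2 ≤
      cb' (2 * K₁) τ s * cA (2 * K₁) τ s := by
  have hK2 : 0 < 2 * K₁ := by positivity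
  have h1 : 1 ≤ Real.exp (2 * K₁ * s) := Real.one_le_exp (by positivity)
  have hS0 := cSinh_nonneg hK2 hτ hs
  have hb := cb_ge hK2 hτ hs
  have hA1 := one_le_cA (2 * K₁) τ s
  have hid : cA (2 * K₁) τ s ^ 2 = Real.sinh (2 * τ * cPhi (2 * K₁) s) ^ 2 + 1 := Real.cosh_sq _
  have hSA : Real.sinh (2 * τ * cPhi (2 * K₁) s) ≤ cA (2 * K₁) τ s := (Real.sinh_lt_cosh _).le
  have hbdef : cb (2 * K₁) τ s
    = τ * Real.exp (2 * K₁ * s) * Real.sinh (2 * τ * cPhi (2 * K₁) s) := rfl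
  unfold cb'
  set S := Real.sinh (2 * τ * cPhi (2 * K₁) s)
  set A := cA (2 * K₁) τ s
  set b := cb (2 * K₁) τ s
  set e := Real.exp (2 * K₁ * s)
  have h2 : 2 * (τ * e) ^ 2 * A * A - 2 * b ^ 2 = 2 * (τ * e) ^ 2 := by
    rw [hbdef]
    linear_combination 2 * (τ * e) ^ 2 * hid
  have h3 : S ^ 2 ≤ A * b := by
    rw [sq]
    exact mul_le_mul hSA (by nlinarith) hS0 (by linarith)
  have h4 : τ ^ 2 ≤ (τ * e) ^ 2 := by
    have : τ ≤ τ * e := by nlinarith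
    exact pow_le_pow_left₀ (by linarith) this 2
  have h5 : K₁ * S ^ 2 ≤ K₁ * (A * b) := mul_le_mul_of_nonneg_left h3 hK.le
  nlinarith

theorem cA_le {K τ : ℝ} (hK : 0 < K) (hτ : 1 ≤ τ) {s t : ℝ} (hs : 0 ≤ s) (hst : s ≤ t) :
    cA K τ s ≤ Real.exp (2 * τ * cPhi K t) := by
  have h1 := (cPhi_mono hK).monotone hst
  have h2 := cPhi_nonneg hK hs
  have h3 : 2 * τ * cPhi K s ≤ 2 * τ * cPhi K t := by nlinarith
  have h4 : 0 ≤ 2 * τ * cPhi K s := by positivity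
  unfold cA
  rw [Real.cosh_eq]
  have := Real.exp_le_exp.2 h3
  have h5 : Real.exp (-(2 * τ * cPhi K s)) ≤ Real.exp (2 * τ * cPhi K s) :=
    Real.exp_le_exp.2 (by linarith)
  linarith

theorem le_cA {K τ : ℝ} (hK : 0 < K) (hτ : 1 ≤ τ) {s t : ℝ} (hst : s ≤ t) :
    Real.exp (2 * τ * cPhi K s) / 2 ≤ cA K τ t := by
  have h1 := (cPhi_mono hK).monotone hst
  have h3 : 2 * τ * cPhi K s ≤ 2 * τ * cPhi K t := by nlinarith
  unfold cA
  rw [Real.cosh_eq]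
  have := Real.exp_le_exp.2 h3
  have := Real.exp_pos (-(2 * τ * cPhi K t))
  linarith

/-! ### The normalised gradient -/

/-- `v ↦ v / max (|v|², c)`. -/
def nrm {V : Type*} [NormedAddCommGroup V] [NormedSpace ℝ V] (c : ℝ) (v : V) : V :=
  (max (‖v‖ ^ 2) c)⁻¹ • v

theorem nrm_lipschitz {V : Type*} [NormedAddCommGroup V] [InnerProductSpace ℝ V] {c : ℝ}
    (hc : 0 < c) : LipschitzWith (c⁻¹).toNNReal (nrm c : V → V) := by
  refine LipschitzWith.of_dist_le_mul fun v w => ?_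
  rw [Real.coe_toNNReal _ (by positivity), dist_eq_norm, dist_eq_norm]
  refine abs_le_of_sq_le_sq' ?_ (by positivity) |>.2
  unfold nrm
  set μ := max (‖v‖ ^ 2) c with hμ
  set ν := max (‖w‖ ^ 2) c with hν
  have hμc : c ≤ μ := le_max_right _ _
  have hνc : c ≤ ν := le_max_right _ _
  have hμv : ‖v‖ ^ 2 ≤ μ := le_max_left _ _
  have hνw : ‖w‖ ^ 2 ≤ ν := le_max_left _ _
  have hμ0 : 0 < μ := hc.trans_le hμc
  have hν0 : 0 < ν := hc.trans_le hνc
  have hvw : 2 * ⟪v, w⟫ ≤ ‖v‖ ^ 2 + ‖w‖ ^ 2 := by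
    have := norm_sub_sq_real v w
    nlinarith [sq_nonneg ‖v - w‖]
  rw [mul_pow, norm_sub_sq_real, norm_sub_sq_real, norm_smul, norm_smul, inner_smul_left,
    inner_smul_right, mul_pow, mul_pow, norm_inv, norm_inv, Real.norm_of_nonneg hμ0.le,
    Real.norm_of_nonneg hν0.le]
  simp only [RCLike.conj_to_real]
  have h1 : μ⁻¹ * ν⁻¹ ≤ c⁻¹ ^ 2 := by
    rw [sq]
    gcongr
  have h2 : μ⁻¹ ^ 2 * ‖v‖ ^ 2 + ν⁻¹ ^ 2 * ‖w‖ ^ 2 ≤ μ⁻¹ * ν⁻¹ * (‖v‖ ^ 2 + ‖w‖ ^ 2) := by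
    have h3 : (μ - ν) * (‖w‖ ^ 2 * μ - ‖v‖ ^ 2 * ν) ≤ 0 := by
      rcases lt_trichotomy μ ν with h | h | h
      · have : ν = ‖w‖ ^ 2 := by
          rcases max_choice (‖w‖ ^ 2) c with h' | h'
          · rw [hν, h']
          · rw [← hν] at h'
            linarith
        apply mul_nonpos_of_nonpos_of_nonneg (by linarith)
        rw [← this]
        nlinarith
      · rw [h, sub_self, zero_mul]
      · have : μ = ‖v‖ ^ 2 := by
          rcases max_choice (‖v‖ ^ 2) c with h' | h'
          · rw [hμ, h']
          · rw [← hμ] at h'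
            linarith
        apply mul_nonpos_of_nonneg_of_nonpos (by linarith)
        rw [← this]
        nlinarith
    have h4 : μ⁻¹ * ν⁻¹ * (‖v‖ ^ 2 + ‖w‖ ^ 2) - (μ⁻¹ ^ 2 * ‖v‖ ^ 2 + ν⁻¹ ^ 2 * ‖w‖ ^ 2)
        = - ((μ - ν) * (‖w‖ ^ 2 * μ - ‖v‖ ^ 2 * ν)) / (μ ^ 2 * ν ^ 2) := by
      field_simp
      ring
    have h5 : 0 ≤ - ((μ - ν) * (‖w‖ ^ 2 * μ - ‖v‖ ^ 2 * ν)) / (μ ^ 2 * ν ^ 2) := by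
      apply div_nonneg (by linarith) (by positivity)
    linarith
  nlinarith

theorem nrm_eq {V : Type*} [NormedAddCommGroup V] [NormedSpace ℝ V] {c : ℝ} (hc : 0 < c) {v : V}
    (hv : c ≤ ‖v‖ ^ 2) : ‖v‖ ^ 2 • nrm c v = v := by
  unfold nrm
  rw [max_eq_left hv, smul_smul, mul_inv_cancel₀ (by linarith), one_smul]

end


section

/-! ### The Carleman inequality -/

set_option maxHeartbeats 400000 in
/-- The pointwise algebraic inequality behind the Carleman estimate. -/
theorem carleman_pointwise {c₀ C₂ CP C₁ M K₁ τ lam a A b b' g q u f n dN tN dP : ℝ}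
    (hc₀ : 0 < c₀) (hg : c₀ ≤ g) (hg2 : g ≤ C₂) (hM : M = C₁ + 1) (hC₁ : 0 ≤ C₁) (hCP : 0 ≤ CP)
    (hK1 : CP + 2 * M + M * C₂ ≤ K₁ * c₀) (hK2 : M ^ 2 * C₂ / 2 + 1 / 2 + M / 2 + 1 ≤ K₁ * c₀)
    (hlam0 : 0 ≤ lam) (hlam : lam ≤ τ ^ 2) (ha : 0 ≤ a) (haA : a ≤ A) (hab : τ ^ 2 * a ≤ b)
    (hA : 1 ≤ A) (hb : 0 ≤ b) (hb' : K₁ * (b + A) * A + 2 * b ^ 2 ≤ b' * A)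
    (hq : q ^ 2 ≤ g * n) (hn : 0 ≤ n)
    (hErr : |dN * (n - lam * u ^ 2) - 2 * tN| ≤ C₁ * (n + lam * u ^ 2)) (hdP : |dP| ≤ CP)
    (hK₁ : 0 ≤ K₁) :
    A * u ^ 2 ≤ (2 / c₀ + 1 / 2 + M / 2) * (A * f ^ 2)
      + (- ((n - lam * u ^ 2) * (a * dN + A) - 2 * (a * tN + A * q * (q / g)) - 2 * a * (q / g) * f)
        + (A * (n - lam * u ^ 2 + u * f) + u * (2 * b * q))
        + (b' * g * u ^ 2 + 2 * (b * u) * q + (b * u ^ 2) * dP)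
        + M * (a * (n - lam * u ^ 2 + u * f) + u * (A * q))) := by
  have hg0 : 0 < g := hc₀.trans_le hg
  have hA0 : 0 < A := by linarith
  have hM1 : 1 ≤ M := by linarith
  -- complete the square
  set Z := q + b / A * g * u with hZ
  have hq' : q = Z - b / A * g * u := by rw [hZ]; ring
  have e1 : 2 * A * q * (q / g) + 4 * b * u * q = 2 * A / g * Z ^ 2 - 2 * b ^ 2 / A * g * u ^ 2 := by
    rw [hZ]
    field_simp
    ring
  have e2 : M * (u * (A * q)) = M * A * u * Z - M * b * g * u ^ 2 := by
    rw [hq']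
    field_simp
  have e3 : - (A / (2 * g) * Z ^ 2 + M ^ 2 * A * g * u ^ 2 / 2) ≤ M * A * u * Z := by
    have : 0 ≤ A / (2 * g) * (Z + M * g * u) ^ 2 := by positivity
    have h2 : A / (2 * g) * (Z + M * g * u) ^ 2
      = A / (2 * g) * Z ^ 2 + M ^ 2 * A * g * u ^ 2 / 2 + M * A * u * Z := by
      field_simp
      ring
    linarith
  have e4 : A / (2 * g) * Z ^ 2 ≤ 2 * A / g * Z ^ 2 := by
    have h2 : 2 * A / g * Z ^ 2 - A / (2 * g) * Z ^ 2 = 3 * A / (2 * g) * Z ^ 2 := by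
      field_simp
      ring
    have : 0 ≤ 3 * A / (2 * g) * Z ^ 2 := by positivity
    linarith
  have e5 : K₁ * (b + A) * g * u ^ 2 ≤ (b' - 2 * b ^ 2 / A) * g * u ^ 2 := by
    have : K₁ * (b + A) ≤ b' - 2 * b ^ 2 / A := by
      rw [le_sub_iff_add_le, ← sub_nonneg]
      have h3 : b' - (K₁ * (b + A) + 2 * b ^ 2 / A)
        = (b' * A - (K₁ * (b + A) * A + 2 * b ^ 2)) / A := by
        field_simp
      rw [h3]
      exact div_nonneg (by linarith) hA0.le
    have hgu : 0 ≤ g * u ^ 2 := by positivity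
    have := mul_le_mul_of_nonneg_right this hgu
    linarith
  have e6 : K₁ * (b + A) * c₀ * u ^ 2 ≤ K₁ * (b + A) * g * u ^ 2 := by
    have : 0 ≤ K₁ * (b + A) := by positivity
    gcongr
  -- f terms
  have e7 : - (a * n / 2 + 2 / c₀ * (A * f ^ 2)) ≤ 2 * a * (q / g) * f := by
    have h1 : (q / g) ^ 2 ≤ n / c₀ := by
      rw [div_pow, div_le_div_iff₀ (by positivity) hc₀]
      have h1 := mul_le_mul_of_nonneg_right hq hc₀.le
      have h2 := mul_le_mul_of_nonneg_left hg (mul_nonneg hg0.le hn)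
      linarith
    have h2 : 0 ≤ c₀ / 2 * (q / g + 2 / c₀ * f) ^ 2 := by positivity
    have h3 : c₀ / 2 * (q / g + 2 / c₀ * f) ^ 2
      = c₀ / 2 * (q / g) ^ 2 + 2 * (q / g) * f + 2 / c₀ * f ^ 2 := by
      field_simp
      ring
    have h4 : c₀ / 2 * (q / g) ^ 2 ≤ n / 2 := by
      calc c₀ / 2 * (q / g) ^ 2 ≤ c₀ / 2 * (n / c₀) := by gcongr
        _ = n / 2 := by field_simp
    have h5 : 0 ≤ n / 2 + 2 * (q / g) * f + 2 / c₀ * f ^ 2 := by linarith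
    have h6 := mul_nonneg ha h5
    have h7 : a * (2 / c₀ * f ^ 2) ≤ A * (2 / c₀ * f ^ 2) := by
      have : 0 ≤ 2 / c₀ * f ^ 2 := by positivity
      gcongr
    have h8 : a * (n / 2 + 2 * (q / g) * f + 2 / c₀ * f ^ 2)
      = a * n / 2 + 2 * a * (q / g) * f + a * (2 / c₀ * f ^ 2) := by ring
    have h9 : A * (2 / c₀ * f ^ 2) = 2 / c₀ * (A * f ^ 2) := by ring
    linarith
  have e8 : - (A * u ^ 2 / 2 + A * f ^ 2 / 2) ≤ A * (u * f) := by
    linarith [mul_nonneg hA0.le (sq_nonneg (u + f))]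
  have e9 : - (M * (A * u ^ 2) / 2 + M * (A * f ^ 2) / 2) ≤ M * (a * (u * f)) := by
    have h1 : 0 ≤ a * (u + f) ^ 2 := by positivity
    have h2 : a * (u ^ 2 + f ^ 2) ≤ A * (u ^ 2 + f ^ 2) := by gcongr
    have h3 : - (A * u ^ 2 / 2 + A * f ^ 2 / 2) ≤ a * (u * f) := by linarith
    have h4 := mul_le_mul_of_nonneg_left h3 (zero_le_one.trans hM1)
    linarith
  -- error terms
  have e10 : - (a * C₁ * n + C₁ * (b * u ^ 2)) ≤ - a * (dN * (n - lam * u ^ 2) - 2 * tN) := by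
    have h1 := (abs_le.1 hErr).2
    have h2 := mul_le_mul_of_nonneg_left h1 ha
    have h3 : a * lam * u ^ 2 ≤ b * u ^ 2 := by
      have : a * lam ≤ b := by linarith [mul_le_mul_of_nonneg_left hlam ha]
      gcongr
    linarith [mul_le_mul_of_nonneg_left h3 hC₁]
  have e11 : - (M * (b * u ^ 2)) ≤ - (M * (a * (lam * u ^ 2))) := by
    have h3 : a * lam * u ^ 2 ≤ b * u ^ 2 := by
      have : a * lam ≤ b := by linarith [mul_le_mul_of_nonneg_left hlam ha]
      gcongr
    have h4 := mul_le_mul_of_nonneg_left h3 (zero_le_one.trans hM1)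
    linarith
  have e12 : - (CP * (b * u ^ 2)) ≤ b * u ^ 2 * dP := by
    have h1 := (abs_le.1 hdP).1
    have : 0 ≤ b * u ^ 2 := by positivity
    have := mul_le_mul_of_nonneg_left h1 this
    linarith
  have e13 : M * b * g * u ^ 2 ≤ M * C₂ * (b * u ^ 2) := by
    have : 0 ≤ M * (b * u ^ 2) := by positivity
    have := mul_le_mul_of_nonneg_left hg2 this
    linarith
  have e14 : M ^ 2 * A * g * u ^ 2 / 2 ≤ M ^ 2 * C₂ / 2 * (A * u ^ 2) := by
    have : 0 ≤ M ^ 2 * (A * u ^ 2) := by positivity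
    have := mul_le_mul_of_nonneg_left hg2 this
    linarith
  have e15 : (CP + 2 * M + M * C₂) * (b * u ^ 2) ≤ K₁ * c₀ * (b * u ^ 2) := by gcongr
  have e16 : (M ^ 2 * C₂ / 2 + 1 / 2 + M / 2 + 1) * (A * u ^ 2) ≤ K₁ * c₀ * (A * u ^ 2) := by gcongr
  have e17 : C₁ * (b * u ^ 2) ≤ M * (b * u ^ 2) := by
    have : 0 ≤ b * u ^ 2 := by positivity
    exact mul_le_mul_of_nonneg_right (by linarith) this
  have e18 : 0 ≤ a * n := by positivity
  have e19 : (M - C₁) * (a * n) = a * n := by rw [hM]; ring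
  linarith

variable {m : ℕ}

theorem hasFDerivAt_comp_grad {ψ : Euc m → ℝ} {P : Euc m → Euc m} {κ : ℝ → ℝ} {κ' : ℝ} {x : Euc m}
    (h : HasFDerivAt ψ (innerSL ℝ (P x)) x) (hκ : HasDerivAt κ κ' (ψ x)) :
    HasFDerivAt (fun y => κ (ψ y)) (innerSL ℝ (κ' • P x)) x := by
  have := hκ.comp_hasFDerivAt x h
  rw [map_smul]
  exact this

theorem combine_integrals {Ω : Set (Euc m)} (hΩ : MeasurableSet Ω) {U F R E₁ E₂ H : Euc m → ℝ}
    {C M : ℝ} (iU : IntegrableOn U Ω) (iF : IntegrableOn F Ω) (iR : IntegrableOn R Ω)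
    (iE₁ : IntegrableOn E₁ Ω) (iE₂ : IntegrableOn E₂ Ω) (iH : IntegrableOn H Ω)
    (hR : ∫ x in Ω, R x = 0) (hE₁ : ∫ x in Ω, E₁ x = 0) (hE₂ : ∫ x in Ω, E₂ x = 0)
    (hH : ∫ x in Ω, H x = 0)
    (hp : ∀ x ∈ Ω, U x ≤ C * F x + (- R x + E₁ x + H x + M * E₂ x)) :
    ∫ x in Ω, U x ≤ C * ∫ x in Ω, F x := by
  have i1 : IntegrableOn (fun x => - R x) Ω := iR.neg
  have i2 : IntegrableOn (fun x => - R x + E₁ x) Ω := i1.add iE₁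
  have i3 : IntegrableOn (fun x => - R x + E₁ x + H x) Ω := i2.add iH
  have i4 : IntegrableOn (fun x => M * E₂ x) Ω := iE₂.const_mul M
  have i5 : IntegrableOn (fun x => - R x + E₁ x + H x + M * E₂ x) Ω := i3.add i4
  have i6 : IntegrableOn (fun x => C * F x) Ω := iF.const_mul C
  calc ∫ x in Ω, U x ≤ ∫ x in Ω, (C * F x + (- R x + E₁ x + H x + M * E₂ x)) :=
        setIntegral_mono_on iU (i6.add i5) hΩ hp
    _ = C * ∫ x in Ω, F x := by
        rw [integral_add i6 i5, integral_add i3 i4, integral_add i2 iH, integral_add i1 iE₁,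
          integral_neg, integral_const_mul, integral_const_mul, hR, hE₁, hE₂, hH]
        simp

/-- The Carleman estimate. -/
theorem carleman {Ω : Set (Euc m)} {ψ₀ : Euc m → ℝ} {P₀ : Euc m → Euc m} (hd : IsDef Ω ψ₀ P₀)
    {ψ : Euc m → ℝ} {P : Euc m → Euc m} (hψ : ∀ x, HasFDerivAt ψ (innerSL ℝ (P x)) x)
    {KP : ℝ≥0} (hP : LipschitzWith KP P) {c₀ C₂ : ℝ} (hc₀ : 0 < c₀) :
    ∃ C K τ₀ : ℝ, 0 < C ∧ 0 < K ∧ 1 ≤ τ₀ ∧ ∀ τ, τ₀ ≤ τ → ∀ lam u G f, 0 ≤ lam → lam ≤ τ ^ 2 →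
      NData Ω P₀ lam u G f → (∀ x ∈ frontier Ω, ψ x = 0 ∨ (u x = 0 ∧ G x = 0)) →
      (∀ x ∈ Ω, (u x = 0 ∧ G x = 0) ∨ (0 ≤ ψ x ∧ c₀ ≤ ‖P x‖ ^ 2 ∧ ‖P x‖ ^ 2 ≤ C₂)) →
      ∫ x in Ω, cA K τ (ψ x) * u x ^ 2 ≤ C * ∫ x in Ω, cA K τ (ψ x) * f x ^ 2 := by
  set N : Euc m → Euc m := fun x => nrm c₀ (P x) with hNdef
  have hN : LipschitzWith ((c₀⁻¹).toNNReal * KP) N := (nrm_lipschitz hc₀).comp hP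
  set KN : ℝ≥0 := (c₀⁻¹).toNNReal * KP
  set C₁ : ℝ := m * KN + 2 * KN with hC₁
  set M : ℝ := C₁ + 1 with hM
  set CP : ℝ := m * KP with hCP
  have hC₁0 : 0 ≤ C₁ := by positivity
  have hCP0 : 0 ≤ CP := by positivity
  set K₁ : ℝ := max (max (CP + 2 * M + M * C₂) (M ^ 2 * C₂ / 2 + 1 / 2 + M / 2 + 1)) 1 / c₀ with hK₁
  have hK₁0 : 0 < K₁ := by
    rw [hK₁]
    have : (0 : ℝ) < max (max (CP + 2 * M + M * C₂) (M ^ 2 * C₂ / 2 + 1 / 2 + M / 2 + 1)) 1 :=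
      lt_max_of_lt_right one_pos
    positivity
  have hKc : K₁ * c₀ = max (max (CP + 2 * M + M * C₂) (M ^ 2 * C₂ / 2 + 1 / 2 + M / 2 + 1)) 1 := by
    rw [hK₁]
    field_simp
  have hK1 : CP + 2 * M + M * C₂ ≤ K₁ * c₀ := by
    rw [hKc]
    exact (le_max_left _ _).trans (le_max_left _ _)
  have hK2 : M ^ 2 * C₂ / 2 + 1 / 2 + M / 2 + 1 ≤ K₁ * c₀ := by
    rw [hKc]
    exact (le_max_right _ _).trans (le_max_left _ _)
  have hKK : 0 < 2 * K₁ := by positivity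
  refine ⟨2 / c₀ + 1 / 2 + M / 2, 2 * K₁, max 1 K₁, by positivity, by positivity, le_max_left _ _,
    ?_⟩
  intro τ hτ lam u G f hlam0 hlam h hbd hgood
  have hτ1 : 1 ≤ τ := (le_max_left _ _).trans hτ
  have hτK : K₁ ≤ 2 * τ ^ 2 := by
    have := (le_max_right 1 K₁).trans hτ
    nlinarith
  have hPc := hP.continuous
  have hψc := (contDiff_one_of_grad hψ hPc).continuous
  have cAc := cA_cont hKK τ
  have cbc := cb_cont hKK τ
  have cb'c := cb'_cont hKK τ
  have uc := h.uc
  have fc := h.fc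
  -- the four identities
  have hωa : ∀ x, HasFDerivAt (fun y => ca (2 * K₁) τ (ψ y))
      (innerSL ℝ (cA (2 * K₁) τ (ψ x) • P x)) x := fun x =>
    hasFDerivAt_comp_grad (hψ x) (ca_hasDerivAt hKK τ (ψ x))
  have hωA : ∀ x, HasFDerivAt (fun y => cA (2 * K₁) τ (ψ y))
      (innerSL ℝ ((2 * cb (2 * K₁) τ (ψ x)) • P x)) x := fun x =>
    hasFDerivAt_comp_grad (hψ x) (cA_hasDerivAt hKK τ (ψ x))
  have hωb : ∀ x, HasFDerivAt (fun y => cb (2 * K₁) τ (ψ y))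
      (innerSL ℝ (cb' (2 * K₁) τ (ψ x) • P x)) x := fun x =>
    hasFDerivAt_comp_grad (hψ x) (cb_hasDerivAt hKK τ (ψ x))
  obtain ⟨iR, hR⟩ := h.rellich hd hωa (by fun_prop) hN (fun x hx => by
    rcases hbd x hx with h1 | h1
    · left; simp only [h1, ca_zero]
    · exact Or.inr h1)
  obtain ⟨iE1, hE1⟩ := h.energy hd hωA (by fun_prop)
  obtain ⟨iE2, hE2⟩ := h.energy hd hωa (by fun_prop)
  obtain ⟨iH, hH⟩ := h.hardy hd hωb (by fun_prop) hP (fun x hx => by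
    rcases hbd x hx with h1 | h1
    · left; simp only [h1, cb_zero]
    · exact Or.inr h1.1)
  have iU : IntegrableOn (fun x => cA (2 * K₁) τ (ψ x) * u x ^ 2) Ω :=
    hd.integrableOn_cont (by fun_prop)
  have iF : IntegrableOn (fun x => cA (2 * K₁) τ (ψ x) * f x ^ 2) Ω :=
    hd.integrableOn_cont (by fun_prop)
  refine combine_integrals (M := M) hd.isOpen.measurableSet iU iF iR iE1 iE2 iH hR hE1 hE2 hH
    fun x hx => ?_
  · rcases hgood x hx with ⟨h0, h1⟩ | ⟨hs, hg, hg2⟩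
    · have : 0 ≤ (2 / c₀ + 1 / 2 + M / 2) * (cA (2 * K₁) τ (ψ x) * f x ^ 2) := by
        have := one_le_cA (2 * K₁) τ (ψ x)
        positivity
      simpa [h0, h1] using this
    · have hNP : ‖P x‖ ^ 2 • N x = P x := nrm_eq hc₀ hg
      have hg0 : 0 < ‖P x‖ ^ 2 := hc₀.trans_le hg
      have hNG : ⟪N x, G x⟫ = ⟪P x, G x⟫ / ‖P x‖ ^ 2 := by
        rw [eq_div_iff hg0.ne', mul_comm, ← real_inner_smul_left, hNP]
      have hPN : ⟪P x, N x⟫ = 1 := by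
        have h6 : ‖P x‖ ^ 2 * ⟪P x, N x⟫ = ‖P x‖ ^ 2 * 1 := by
          rw [← real_inner_smul_right, hNP, real_inner_self_eq_norm_sq, mul_one]
        exact mul_left_cancel₀ hg0.ne' h6
      have hq : ⟪P x, G x⟫ ^ 2 ≤ ‖P x‖ ^ 2 * ‖G x‖ ^ 2 := by
        rw [← mul_pow]
        exact sq_le_sq.2 ((abs_real_inner_le_norm _ _).trans (le_abs_self _))
      have hdN : |dv (fderiv ℝ N x)| ≤ m * KN := (abs_dv_le _).trans
        (mul_le_mul_of_nonneg_left (norm_fderiv_le_of_lipschitz ℝ hN) (by positivity))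
      have htN := abs_inner_fderiv_le hN x (G x)
      have hErr : |dv (fderiv ℝ N x) * (‖G x‖ ^ 2 - lam * u x ^ 2)
          - 2 * ⟪fderiv ℝ N x (G x), G x⟫| ≤ C₁ * (‖G x‖ ^ 2 + lam * u x ^ 2) := by
        refine (abs_sub _ _).trans ?_
        rw [abs_mul, abs_mul, abs_two]
        have h7 : |‖G x‖ ^ 2 - lam * u x ^ 2| ≤ ‖G x‖ ^ 2 + lam * u x ^ 2 := by
          rw [abs_le]
          constructor <;> linarith [sq_nonneg ‖G x‖, mul_nonneg hlam0 (sq_nonneg (u x))]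
        have h8 : |dv (fderiv ℝ N x)| * |‖G x‖ ^ 2 - lam * u x ^ 2| ≤
            m * KN * (‖G x‖ ^ 2 + lam * u x ^ 2) :=
          mul_le_mul hdN h7 (abs_nonneg _) (by positivity)
        have h9 : 0 ≤ KN * (lam * u x ^ 2) := by positivity
        rw [hC₁]
        linarith
      have hdP : |dv (fderiv ℝ P x)| ≤ CP := (abs_dv_le _).trans
        (mul_le_mul_of_nonneg_left (norm_fderiv_le_of_lipschitz ℝ hP) (by positivity))
      have key := carleman_pointwise (f := f x) hc₀ hg hg2 hM hC₁0 hCP0 hK1 hK2 hlam0 hlam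
        (ca_nonneg _ _ hs) (ca_le_cA hKK hτ1 hs) (sq_mul_ca_le hKK hτ1 hs) (one_le_cA _ _ _)
        (cb_nonneg hKK hτ1 hs) (cb'_ge hK₁0 hτ1 hτK hs) hq (sq_nonneg _) hErr hdP hK₁0.le
      refine key.trans (le_of_eq ?_)
      simp only [real_inner_smul_left, hPN, hNG, real_inner_self_eq_norm_sq]
      ring

end


section
variable {m : ℕ}

/-! ### Multiplying Neumann data by cut-off functions, Caccioppoli inequality -/

theorem symm_of_grad {u : Euc m → ℝ} {G : Euc m → Euc m} {x : Euc m}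
    (h : ∀ᶠ y in 𝓝 x, HasFDerivAt u (innerSL ℝ (G y)) y) (hG : DifferentiableAt ℝ G x)
    (v w : Euc m) : ⟪fderiv ℝ G x v, w⟫ = ⟪v, fderiv ℝ G x w⟫ := by
  have h1 : HasFDerivAt (fun y => innerSL ℝ (G y)) ((innerSL ℝ).comp (fderiv ℝ G x)) x :=
    (innerSL ℝ : Euc m →L[ℝ] Euc m →L[ℝ] ℝ).hasFDerivAt.comp x hG.hasFDerivAt
  have h2 := second_derivative_symmetric_of_eventually h h1 v w
  simp only [ContinuousLinearMap.comp_apply, innerSL_apply_apply] at h2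
  rw [h2, real_inner_comm]

theorem exists_grad {ζ : Euc m → ℝ} (hζ : ContDiff ℝ 2 ζ) :
    ∃ Z : Euc m → Euc m, (∀ x, HasFDerivAt ζ (innerSL ℝ (Z x)) x) ∧ ContDiff ℝ 1 Z := by
  refine ⟨fun x => (InnerProductSpace.toDual ℝ (Euc m)).symm (fderiv ℝ ζ x), fun x => ?_, ?_⟩
  · have h1 := ((hζ.differentiable two_ne_zero) x).hasFDerivAt
    have : innerSL ℝ ((InnerProductSpace.toDual ℝ (Euc m)).symm (fderiv ℝ ζ x)) = fderiv ℝ ζ x := by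
      ext v
      simp
    rw [this]
    exact h1
  · exact (InnerProductSpace.toDual ℝ (Euc m)).symm.contDiff.comp
      (hζ.fderiv_right (m := 1) (by norm_num))

variable {Ω : Set (Euc m)} {ψ₀ : Euc m → ℝ} {P₀ : Euc m → Euc m} {lam : ℝ} {u : Euc m → ℝ}
  {G : Euc m → Euc m} {f : Euc m → ℝ}

theorem NData.mulS (h : NData Ω P₀ lam u G f) (hΩ : IsOpen Ω) {ζ : Euc m → ℝ} {Z : Euc m → Euc m}
    (hζ : ∀ x, HasFDerivAt ζ (innerSL ℝ (Z x)) x) (hZ : ContDiff ℝ 1 Z)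
    (hb : ∀ x ∈ frontier Ω, Z x = 0) :
    NData Ω P₀ lam (fun x => ζ x * u x) (fun x => ζ x • G x + u x • Z x)
      (fun x => ζ x * f x + 2 * ⟪Z x, G x⟫ + u x * dv (fderiv ℝ Z x)) := by
  have hZc := hZ.continuous
  have hζd := contDiff_one_of_grad hζ hZc
  have hζc := hζd.continuous
  have uc := h.uc
  have Gc := h.Gc
  have fc := h.fc
  have hdv : Continuous fun x => dv (fderiv ℝ Z x) :=
    dv_continuous.comp (hZ.continuous_fderiv one_ne_zero)
  have hug : ∀ x ∈ Ω, HasFDerivAt (fun x => ζ x * u x) (innerSL ℝ (ζ x • G x + u x • Z x)) x := by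
    intro x hx
    have := (hζ x).fun_mul (h.ug x hx)
    have he : innerSL ℝ (ζ x • G x + u x • Z x)
        = ζ x • innerSL ℝ (G x) + u x • innerSL ℝ (Z x) := by
      rw [map_add, map_smul, map_smul]
    rw [he]
    exact this
  have hGd : ∀ x ∈ Ω, ContDiffAt ℝ 1 (fun x => ζ x • G x + u x • Z x) x := by
    intro x hx
    have hu : ContDiffAt ℝ 1 u x := by
      rw [contDiffAt_one_iff]
      refine ⟨fun y => innerSL ℝ (G y), Ω, hΩ.mem_nhds hx, ?_, fun y hy => h.ug y hy⟩
      exact (innerSL ℝ).continuous.comp_continuousOn (h.Gc.mono subset_closure)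
    exact (hζd.contDiffAt.smul (h.Gd x hx)).add (hu.smul hZ.contDiffAt)
  have hdv' := hdv.continuousOn (s := closure Ω)
  refine ⟨by fun_prop, by fun_prop, ContinuousOn.add (by fun_prop) (uc.mul hdv'), hug, hGd,
    ?_, ?_, ?_⟩
  · intro x hx v w
    refine symm_of_grad (u := fun x => ζ x * u x) ?_ ((hGd x hx).differentiableAt one_ne_zero) v w
    filter_upwards [hΩ.mem_nhds hx] with y hy using hug y hy
  · intro x hx
    have h1 := ((hζ x).fun_smul (h.G_diff hx)).fun_add
      ((h.ug x hx).fun_smul ((hZ.differentiable one_ne_zero) x).hasFDerivAt)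
    rw [h1.fderiv]
    simp only [dv_add, dv_smul, dv_smulRight, innerSL_apply_apply, h.lap x hx]
    rw [real_inner_comm (Z x) (G x)]
    ring
  · intro x hx
    simp [inner_smul_right, h.bc x hx, hb x hx]

/-- subtracting a constant -/
theorem NData.sub_const (h : NData Ω P₀ lam u G f) (c : ℝ) :
    NData Ω P₀ 0 (fun x => u x - c) G (fun x => - lam * u x + f x) where
  uc := by have := h.uc; fun_prop
  Gc := h.Gc
  fc := by have := h.uc; have := h.fc; fun_prop
  ug := fun x hx => by simpa using (h.ug x hx).sub_const c
  Gd := h.Gd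
  symm := h.symm
  lap := fun x hx => by rw [h.lap x hx]; ring
  bc := h.bc

theorem exists_cut {K U : Set (Euc m)} (hK : IsCompact K) (hU : IsOpen U) (hKU : K ⊆ U) :
    ∃ (η : Euc m → ℝ) (Z : Euc m → Euc m) (L : Set (Euc m)) (B : ℝ),
      (∀ x, HasFDerivAt η (innerSL ℝ (Z x)) x) ∧ ContDiff ℝ 1 Z ∧ (∀ x, 0 ≤ η x ∧ η x ≤ 1) ∧
      IsCompact L ∧ L ⊆ U ∧ K ⊆ L ∧ (∀ x ∈ K, η x = 1 ∧ Z x = 0 ∧ dv (fderiv ℝ Z x) = 0) ∧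
      (∀ x, x ∉ L → η x = 0 ∧ Z x = 0 ∧ dv (fderiv ℝ Z x) = 0) ∧ 0 ≤ B ∧
      (∀ x, ‖Z x‖ ≤ B ∧ |dv (fderiv ℝ Z x)| ≤ B) := by
  obtain ⟨L₁, hL₁, hKL₁, hL₁U⟩ := exists_compact_between hK hU hKU
  obtain ⟨L₂, hL₂, hL₁₂, hL₂U⟩ := exists_compact_between hL₁ hU hL₁U
  obtain ⟨η, hη, hr, hz, ho⟩ := exists_contMDiff_zero_iff_one_iff_of_isClosed (n := 2)
    (modelWithCornersSelf ℝ (Euc m)) (s := (interior L₂)ᶜ) (t := L₁)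
    isOpen_interior.isClosed_compl hL₁.isClosed
    (disjoint_left.2 fun x hx hx' => hx (hL₁₂ hx'))
  have hη2 : ContDiff ℝ 2 η := contMDiff_iff_contDiff.1 hη
  obtain ⟨Z, hZ, hZ1⟩ := exists_grad hη2
  have hloc : ∀ x c, (∀ᶠ y in 𝓝 x, η y = c) → Z x = 0 ∧ dv (fderiv ℝ Z x) = 0 := by
    intro x c hx
    have h1 : ∀ᶠ y in 𝓝 x, Z y = 0 := by
      filter_upwards [hx.eventually_nhds] with y hy
      have h2 : HasFDerivAt η (0 : Euc m →L[ℝ] ℝ) y :=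
        (hasFDerivAt_const c y).congr_of_eventuallyEq hy
      have h3 := (hZ y).unique h2
      have h4 := DFunLike.congr_fun h3 (Z y)
      simpa using h4
    refine ⟨h1.self_of_nhds, ?_⟩
    have h5 : HasFDerivAt Z (0 : Euc m →L[ℝ] Euc m) x :=
      (hasFDerivAt_const (0 : Euc m) x).congr_of_eventuallyEq h1
    rw [h5.fderiv, dv_zero]
  have hzero : ∀ x, x ∉ L₂ → η x = 0 ∧ Z x = 0 ∧ dv (fderiv ℝ Z x) = 0 := by
    intro x hx
    refine ⟨(hz x).1 fun h => hx (interior_subset h), hloc x 0 ?_⟩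
    filter_upwards [hL₂.isClosed.isOpen_compl.mem_nhds hx] with y hy
    exact (hz y).1 fun h => hy (interior_subset h)
  obtain ⟨B₁, hB₁⟩ := hL₂.exists_bound_of_continuousOn hZ1.continuous.continuousOn
  obtain ⟨B₂, hB₂⟩ := hL₂.exists_bound_of_continuousOn
    (dv_continuous.comp (hZ1.continuous_fderiv one_ne_zero)).continuousOn
  refine ⟨η, Z, L₂, max 0 (max B₁ B₂), hZ, hZ1, fun x => hr ⟨x, rfl⟩, hL₂, hL₂U,
    fun x hx => interior_subset (hL₁₂ (interior_subset (hKL₁ hx))), ?_, hzero, le_max_left _ _, ?_⟩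
  · intro x hx
    refine ⟨(ho x).1 (interior_subset (hKL₁ hx)), hloc x 1 ?_⟩
    filter_upwards [isOpen_interior.mem_nhds (hKL₁ hx)] with y hy
    exact (ho y).1 (interior_subset hy)
  · intro x
    by_cases hx : x ∈ L₂
    · exact ⟨(hB₁ x hx).trans ((le_max_left _ _).trans (le_max_right _ _)),
        (hB₂ x hx).trans ((le_max_right _ _).trans (le_max_right _ _))⟩
    · obtain ⟨-, h1, h2⟩ := hzero x hx
      simp [h1, h2]

theorem NData.int_u2 (h : NData Ω P₀ lam u G f) (hd : IsDef Ω ψ₀ P₀) :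
    IntegrableOn (fun x => u x ^ 2) Ω := hd.integrableOn_cont (h.uc.pow 2)

theorem NData.int_f2 (h : NData Ω P₀ lam u G f) (hd : IsDef Ω ψ₀ P₀) :
    IntegrableOn (fun x => f x ^ 2) Ω := hd.integrableOn_cont (h.fc.pow 2)

theorem NData.int_G2 (h : NData Ω P₀ lam u G f) (hd : IsDef Ω ψ₀ P₀) :
    IntegrableOn (fun x => ‖G x‖ ^ 2) Ω := hd.integrableOn_cont (h.Gc.norm.pow 2)

theorem cacc_pointwise {e z g u f q lam B : ℝ} (hlam : 0 ≤ lam) (he : 0 ≤ e) (he1 : e ≤ 1)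
    (hz : 0 ≤ z) (hzB : z ≤ B) (hq : |q| ≤ z * g) :
    e ^ 2 * g ^ 2 ≤ 2 * (e ^ 2 * (g ^ 2 - lam * u ^ 2 + u * f) + u * (2 * e * q)) +
      ((4 + 8 * B ^ 2) * ((1 + lam) * u ^ 2 + f ^ 2)) := by
  have h1 : - (u * (2 * e * q)) ≤ 2 * e * |u| * (B * |g|) := by
    have : |u * (2 * e * q)| ≤ 2 * e * |u| * (B * |g|) := by
      rw [abs_mul, abs_mul, abs_of_nonneg (by positivity : 0 ≤ 2 * e)]
      have h3 : |q| ≤ B * |g| := hq.trans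
        ((mul_le_mul_of_nonneg_left (le_abs_self g) hz).trans
          (mul_le_mul_of_nonneg_right hzB (abs_nonneg g)))
      calc |u| * (2 * e * |q|) = (2 * e * |u|) * |q| := by ring
        _ ≤ _ := mul_le_mul_of_nonneg_left h3 (by positivity)
    exact (neg_le_abs _).trans this
  have h2 : 4 * e * |u| * (B * |g|) ≤ e ^ 2 * g ^ 2 + 4 * B ^ 2 * u ^ 2 := by
    have := sq_nonneg (e * |g| - 2 * B * |u|)
    have hu := sq_abs u
    have hg := sq_abs g
    rw [← hu, ← hg]
    linarith
  have e2 : e ^ 2 ≤ 1 := pow_le_one₀ he he1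
  have h4 : e ^ 2 * (lam * u ^ 2) ≤ lam * u ^ 2 := mul_le_of_le_one_left (by positivity) e2
  have h5 : - (e ^ 2 * (u * f)) ≤ (u ^ 2 + f ^ 2) / 2 := by
    have : -(u * f) ≤ (u ^ 2 + f ^ 2) / 2 := by linarith [sq_nonneg (u + f)]
    have h6 := mul_le_mul_of_nonneg_left this (sq_nonneg e)
    have h7 : e ^ 2 * ((u ^ 2 + f ^ 2) / 2) ≤ (u ^ 2 + f ^ 2) / 2 :=
      mul_le_of_le_one_left (by positivity) e2
    linarith
  have h8 : 0 ≤ B ^ 2 * (lam * u ^ 2) := by positivity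
  have h9 : 0 ≤ B ^ 2 * f ^ 2 := by positivity
  have h10 : 0 ≤ lam * u ^ 2 := by positivity
  have := sq_nonneg f
  have := sq_nonneg u
  have h11 : 0 ≤ B ^ 2 * u ^ 2 := by positivity
  linarith

/-- Interior Caccioppoli inequality. -/
theorem IsDef.cacc (hd : IsDef Ω ψ₀ P₀) {K U : Set (Euc m)} (hK : IsCompact K) (hU : IsOpen U)
    (hKU : K ⊆ U) (hUΩ : U ⊆ Ω) :
    ∃ C : ℝ, 0 ≤ C ∧ ∀ lam u G f, 0 ≤ lam → NData Ω P₀ lam u G f →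
      ∫ x in K, ‖G x‖ ^ 2 ≤ C * ((1 + lam) * (∫ x in U, u x ^ 2) + ∫ x in Ω, f x ^ 2) := by
  obtain ⟨η, Z, L, B, hη, hZ, h01, hL, hLU, hKL, hone, hzero, hB0, hB⟩ := exists_cut hK hU hKU
  refine ⟨4 + 8 * B ^ 2, by positivity, fun lam u G f hlam h => ?_⟩
  have hZc := hZ.continuous
  have hηc := (contDiff_one_of_grad hη hZc).continuous
  have hω : ∀ x, HasFDerivAt (fun x => η x ^ 2) (innerSL ℝ ((2 * η x) • Z x)) x := fun x =>
    hasFDerivAt_comp_grad (κ := fun s => s ^ 2) (hη x) (by simpa using hasDerivAt_pow 2 (η x))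
  obtain ⟨hI, h0⟩ := h.energy hd hω (by fun_prop)
  have hUm := hU.measurableSet
  have hΩm := hd.isOpen.measurableSet
  have hu2 := h.int_u2 hd
  have hf2 := h.int_f2 hd
  have hG2 := h.int_G2 hd
  have hS : ∫ x in K, ‖G x‖ ^ 2 ≤ ∫ x in Ω, η x ^ 2 * ‖G x‖ ^ 2 := by
    have : ∫ x in K, ‖G x‖ ^ 2 = ∫ x in K, η x ^ 2 * ‖G x‖ ^ 2 :=
      setIntegral_congr_fun hK.measurableSet fun x hx => by simp [(hone x hx).1]
    rw [this]
    have hGc := h.Gc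
    refine setIntegral_mono_set (hd.integrableOn_cont (by fun_prop)) ?_
      (Eventually.of_forall (hKU.trans hUΩ))
    exact Eventually.of_forall fun x => by positivity
  have hind : IntegrableOn (U.indicator fun x => u x ^ 2) Ω := hu2.indicator hUm
  have hind2 : ∫ x in Ω, U.indicator (fun x => u x ^ 2) x = ∫ x in U, u x ^ 2 := by
    rw [setIntegral_indicator hUm, inter_eq_right.2 hUΩ]
  calc ∫ x in K, ‖G x‖ ^ 2 ≤ ∫ x in Ω, η x ^ 2 * ‖G x‖ ^ 2 := hS
    _ ≤ ∫ x in Ω, (2 * (η x ^ 2 * (‖G x‖ ^ 2 - lam * u x ^ 2 + u x * f x)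
          + u x * ⟪(2 * η x) • Z x, G x⟫)
          + (4 + 8 * B ^ 2) * ((1 + lam) * U.indicator (fun x => u x ^ 2) x + f x ^ 2)) := by
        have hGc := h.Gc
        refine setIntegral_mono_on (hd.integrableOn_cont (by fun_prop)) ?_ hΩm ?_
        · exact (hI.const_mul 2).add (((hind.const_mul (1 + lam)).add hf2).const_mul _)
        · intro x hx
          by_cases hxU : x ∈ U
          · rw [indicator_of_mem hxU, real_inner_smul_left]
            exact cacc_pointwise hlam (h01 x).1 (h01 x).2 (norm_nonneg _) (hB x).1
              (abs_real_inner_le_norm _ _)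
          · obtain ⟨h1, h2, -⟩ := hzero x fun h => hxU (hLU h)
            simp only [h1, h2, indicator_of_notMem hxU]
            simp
            positivity
    _ = _ := by
        have i1 : Integrable (fun x => 2 * (η x ^ 2 * (‖G x‖ ^ 2 - lam * u x ^ 2 + u x * f x)
          + u x * ⟪(2 * η x) • Z x, G x⟫)) (volume.restrict Ω) := hI.const_mul 2
        have i2 : Integrable (fun x => (4 + 8 * B ^ 2) *
          ((1 + lam) * U.indicator (fun x => u x ^ 2) x + f x ^ 2)) (volume.restrict Ω) :=
          ((hind.const_mul (1 + lam)).add hf2).const_mul _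
        have i3 : Integrable (fun x => (1 + lam) * U.indicator (fun x => u x ^ 2) x)
          (volume.restrict Ω) := hind.const_mul (1 + lam)
        rw [integral_add i1 i2, integral_const_mul, h0, integral_const_mul, integral_add i3 hf2,
          integral_const_mul, hind2]
        ring

end

section
variable {m : ℕ} {Ω : Set (Euc m)} {ψ₀ : Euc m → ℝ} {P₀ : Euc m → Euc m}

/-! ### Boundary step and three ball step -/

theorem comm_pointwise {ζ f q u d g B z : ℝ} (hζ : 0 ≤ ζ) (hζ1 : ζ ≤ 1) (hq : |q| ≤ z * g)
    (hz : z ≤ B) (hg : 0 ≤ g) (hd : |d| ≤ B) :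
    (ζ * f + 2 * q + u * d) ^ 2 ≤ 3 * f ^ 2 + 12 * B ^ 2 * (g ^ 2 + u ^ 2) := by
  have h1 : (ζ * f) ^ 2 ≤ f ^ 2 := by
    rw [mul_pow]
    exact mul_le_of_le_one_left (sq_nonneg f) (pow_le_one₀ hζ hζ1)
  have h2 : q ^ 2 ≤ B ^ 2 * g ^ 2 := by
    rw [← mul_pow, ← sq_abs]
    exact pow_le_pow_left₀ (abs_nonneg q) (hq.trans (mul_le_mul_of_nonneg_right hz hg)) 2
  have h3 : (u * d) ^ 2 ≤ B ^ 2 * u ^ 2 := by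
    rw [mul_pow, mul_comm]
    refine mul_le_mul_of_nonneg_right ?_ (sq_nonneg u)
    rw [← sq_abs]
    exact pow_le_pow_left₀ (abs_nonneg d) hd 2
  have h4 := sq_nonneg (ζ * f - 2 * q)
  have h5 := sq_nonneg (ζ * f - u * d)
  have h6 := sq_nonneg (2 * q - u * d)
  have h7 : 0 ≤ B ^ 2 * u ^ 2 := by positivity
  linarith

theorem NData.int_bound {lam : ℝ} {u : Euc m → ℝ} {G : Euc m → Euc m} {f : Euc m → ℝ}
    (h : NData Ω P₀ lam u G f) (hd : IsDef Ω ψ₀ P₀) {S₁ S₂ : Set (Euc m)} (h₁ : S₁ ⊆ Ω)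
    (h₂ : S₂ ⊆ Ω) (m₁ : MeasurableSet S₁) (m₂ : MeasurableSet S₂) {F : Euc m → ℝ}
    (hF : ContinuousOn F (closure Ω)) {a b₁ b₂ : ℝ}
    (hle : ∀ x ∈ Ω, F x ≤ a * f x ^ 2 + b₁ * S₁.indicator (fun x => ‖G x‖ ^ 2 + u x ^ 2) x +
      b₂ * S₂.indicator (fun x => ‖G x‖ ^ 2 + u x ^ 2) x) :
    ∫ x in Ω, F x ≤ a * (∫ x in Ω, f x ^ 2) +
      b₁ * ((∫ x in S₁, ‖G x‖ ^ 2) + ∫ x in S₁, u x ^ 2) +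
      b₂ * ((∫ x in S₂, ‖G x‖ ^ 2) + ∫ x in S₂, u x ^ 2) := by
  have hu2 := h.int_u2 hd
  have hf2 := h.int_f2 hd
  have hG2 := h.int_G2 hd
  have hI : IntegrableOn (fun x => ‖G x‖ ^ 2 + u x ^ 2) Ω := hG2.add hu2
  have e1 : ∀ S : Set (Euc m), S ⊆ Ω → MeasurableSet S →
      ∫ x in Ω, S.indicator (fun x => ‖G x‖ ^ 2 + u x ^ 2) x =
      (∫ x in S, ‖G x‖ ^ 2) + ∫ x in S, u x ^ 2 := by
    intro S hS mS
    rw [setIntegral_indicator mS, inter_eq_right.2 hS,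
      integral_add (hG2.mono_set hS) (hu2.mono_set hS)]
  have i0 : Integrable (fun x => a * f x ^ 2) (volume.restrict Ω) := hf2.const_mul a
  have i1 : Integrable (fun x => b₁ * S₁.indicator (fun x => ‖G x‖ ^ 2 + u x ^ 2) x)
    (volume.restrict Ω) := (Integrable.indicator hI m₁).const_mul b₁
  have i2 : Integrable (fun x => b₂ * S₂.indicator (fun x => ‖G x‖ ^ 2 + u x ^ 2) x)
    (volume.restrict Ω) := (Integrable.indicator hI m₂).const_mul b₂
  refine (setIntegral_mono_on (hd.integrableOn_cont hF) ((i0.add i1).add i2)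
    hd.isOpen.measurableSet hle).trans_eq ?_
  have i01 : Integrable (fun x => a * f x ^ 2 + b₁ * S₁.indicator
    (fun x => ‖G x‖ ^ 2 + u x ^ 2) x) (volume.restrict Ω) := i0.add i1
  simp only [Pi.add_apply]
  rw [integral_add i01 i2, integral_add i0 i1, integral_const_mul, integral_const_mul,
    integral_const_mul, e1 _ h₁ m₁, e1 _ h₂ m₂]

theorem exp_absorb {D s : ℝ} (hs : 1 ≤ s) (hD : 0 ≤ D) : D * s ^ 2 ≤ Real.exp ((D + 2) * s) := by
  have h1 : s ≤ Real.exp s := by linarith [Real.add_one_le_exp s]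
  have h2 : s ^ 2 ≤ Real.exp (2 * s) := by
    calc s ^ 2 ≤ Real.exp s ^ 2 := pow_le_pow_left₀ (by linarith) h1 2
      _ = _ := by rw [← Real.exp_nat_mul]; norm_num
  have h3 : D ≤ Real.exp (D * s) := by
    have : D ≤ D * s := le_mul_of_one_le_right hD hs
    linarith [Real.add_one_le_exp (D * s)]
  calc D * s ^ 2 ≤ Real.exp (D * s) * Real.exp (2 * s) := by gcongr
    _ = _ := by rw [← Real.exp_add]; ring_nf

theorem IsDef.bdry_step (hd : IsDef Ω ψ₀ P₀) : ∃ (K : Set (Euc m)) (A : ℝ), IsCompact K ∧ K ⊆ Ω ∧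
    0 ≤ A ∧ ∀ s lam u G f, 1 ≤ s → 0 ≤ lam → lam ≤ s ^ 2 → NData Ω P₀ lam u G f →
      ∫ x in Ω, u x ^ 2 ≤ Real.exp (A * s) * ((∫ x in K, u x ^ 2) + ∫ x in Ω, f x ^ 2) := by
  obtain ⟨c, δ, hc, hδ, hcδ⟩ := hd.exists_grad_lower
  have hψc := hd.cont
  have hPc := hd.contP
  obtain ⟨M, hM⟩ := hd.compact.exists_bound_of_continuousOn hψc.continuousOn
  obtain ⟨C₂, hC₂⟩ := hd.compact.exists_bound_of_continuousOn
    (f := fun x => ‖P₀ x‖ ^ 2) (by fun_prop)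
  obtain ⟨KP, hKP⟩ := hd.lip
  have hfr : ∀ x ∈ frontier Ω, x ∉ Ω := fun x hx hx' =>
    (disjoint_left.1 (disjoint_frontier_iff_isOpen.2 hd.isOpen)) hx hx'
  obtain ⟨η, Z, L, B, hη, hZ, h01, hL, hLU, hKL, hone, hzero, hB0, hB⟩ :=
    exists_cut (K := closure Ω ∩ {x | δ ≤ ψ₀ x}) (U := Ω)
      (hd.compact.inter_right (isClosed_le continuous_const hψc)) hd.isOpen (by
        rintro x ⟨hx, hx'⟩
        rcases hd.closure_eq hx with h | h
        · exact h
        · have := hd.zero x h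
          simp only [mem_ofPred_eq] at hx'
          linarith)
  obtain ⟨K', hK', hLK', hK'Ω⟩ := exists_compact_between hL hd.isOpen hLU
  obtain ⟨Cc, hCc0, hCc⟩ := hd.cacc hL isOpen_interior hLK' (interior_subset.trans hK'Ω)
  obtain ⟨C, K, τ₀, hC, hK, hτ₀, hcar⟩ := carleman hd hd.grad hKP (c₀ := c) (C₂ := C₂) hc
  set M' := max M 0 with hM'
  set D := 1 + C * (3 + 12 * B ^ 2 * (2 * Cc + 1)) with hD
  have hD0 : 0 ≤ D := by positivity
  refine ⟨K', 2 * τ₀ * cPhi K M' + (D + 2), hK', hK'Ω, ?_, ?_⟩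
  · have := cPhi_nonneg hK (le_max_right M 0)
    positivity
  intro s lam u G f hs hlam hlams h
  have hmul := h.mulS (ζ := fun x => 1 - η x) (Z := fun x => - Z x) hd.isOpen (by
    intro x
    have := (hη x).const_sub 1
    rwa [← map_neg] at this) hZ.neg (by
    intro x hx
    simp [(hzero x fun hxL => hfr x hx (hLU hxL)).2.1])
  have hdvneg : ∀ x, dv (fderiv ℝ (fun x => - Z x) x) = - dv (fderiv ℝ Z x) := by
    intro x
    rw [fderiv_fun_neg, dv_neg]
  have hτ : τ₀ ≤ τ₀ * s := le_mul_of_one_le_right (by linarith) hs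
  have hls : lam ≤ (τ₀ * s) ^ 2 := hlams.trans
    (pow_le_pow_left₀ (by linarith) (le_mul_of_one_le_left (by linarith) hτ₀) 2)
  have hc1 := hcar (τ₀ * s) hτ lam _ _ _ hlam hls hmul (fun x hx => Or.inl (hd.zero x hx)) (by
    intro x hx
    by_cases hxδ : δ ≤ ψ₀ x
    · left
      have := hone x ⟨subset_closure hx, hxδ⟩
      simp [this.1, this.2.1]
    · right
      refine ⟨(hd.pos x hx).le, (hcδ x (subset_closure hx) (not_le.1 hxδ)).le, ?_⟩
      exact (le_abs_self _).trans (hC₂ x (subset_closure hx)))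
  set E := Real.exp (2 * (τ₀ * s) * cPhi K M') with hE
  have hτ1 : 1 ≤ τ₀ * s := hτ₀.trans hτ
  have hcAE : ∀ x ∈ Ω, cA K (τ₀ * s) (ψ₀ x) ≤ E := fun x hx =>
    cA_le hK hτ1 (hd.pos x hx).le
      (((le_abs_self _).trans (hM x (subset_closure hx))).trans (le_max_left _ _))
  have uc := h.uc
  have hcAc : Continuous fun x => cA K (τ₀ * s) (ψ₀ x) := (cA_cont hK _).comp hψc
  have hcAp : ∀ t, 0 ≤ cA K (τ₀ * s) t := fun t => zero_le_one.trans (one_le_cA _ _ _)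
  have hu2 := h.int_u2 hd
  have hwc := hmul.fc
  -- lower bound
  have hlow : ∫ x in Ω \ L, u x ^ 2 ≤ ∫ x in Ω, cA K (τ₀ * s) (ψ₀ x) * ((1 - η x) * u x) ^ 2 := by
    have hηc := (contDiff_one_of_grad hη hZ.continuous).continuous
    have hi : IntegrableOn (fun x => cA K (τ₀ * s) (ψ₀ x) * ((1 - η x) * u x) ^ 2) Ω :=
      hd.integrableOn_cont (hcAc.continuousOn.mul (by fun_prop))
    refine le_trans (setIntegral_mono_on (hu2.mono_set sdiff_subset) (hi.mono_set sdiff_subset)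
      (hd.isOpen.measurableSet.diff hL.measurableSet) ?_) (setIntegral_mono_set hi
        (Eventually.of_forall fun x => mul_nonneg (hcAp _) (sq_nonneg _))
        (Eventually.of_forall sdiff_subset))
    intro x hx
    rw [(hzero x hx.2).1, sub_zero, one_mul]
    exact le_mul_of_one_le_left (sq_nonneg _) (one_le_cA _ _ _)
  have hup := h.int_bound hd hLU (empty_subset Ω) hL.measurableSet MeasurableSet.empty
    (F := fun x => cA K (τ₀ * s) (ψ₀ x) * ((1 - η x) * f x + 2 * ⟪- Z x, G x⟫ +
      u x * dv (fderiv ℝ (fun x => - Z x) x)) ^ 2) (hcAc.continuousOn.mul (hwc.pow 2))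
    (a := E * 3) (b₁ := E * (12 * B ^ 2)) (b₂ := 0) (by
      intro x hx
      rw [hdvneg]
      have h1 : cA K (τ₀ * s) (ψ₀ x) * ((1 - η x) * f x + 2 * ⟪- Z x, G x⟫ +
          u x * -dv (fderiv ℝ Z x)) ^ 2 ≤ E * ((1 - η x) * f x + 2 * ⟪- Z x, G x⟫ +
          u x * -dv (fderiv ℝ Z x)) ^ 2 := mul_le_mul_of_nonneg_right (hcAE x hx) (sq_nonneg _)
      by_cases hxL : x ∈ L
      · rw [indicator_of_mem hxL]
        refine h1.trans ?_
        have h2 := comm_pointwise (ζ := 1 - η x) (f := f x) (q := ⟪- Z x, G x⟫) (u := u x)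
          (d := -dv (fderiv ℝ Z x)) (g := ‖G x‖) (B := B) (z := ‖Z x‖)
          (by linarith [(h01 x).2]) (by linarith [(h01 x).1])
          (by simpa using abs_real_inner_le_norm (Z x) (G x)) (hB x).1 (norm_nonneg _)
          (by rw [abs_neg]; exact (hB x).2)
        have h3 := mul_le_mul_of_nonneg_left h2 (Real.exp_nonneg (2 * (τ₀ * s) * cPhi K M'))
        rw [← hE] at h3
        linarith
      · rw [indicator_of_notMem hxL]
        obtain ⟨e1, e2, e3⟩ := hzero x hxL
        rw [e1, e2, e3] at h1
        rw [e1, e2, e3]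
        simp only [neg_zero, inner_zero_left, sub_zero, one_mul, mul_zero, add_zero] at h1 ⊢
        have : 0 ≤ E * f x ^ 2 := by positivity
        simp
        linarith)
  have hcac := hCc lam u G f hlam h
  simp only [Measure.restrict_empty, integral_zero_measure, add_zero, mul_zero] at hup
  set I := ∫ x in K', u x ^ 2
  set F := ∫ x in Ω, f x ^ 2
  have hF0 : 0 ≤ F := integral_nonneg fun x => sq_nonneg _
  have hI0 : 0 ≤ I := integral_nonneg fun x => sq_nonneg _
  have hmonoK : ∀ S : Set (Euc m), S ⊆ K' → ∫ x in S, u x ^ 2 ≤ I := fun S hS =>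
    setIntegral_mono_set (hu2.mono_set hK'Ω) (Eventually.of_forall fun x => sq_nonneg _)
      (Eventually.of_forall hS)
  have hIL := hmonoK L (hLK'.trans interior_subset)
  have hIU := hmonoK (interior K') interior_subset
  have hsplit : ∫ x in Ω, u x ^ 2 = (∫ x in L, u x ^ 2) + ∫ x in Ω \ L, u x ^ 2 := by
    have := setIntegral_union (disjoint_sdiff_right (s := L) (t := Ω))
      (hd.isOpen.measurableSet.diff hL.measurableSet) (hu2.mono_set hLU) (hu2.mono_set sdiff_subset)
    rw [← this, union_sdiff_cancel hLU]
  have hE1 : 1 ≤ E := Real.one_le_exp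
    (mul_nonneg (by positivity) (cPhi_nonneg hK (le_max_right M 0)))
  have hs2 : 1 ≤ s ^ 2 := one_le_pow₀ hs
  have hlam2 : 1 + lam ≤ 2 * s ^ 2 := by linarith
  have hGL : ∫ x in L, ‖G x‖ ^ 2 ≤ s ^ 2 * (2 * Cc * (I + F)) := by
    have h1 : (1 + lam) * (∫ x in interior K', u x ^ 2) ≤ 2 * s ^ 2 * I :=
      mul_le_mul hlam2 hIU (integral_nonneg fun x => sq_nonneg _) (by positivity)
    have h2 : F ≤ 2 * s ^ 2 * F := le_mul_of_one_le_left hF0 (by linarith)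
    have h3 := mul_le_mul_of_nonneg_left (add_le_add h1 h2) hCc0
    linarith
  have hIF : I ≤ s ^ 2 * (I + F) := by
    have := le_mul_of_one_le_left (add_nonneg hI0 hF0) hs2
    linarith
  have hFF : F ≤ s ^ 2 * (I + F) := by
    have := le_mul_of_one_le_left (add_nonneg hI0 hF0) hs2
    linarith
  have hIE : I ≤ E * (s ^ 2 * (I + F)) := hIF.trans (le_mul_of_one_le_left (by positivity) hE1)
  have hR : E * 3 * F + E * (12 * B ^ 2) * ((∫ x in L, ‖G x‖ ^ 2) + ∫ x in L, u x ^ 2) ≤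
      E * ((3 + 12 * B ^ 2 * (2 * Cc + 1)) * (s ^ 2 * (I + F))) := by
    have h1 : E * 3 * F ≤ E * 3 * (s ^ 2 * (I + F)) :=
      mul_le_mul_of_nonneg_left hFF (by positivity)
    have h2 : E * (12 * B ^ 2) * ((∫ x in L, ‖G x‖ ^ 2) + ∫ x in L, u x ^ 2) ≤
      E * (12 * B ^ 2) * (s ^ 2 * (2 * Cc * (I + F)) + s ^ 2 * (I + F)) :=
      mul_le_mul_of_nonneg_left (add_le_add hGL (hIL.trans hIF)) (by positivity)
    linarith
  have hfin : ∫ x in Ω, u x ^ 2 ≤ E * (D * s ^ 2) * (I + F) := by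
    have h1 := hlow.trans (hc1.trans (mul_le_mul_of_nonneg_left (hup.trans hR) hC.le))
    rw [hsplit, hD]
    linarith
  refine hfin.trans (mul_le_mul_of_nonneg_right ?_ (add_nonneg hI0 hF0))
  calc E * (D * s ^ 2) ≤ E * Real.exp ((D + 2) * s) :=
        mul_le_mul_of_nonneg_left (exp_absorb hs hD0) (by positivity)
    _ = _ := by rw [hE, ← Real.exp_add]; ring_nf

end

section
variable {m : ℕ} {Ω : Set (Euc m)} {ψ₀ : Euc m → ℝ} {P₀ : Euc m → Euc m}

/-! ### Three ball inequality -/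

theorem IsDef.three_ball (hd : IsDef Ω ψ₀ P₀) {y : Euc m} {R a : ℝ} (ha : 0 < a) (haR : 4 * a ≤ R)
    (hball : closedBall y R ⊆ Ω) :
    ∃ D c' c τ₀ : ℝ, 0 ≤ D ∧ 0 ≤ c' ∧ 0 < c ∧ 1 ≤ τ₀ ∧ ∀ τ s lam u G f, τ₀ ≤ τ → 1 ≤ s → s ≤ τ →
      0 ≤ lam → lam ≤ s ^ 2 → NData Ω P₀ lam u G f →
      ∫ x in ball y (R / 2), u x ^ 2 ≤
        D * s ^ 2 * Real.exp (c' * τ) * ((∫ x in ball y (3 * a), u x ^ 2) + ∫ x in Ω, f x ^ 2) +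
        D * s ^ 2 * Real.exp (- c * τ) * ∫ x in Ω, u x ^ 2 := by
  have hR : 0 < R := by linarith
  set ψ : Euc m → ℝ := fun x => R ^ 2 - ‖x - y‖ ^ 2 with hψ
  set P : Euc m → Euc m := fun x => (-2 : ℝ) • (x - y) with hP
  have hψg : ∀ x, HasFDerivAt ψ (innerSL ℝ (P x)) x := by
    intro x
    have h1 := ((hasFDerivAt_id x).sub_const y).norm_sq.const_sub (R ^ 2)
    refine h1.congr_fderiv ?_
    ext v
    simp [hP]
  have hPl : LipschitzWith 2 P := by
    refine LipschitzWith.of_dist_le_mul fun x z => ?_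
    simp only [hP, dist_eq_norm, ← smul_sub]
    rw [norm_smul]
    simp
  have hPn : ∀ x, ‖P x‖ ^ 2 = 4 * ‖x - y‖ ^ 2 := by
    intro x
    simp only [hP, norm_smul, mul_pow]
    norm_num
  have hψc : Continuous ψ := by fun_prop
  obtain ⟨η, Z, L, B, hη, hZ, h01, hL, hLU, hKL, hone, hzero, hB0, hB⟩ :=
    exists_cut (K := closedBall y (3 * R / 4) ∩ {x | 2 * a ≤ ‖x - y‖})
      (U := {x | a < ‖x - y‖} ∩ {x | ‖x - y‖ < R})
      ((isCompact_closedBall y _).inter_right (isClosed_le continuous_const (by fun_prop)))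
      ((isOpen_lt continuous_const (by fun_prop)).inter
        (isOpen_lt (by fun_prop) continuous_const)) (by
        rintro x ⟨hx, hx'⟩
        rw [mem_closedBall, dist_eq_norm] at hx
        simp only [mem_ofPred_eq, mem_inter_iff] at hx' ⊢
        constructor <;> linarith)
  have hLa : ∀ x ∈ L, a < ‖x - y‖ ∧ ‖x - y‖ < R := fun x hx => hLU hx
  have hLΩ : L ⊆ Ω := fun x hx => hball (by
    rw [mem_closedBall, dist_eq_norm]
    exact (hLa x hx).2.le)
  have hS₁U : closedBall y (2 * a) ⊆ ball y (3 * a) := closedBall_subset_ball (by linarith)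
  have hUΩ : ball y (3 * a) ⊆ Ω :=
    (ball_subset_closedBall.trans (closedBall_subset_closedBall (by linarith))).trans hball
  have hS₁Ω := hS₁U.trans hUΩ
  obtain ⟨Cc₁, hCc₁0, hCc₁⟩ := hd.cacc (isCompact_closedBall y (2 * a)) isOpen_ball hS₁U hUΩ
  obtain ⟨Cc₂, hCc₂0, hCc₂⟩ := hd.cacc hL hd.isOpen hLΩ subset_rfl
  obtain ⟨C, K, τ₀, hC, hK, hτ₀, hcar⟩ := carleman hd hψg hPl (c₀ := 4 * a ^ 2) (C₂ := 4 * R ^ 2)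
    (by positivity)
  have hfr : ∀ x ∈ frontier Ω, x ∉ Ω := fun x hx hx' =>
    (disjoint_left.1 (disjoint_frontier_iff_isOpen.2 hd.isOpen)) hx hx'
  set q := 3 + 12 * B ^ 2 * (2 * Cc₁ + 1) + 12 * B ^ 2 * (2 * Cc₂ + 1) with hq
  have hq0 : 0 ≤ q := by positivity
  refine ⟨1 + 2 * C * q, 2 * cPhi K (R ^ 2),
    2 * (cPhi K (3 * R ^ 2 / 4) - cPhi K (7 * R ^ 2 / 16)), τ₀, by positivity, ?_, ?_, hτ₀, ?_⟩
  · exact mul_nonneg zero_le_two (cPhi_nonneg hK (sq_nonneg R))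
  · have : cPhi K (7 * R ^ 2 / 16) < cPhi K (3 * R ^ 2 / 4) :=
      cPhi_mono hK (by have : 0 < R ^ 2 := by positivity
                       linarith)
    linarith
  intro τ s lam u G f hτ hs hsτ hlam hlams h
  have hτ1 : 1 ≤ τ := hτ₀.trans hτ
  have hmul := h.mulS hd.isOpen hη hZ
    (fun x hx => (hzero x fun hxL => hfr x hx (hLΩ hxL)).2.1)
  have hc1 := hcar τ hτ lam _ _ _ hlam (hlams.trans (pow_le_pow_left₀ (by linarith) hsτ 2)) hmul
    (fun x hx => by
      right
      obtain ⟨e1, e2, -⟩ := hzero x fun hxL => hfr x hx (hLΩ hxL)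
      simp [e1, e2])
    (fun x hx => by
      by_cases hxL : x ∈ L
      · right
        obtain ⟨h1, h2⟩ := hLa x hxL
        rw [hPn]
        have h3 : a ^ 2 ≤ ‖x - y‖ ^ 2 := pow_le_pow_left₀ ha.le h1.le 2
        have h4 : ‖x - y‖ ^ 2 ≤ R ^ 2 := pow_le_pow_left₀ (norm_nonneg _) h2.le 2
        refine ⟨by simp only [hψ]; linarith, by linarith, by linarith⟩
      · left
        obtain ⟨e1, e2, -⟩ := hzero x hxL
        simp [e1, e2])
  set Eb := Real.exp (2 * τ * cPhi K (R ^ 2)) with hEb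
  set Es := Real.exp (2 * τ * cPhi K (7 * R ^ 2 / 16)) with hEs
  set El := Real.exp (2 * τ * cPhi K (3 * R ^ 2 / 4)) with hEl
  have hEb0 : 0 < Eb := Real.exp_pos _
  have hEs0 : 0 < Es := Real.exp_pos _
  have hEl0 : 0 < El := Real.exp_pos _
  have hR2 : 0 < R ^ 2 := by positivity
  have hEsEb : Es ≤ Eb := by
    refine Real.exp_le_exp.2 (mul_le_mul_of_nonneg_left ((cPhi_mono hK).monotone ?_) (by linarith))
    linarith
  have uc := h.uc
  have hcAc : Continuous fun x => cA K τ (ψ x) := (cA_cont hK _).comp hψc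
  have hcAp : ∀ t, 0 ≤ cA K τ t := fun t => zero_le_one.trans (one_le_cA _ _ _)
  have hu2 := h.int_u2 hd
  have hwc := hmul.fc
  have hηc := (contDiff_one_of_grad hη hZ.continuous).continuous
  set J := ∫ x in ball y (R / 2) \ closedBall y (2 * a), u x ^ 2 with hJ
  have hBΩ : ball y (R / 2) ⊆ Ω :=
    (ball_subset_closedBall.trans (closedBall_subset_closedBall (by linarith))).trans hball
  have hdm : MeasurableSet (ball y (R / 2) \ closedBall y (2 * a)) :=
    measurableSet_ball.diff measurableSet_closedBall
  have hdΩ : ball y (R / 2) \ closedBall y (2 * a) ⊆ Ω := sdiff_subset.trans hBΩ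
  have hlow : El / 2 * J ≤ ∫ x in Ω, cA K τ (ψ x) * (η x * u x) ^ 2 := by
    have hi : IntegrableOn (fun x => cA K τ (ψ x) * (η x * u x) ^ 2) Ω :=
      hd.integrableOn_cont (hcAc.continuousOn.mul (by fun_prop))
    rw [hJ, ← integral_const_mul]
    refine le_trans (setIntegral_mono_on ((hu2.mono_set hdΩ).const_mul _) (hi.mono_set hdΩ)
      hdm ?_) (setIntegral_mono_set hi
        (Eventually.of_forall fun x => mul_nonneg (hcAp _) (sq_nonneg _))
        (Eventually.of_forall hdΩ))
    rintro x ⟨hx1, hx2⟩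
    rw [mem_ball, dist_eq_norm] at hx1
    rw [mem_closedBall, dist_eq_norm, not_le] at hx2
    have hxK : x ∈ closedBall y (3 * R / 4) ∩ {x | 2 * a ≤ ‖x - y‖} := by
      refine ⟨?_, hx2.le⟩
      rw [mem_closedBall, dist_eq_norm]
      linarith
    rw [(hone x hxK).1, one_mul]
    refine mul_le_mul_of_nonneg_right (le_cA hK hτ1 ?_) (sq_nonneg _)
    have : ‖x - y‖ ^ 2 ≤ (R / 2) ^ 2 := pow_le_pow_left₀ (norm_nonneg _) hx1.le 2
    simp only [hψ]
    linarith
  have hup := h.int_bound hd hS₁Ω hLΩ measurableSet_closedBall hL.measurableSet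
    (F := fun x => cA K τ (ψ x) * (η x * f x + 2 * ⟪Z x, G x⟫ +
      u x * dv (fderiv ℝ Z x)) ^ 2) (hcAc.continuousOn.mul (hwc.pow 2))
    (a := Eb * 3) (b₁ := Eb * (12 * B ^ 2)) (b₂ := Es * (12 * B ^ 2)) (by
      intro x hx
      have hn1 : 0 ≤ Es * (12 * B ^ 2) * L.indicator (fun x => ‖G x‖ ^ 2 + u x ^ 2) x :=
        mul_nonneg (by positivity) (indicator_nonneg (fun x _ => by positivity) x)
      have hn2 : 0 ≤ Eb * (12 * B ^ 2) *
          (closedBall y (2 * a)).indicator (fun x => ‖G x‖ ^ 2 + u x ^ 2) x :=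
        mul_nonneg (by positivity) (indicator_nonneg (fun x _ => by positivity) x)
      have hn3 : 0 ≤ Eb * f x ^ 2 := by positivity
      have hcp := comm_pointwise (ζ := η x) (f := f x) (q := ⟪Z x, G x⟫) (u := u x)
          (d := dv (fderiv ℝ Z x)) (g := ‖G x‖) (B := B) (z := ‖Z x‖)
          (h01 x).1 (h01 x).2 (abs_real_inner_le_norm (Z x) (G x)) (hB x).1 (norm_nonneg _) (hB x).2
      by_cases hxL : x ∈ L
      · obtain ⟨g1, g2⟩ := hLa x hxL
        have g3 : a ^ 2 ≤ ‖x - y‖ ^ 2 := pow_le_pow_left₀ ha.le g1.le 2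
        have g4 : ‖x - y‖ ^ 2 ≤ R ^ 2 := pow_le_pow_left₀ (norm_nonneg _) g2.le 2
        have hψ0 : 0 ≤ ψ x := by simp only [hψ]; linarith
        have hψR : ψ x ≤ R ^ 2 := by simp only [hψ]; linarith [sq_nonneg ‖x - y‖]
        have hcE : cA K τ (ψ x) ≤ Eb := cA_le hK hτ1 hψ0 hψR
        by_cases hx2 : x ∈ closedBall y (2 * a)
        · rw [indicator_of_mem hx2]
          have := mul_le_mul hcE hcp (sq_nonneg _) hEb0.le
          linarith
        · have hx2' := hx2
          rw [mem_closedBall, dist_eq_norm, not_le] at hx2'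
          by_cases hx3 : ‖x - y‖ ≤ 3 * R / 4
          · have hxK : x ∈ closedBall y (3 * R / 4) ∩ {x | 2 * a ≤ ‖x - y‖} := by
              refine ⟨?_, hx2'.le⟩
              rw [mem_closedBall, dist_eq_norm]
              linarith
            obtain ⟨e1, e2, e3⟩ := hone x hxK
            rw [e1, e2, e3]
            simp only [inner_zero_left, mul_zero, add_zero, one_mul]
            have := mul_le_mul_of_nonneg_right hcE (sq_nonneg (f x))
            linarith
          · rw [indicator_of_mem hxL] at hn1 ⊢
            rw [not_le] at hx3
            have g5 : (3 * R / 4) ^ 2 ≤ ‖x - y‖ ^ 2 := pow_le_pow_left₀ (by linarith) hx3.le 2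
            have hcE2 : cA K τ (ψ x) ≤ Es := cA_le hK hτ1 hψ0 (by simp only [hψ]; linarith)
            have := mul_le_mul hcE2 hcp (sq_nonneg _) hEs0.le
            have h7 := mul_le_mul_of_nonneg_right hEsEb (sq_nonneg (f x))
            linarith
      · obtain ⟨e1, e2, e3⟩ := hzero x hxL
        rw [e1, e2, e3]
        simp only [inner_zero_left, mul_zero, add_zero, zero_mul]
        simp only [ne_eq, OfNat.ofNat_ne_zero, not_false_eq_true, zero_pow, mul_zero]
        linarith)
  have hcac1 := hCc₁ lam u G f hlam h
  have hcac2 := hCc₂ lam u G f hlam h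
  set I := ∫ x in ball y (3 * a), u x ^ 2
  set F := ∫ x in Ω, f x ^ 2
  set T := ∫ x in Ω, u x ^ 2
  have hF0 : 0 ≤ F := integral_nonneg fun x => sq_nonneg _
  have hI0 : 0 ≤ I := integral_nonneg fun x => sq_nonneg _
  have hT0 : 0 ≤ T := integral_nonneg fun x => sq_nonneg _
  have hS₁I : ∫ x in closedBall y (2 * a), u x ^ 2 ≤ I :=
    setIntegral_mono_set (hu2.mono_set hUΩ) (Eventually.of_forall fun x => sq_nonneg _)
      (Eventually.of_forall hS₁U)
  have hLT : ∫ x in L, u x ^ 2 ≤ T :=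
    setIntegral_mono_set hu2 (Eventually.of_forall fun x => sq_nonneg _)
      (Eventually.of_forall hLΩ)
  have hs2 : 1 ≤ s ^ 2 := one_le_pow₀ hs
  have hlam2 : 1 + lam ≤ 2 * s ^ 2 := by linarith
  have hsI : I ≤ s ^ 2 * I := le_mul_of_one_le_left hI0 hs2
  have hsF : F ≤ s ^ 2 * F := le_mul_of_one_le_left hF0 hs2
  have hsT : T ≤ s ^ 2 * T := le_mul_of_one_le_left hT0 hs2
  have k1 : (∫ x in closedBall y (2 * a), ‖G x‖ ^ 2) + ∫ x in closedBall y (2 * a), u x ^ 2 ≤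
      (2 * Cc₁ + 1) * (s ^ 2 * (I + F)) := by
    have h1 : (1 + lam) * I + F ≤ 2 * (s ^ 2 * (I + F)) := by
      have := mul_le_mul_of_nonneg_right hlam2 hI0
      linarith
    have h2 := mul_le_mul_of_nonneg_left h1 hCc₁0
    linarith
  have k2 : (∫ x in L, ‖G x‖ ^ 2) + ∫ x in L, u x ^ 2 ≤
      (2 * Cc₂ + 1) * (s ^ 2 * (T + F)) := by
    have h1 : (1 + lam) * T + F ≤ 2 * (s ^ 2 * (T + F)) := by
      have := mul_le_mul_of_nonneg_right hlam2 hT0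
      linarith
    have h2 := mul_le_mul_of_nonneg_left h1 hCc₂0
    linarith
  have hX0 : 0 ≤ s ^ 2 * (I + F) := by positivity
  have hrhs : Eb * 3 * F + Eb * (12 * B ^ 2) * ((∫ x in closedBall y (2 * a), ‖G x‖ ^ 2) +
      ∫ x in closedBall y (2 * a), u x ^ 2) +
      Es * (12 * B ^ 2) * ((∫ x in L, ‖G x‖ ^ 2) + ∫ x in L, u x ^ 2) ≤
      q * (s ^ 2 * (I + F)) * Eb + q * (s ^ 2 * T) * Es := by
    have h1 := mul_le_mul_of_nonneg_left k1 (by positivity : 0 ≤ Eb * (12 * B ^ 2))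
    have h2 := mul_le_mul_of_nonneg_left k2 (by positivity : 0 ≤ Es * (12 * B ^ 2))
    have h3 : Eb * 3 * F ≤ Eb * 3 * (s ^ 2 * (I + F)) :=
      mul_le_mul_of_nonneg_left (by linarith) (by positivity)
    have h4 : (12 * B ^ 2 * (2 * Cc₂ + 1)) * (s ^ 2 * F) * Es ≤
        (12 * B ^ 2 * (2 * Cc₂ + 1)) * (s ^ 2 * (I + F)) * Eb := by
      refine mul_le_mul (mul_le_mul_of_nonneg_left ?_ (by positivity)) hEsEb hEs0.le (by positivity)
      linarith
    have h5 : (12 * B ^ 2 * (2 * Cc₂ + 1)) * (s ^ 2 * T) * Es ≤ q * (s ^ 2 * T) * Es := by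
      refine mul_le_mul_of_nonneg_right (mul_le_mul_of_nonneg_right ?_ (by positivity)) hEs0.le
      have : 0 ≤ 12 * B ^ 2 * (2 * Cc₁ + 1) := by positivity
      linarith
    have h6 : q * (s ^ 2 * (I + F)) * Eb = 3 * (s ^ 2 * (I + F)) * Eb +
      (12 * B ^ 2 * (2 * Cc₁ + 1)) * (s ^ 2 * (I + F)) * Eb +
      (12 * B ^ 2 * (2 * Cc₂ + 1)) * (s ^ 2 * (I + F)) * Eb := by rw [hq]; ring
    rw [h6]
    linarith
  have hmain := hlow.trans (hc1.trans (mul_le_mul_of_nonneg_left (hup.trans hrhs) hC.le))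
  have r1 : Real.exp (2 * cPhi K (R ^ 2) * τ) = Eb := by rw [hEb]; ring_nf
  have hEl1 : 1 ≤ El := Real.one_le_exp
    (mul_nonneg (by linarith) (cPhi_nonneg hK (by positivity)))
  have hEb1 : 1 ≤ Eb := Real.one_le_exp
    (mul_nonneg (by linarith) (cPhi_nonneg hK (by positivity)))
  have r2 : Real.exp (-(2 * (cPhi K (3 * R ^ 2 / 4) - cPhi K (7 * R ^ 2 / 16))) * τ) = Es / El := by
    rw [hEs, hEl, ← Real.exp_sub]; ring_nf
  rw [r1, r2]
  have hJle : J ≤ 2 * C * q * (s ^ 2 * (I + F)) * Eb + 2 * C * q * (s ^ 2 * T) * (Es / El) := by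
    have h1 : J ≤ (2 * C * q * (s ^ 2 * (I + F)) * Eb + 2 * C * q * (s ^ 2 * T) * Es) / El := by
      rw [le_div_iff₀ hEl0]
      linarith
    refine h1.trans ?_
    rw [add_div, mul_div_assoc _ Es El]
    gcongr
    exact div_le_self (by positivity) hEl1
  have hsp : ∫ x in ball y (R / 2), u x ^ 2 ≤ J + ∫ x in closedBall y (2 * a), u x ^ 2 := by
    rw [hJ, ← setIntegral_union disjoint_sdiff_left measurableSet_closedBall (hu2.mono_set hdΩ)
      (hu2.mono_set hS₁Ω)]
    refine setIntegral_mono_set (hu2.mono_set (union_subset hdΩ hS₁Ω))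
      (Eventually.of_forall fun x => sq_nonneg _) (Eventually.of_forall ?_)
    intro x hx
    by_cases hx' : x ∈ closedBall y (2 * a)
    · exact Or.inr hx'
    · exact Or.inl ⟨hx, hx'⟩
  have hIe : I ≤ s ^ 2 * (I + F) * Eb :=
    (by linarith : I ≤ s ^ 2 * (I + F)).trans (le_mul_of_one_le_right hX0 hEb1)
  have hpos : 0 ≤ s ^ 2 * (Es / El) * T := by positivity
  linarith

end

section
variable {m : ℕ} {Ω : Set (Euc m)} {ψ₀ : Euc m → ℝ} {P₀ : Euc m → Euc m}

/-! ### Propagation of smallness -/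

theorem NData.mono_int {lam : ℝ} {u : Euc m → ℝ} {G : Euc m → Euc m} {f : Euc m → ℝ}
    (h : NData Ω P₀ lam u G f) (hd : IsDef Ω ψ₀ P₀) {S T : Set (Euc m)} (hST : S ⊆ T) (hT : T ⊆ Ω) :
    ∫ x in S, u x ^ 2 ≤ ∫ x in T, u x ^ 2 :=
  setIntegral_mono_set ((h.int_u2 hd).mono_set hT) (Eventually.of_forall fun x => sq_nonneg _)
      (Eventually.of_forall hST)

theorem IsDef.three_ball' (hd : IsDef Ω ψ₀ P₀) {y : Euc m} {R a : ℝ} (ha : 0 < a)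
    (haR : 4 * a ≤ R) (hball : closedBall y R ⊆ Ω) (A₀ : ℝ) :
    ∃ A₁ : ℝ, ∀ s lam u G f, 1 ≤ s → 0 ≤ lam → lam ≤ s ^ 2 → NData Ω P₀ lam u G f →
      (∫ x in Ω, u x ^ 2) + (∫ x in Ω, f x ^ 2) ≤
        Real.exp (A₀ * s) * ((∫ x in ball y (R / 2), u x ^ 2) + ∫ x in Ω, f x ^ 2) →
      (∫ x in Ω, u x ^ 2) + (∫ x in Ω, f x ^ 2) ≤
        Real.exp (A₁ * s) * ((∫ x in ball y (3 * a), u x ^ 2) + ∫ x in Ω, f x ^ 2) := by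
  obtain ⟨D, c', c, τ₀, hD, hc', hc, hτ₀, H⟩ := hd.three_ball ha haR hball
  set T := τ₀ + (D + 3 + |A₀|) / c with hT
  have hT1 : τ₀ ≤ T := by rw [hT]; linarith [show 0 ≤ (D + 3 + |A₀|) / c by positivity]
  have hcT : D + 3 + |A₀| ≤ c * T := by
    rw [hT, mul_add, mul_div_cancel₀ _ hc.ne']
    have : 0 ≤ c * τ₀ := by positivity
    linarith
  have hT0 : 1 ≤ T := hτ₀.trans hT1
  refine ⟨|A₀| + (D + 2) + c' * T + 2, fun s lam u G f hs hlam hls h hA => ?_⟩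
  have hs0 : 0 ≤ s := by linarith
  have hTs : τ₀ ≤ T * s := hT1.trans (le_mul_of_one_le_right (by linarith) hs)
  have h3 := H (T * s) s lam u G f hTs hs (le_mul_of_one_le_left hs0 hT0) hlam hls h
  set F := ∫ x in Ω, f x ^ 2
  set U := ∫ x in Ω, u x ^ 2
  set I := ∫ x in ball y (3 * a), u x ^ 2
  have hF0 : 0 ≤ F := integral_nonneg fun x => sq_nonneg _
  have hI0 : 0 ≤ I := integral_nonneg fun x => sq_nonneg _
  have hU0 : 0 ≤ U := integral_nonneg fun x => sq_nonneg _
  have hab := exp_absorb hs hD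
  have hA0 : A₀ * s ≤ |A₀| * s := mul_le_mul_of_nonneg_right (le_abs_self _) hs0
  have e1 : Real.exp (A₀ * s) * (D * s ^ 2 * Real.exp (- c * (T * s))) ≤ 1 / 2 := by
    calc Real.exp (A₀ * s) * (D * s ^ 2 * Real.exp (- c * (T * s)))
        ≤ Real.exp (|A₀| * s) * (Real.exp ((D + 2) * s) * Real.exp (- c * (T * s))) := by gcongr
      _ = Real.exp (|A₀| * s + ((D + 2) * s + - c * (T * s))) := by rw [Real.exp_add, Real.exp_add]
      _ ≤ Real.exp (-1) := by
          apply Real.exp_le_exp.2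
          have := mul_le_mul_of_nonneg_right hcT hs0
          linarith
      _ ≤ 1 / 2 := by
          rw [Real.exp_neg, one_div]
          apply inv_anti₀ (by norm_num)
          linarith [Real.add_one_le_exp 1]
  set W := Real.exp (|A₀| * s + (D + 2) * s + c' * T * s) with hW
  have e2 : Real.exp (A₀ * s) * (D * s ^ 2 * Real.exp (c' * (T * s))) ≤ W := by
    calc Real.exp (A₀ * s) * (D * s ^ 2 * Real.exp (c' * (T * s)))
        ≤ Real.exp (|A₀| * s) * (Real.exp ((D + 2) * s) * Real.exp (c' * (T * s))) := by gcongr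
      _ = W := by rw [hW, Real.exp_add, Real.exp_add]; ring_nf
  have e3 : Real.exp (A₀ * s) ≤ W := by
    apply Real.exp_le_exp.2
    have : 0 ≤ (D + 2) * s + c' * T * s := by positivity
    linarith
  have h4 := mul_le_mul_of_nonneg_left h3 (Real.exp_nonneg (A₀ * s))
  have h5 := mul_le_mul_of_nonneg_right e1 hU0
  have h6 := mul_le_mul_of_nonneg_right e2 (add_nonneg hI0 hF0)
  have h7 := mul_le_mul_of_nonneg_right e3 hF0
  have hW0 : 0 < W := Real.exp_pos _
  have h8 : U + F ≤ 4 * W * (I + F) := by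
    have h9 : 0 ≤ W * I := by positivity
    linarith
  refine h8.trans (mul_le_mul_of_nonneg_right ?_ (add_nonneg hI0 hF0))
  have h10 : (4 : ℝ) ≤ Real.exp (2 * s) := by
    have : (4 : ℝ) ≤ Real.exp 1 ^ 2 := by
      have h11 : (2 : ℝ) ≤ Real.exp 1 := by linarith [Real.add_one_le_exp 1]
      calc (4 : ℝ) = 2 ^ 2 := by norm_num
        _ ≤ _ := pow_le_pow_left₀ (by norm_num) h11 2
    refine this.trans ?_
    rw [← Real.exp_nat_mul]
    apply Real.exp_le_exp.2
    push_cast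
    linarith
  calc 4 * W ≤ Real.exp (2 * s) * W := mul_le_mul_of_nonneg_right h10 hW0.le
    _ = _ := by rw [hW, ← Real.exp_add]; ring_nf

set_option maxHeartbeats 1000000 in
theorem IsDef.propagation (hd : IsDef Ω ψ₀ P₀) (hconn : IsPreconnected Ω) {z : Euc m} {ρ : ℝ}
    (hρ : 0 < ρ) (hz : ball z ρ ⊆ Ω) :
    ∃ A : ℝ, 0 ≤ A ∧ ∀ s lam u G f, 1 ≤ s → 0 ≤ lam → lam ≤ s ^ 2 → NData Ω P₀ lam u G f →
      (∫ x in Ω, u x ^ 2) + (∫ x in Ω, f x ^ 2) ≤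
        Real.exp (A * s) * ((∫ x in ball z ρ, u x ^ 2) + ∫ x in Ω, f x ^ 2) := by
  -- implication between lower bounds on balls
  set Good : Euc m → ℝ → Prop := fun x r => 0 < r ∧ ball x r ⊆ Ω ∧ ∀ A : ℝ, ∃ A' : ℝ,
    ∀ s lam u G f, 1 ≤ s → 0 ≤ lam → lam ≤ s ^ 2 → NData Ω P₀ lam u G f →
      (∫ x in Ω, u x ^ 2) + (∫ x in Ω, f x ^ 2) ≤
        Real.exp (A * s) * ((∫ x in ball x r, u x ^ 2) + ∫ x in Ω, f x ^ 2) →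
      (∫ x in Ω, u x ^ 2) + (∫ x in Ω, f x ^ 2) ≤
        Real.exp (A' * s) * ((∫ x in ball z ρ, u x ^ 2) + ∫ x in Ω, f x ^ 2) with hGood
  have hmono : ∀ x r x' r', Good x r → 0 < r' → ball x' r' ⊆ ball x r → Good x' r' := by
    rintro x r x' r' ⟨hr, hb, hG⟩ hr' hsub
    refine ⟨hr', hsub.trans hb, fun A => ?_⟩
    obtain ⟨A', hA'⟩ := hG A
    refine ⟨A', fun s lam u G f hs hlam hls h hA => hA' s lam u G f hs hlam hls h (hA.trans ?_)⟩
    exact mul_le_mul_of_nonneg_left (add_le_add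
      (h.mono_int hd hsub hb) le_rfl) (Real.exp_nonneg _)
  have hzG : Good z ρ := ⟨hρ, hz, fun A => ⟨A, fun s lam u G f _ _ _ _ hA => hA⟩⟩
  have hsub : Ω ⊆ {x | ∃ r, Good x r} := by
    refine hconn.subset_of_closure_inter_subset ?_ ⟨z, hz (mem_ball_self hρ), ρ, hzG⟩ ?_
    · rw [Metric.isOpen_iff]
      rintro x ⟨r, hr⟩
      refine ⟨r / 2, by linarith [hr.1], fun x' hx' => ⟨r / 2, ?_⟩⟩
      refine hmono x r x' (r / 2) hr (by linarith [hr.1]) (ball_subset_ball' ?_)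
      rw [mem_ball] at hx'
      linarith
    · rintro x ⟨hxc, hxΩ⟩
      obtain ⟨ε, hε, hεΩ⟩ := Metric.isOpen_iff.1 hd.isOpen x hxΩ
      set R := ε / 2 with hR
      have hR0 : 0 < R := by positivity
      obtain ⟨x', ⟨r', hr'⟩, hxx'⟩ := Metric.mem_closure_iff.1 hxc (R / 4) (by positivity)
      have hcb : closedBall x' R ⊆ Ω := by
        refine Subset.trans (fun p hp => ?_) hεΩ
        rw [mem_closedBall] at hp
        rw [mem_ball]
        have := dist_triangle p x' x
        rw [dist_comm x' x] at this
        linarith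
      set a := min (R / 4) (r' / 3) with ha
      have ha0 : 0 < a := lt_min (by positivity) (by linarith [hr'.1])
      have haR : 4 * a ≤ R := by linarith [min_le_left (R / 4) (r' / 3)]
      have har : 3 * a ≤ r' := by linarith [min_le_right (R / 4) (r' / 3)]
      have hb1 : ball x (R / 4) ⊆ ball x' (R / 2) := ball_subset_ball' (by linarith)
      have hb2 : ball x' (R / 2) ⊆ Ω :=
        (ball_subset_closedBall.trans (closedBall_subset_closedBall (by linarith))).trans hcb
      refine ⟨R / 4, by positivity, hb1.trans hb2, fun A => ?_⟩
      obtain ⟨A₁, hA₁⟩ := hd.three_ball' ha0 haR hcb A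
      obtain ⟨A₂, hA₂⟩ := hr'.2.2 A₁
      refine ⟨A₂, fun s lam u G f hs hlam hls h hA => hA₂ s lam u G f hs hlam hls h ?_⟩
      refine (hA₁ s lam u G f hs hlam hls h (hA.trans ?_)).trans ?_
      · exact mul_le_mul_of_nonneg_left (add_le_add
          (h.mono_int hd hb1 hb2) le_rfl) (Real.exp_nonneg _)
      · exact mul_le_mul_of_nonneg_left (add_le_add
          (h.mono_int hd (ball_subset_ball har) hr'.2.1) le_rfl) (Real.exp_nonneg _)
  obtain ⟨K, A, hK, hKΩ, hA, hbd⟩ := hd.bdry_step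
  choose! r hr using fun x (hx : x ∈ Ω) => hsub hx
  obtain ⟨t, htc⟩ := hK.elim_nhds_subcover' (fun x _ => ball x (r x))
    (fun x hx => ball_mem_nhds x (hr x (hKΩ hx)).1)
  set N : ℝ := (t.card : ℝ) with hN
  set A₀ := A + 2 * (N + 1) with hA₀
  have hA' : ∀ x : K, ∃ A' : ℝ, ∀ s lam u G f, 1 ≤ s → 0 ≤ lam → lam ≤ s ^ 2 →
      NData Ω P₀ lam u G f →
      (∫ x in Ω, u x ^ 2) + (∫ x in Ω, f x ^ 2) ≤
        Real.exp (A₀ * s) * ((∫ x in ball (x : Euc m) (r x), u x ^ 2) + ∫ x in Ω, f x ^ 2) →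
      (∫ x in Ω, u x ^ 2) + (∫ x in Ω, f x ^ 2) ≤
        Real.exp (A' * s) * ((∫ x in ball z ρ, u x ^ 2) + ∫ x in Ω, f x ^ 2) :=
    fun x => (hr x (hKΩ x.2)).2.2 A₀
  choose A' hA' using hA'
  obtain ⟨A₁, hA₁⟩ := (t.image A').exists_le
  have hA₁' : ∀ x ∈ t, A' x ≤ A₁ := fun x hx => hA₁ _ (Finset.mem_image_of_mem _ hx)
  refine ⟨max A₁ A₀, (by positivity : 0 ≤ A₀).trans (le_max_right _ _),
    fun s lam u G f hs hlam hls h => ?_⟩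
  have hs0 : 0 ≤ s := by linarith
  have hb := hbd s lam u G f hs hlam hls h
  have hF0 : 0 ≤ ∫ x in Ω, f x ^ 2 := integral_nonneg fun x => sq_nonneg _
  have hz0 : 0 ≤ ∫ x in ball z ρ, u x ^ 2 := integral_nonneg fun x => sq_nonneg _
  have hu2 := h.int_u2 hd
  have hsum : ∫ x in K, u x ^ 2 ≤ ∑ x ∈ t, ∫ p in ball (x : Euc m) (r x), u p ^ 2 := by
    have h1 : ∫ x in K, u x ^ 2 ≤ ∫ x in (⋃ x ∈ t, ball (x : Euc m) (r x)), u x ^ 2 :=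
      h.mono_int hd htc (iUnion₂_subset fun x _ => (hr x (hKΩ x.2)).2.1)
    refine h1.trans ?_
    have hIntg : ∀ x : K, IntegrableOn (fun p => u p ^ 2) (ball (x : Euc m) (r x)) :=
      fun x => hu2.mono_set (hr x (hKΩ x.2)).2.1
    clear_value N
    clear h1 hA₁' hA₁ hN htc
    induction t using Finset.induction_on with
    | empty => simp
    | insert x t hx ih =>
      rw [Finset.sum_insert hx, Finset.set_biUnion_insert]
      have hi : IntegrableOn (fun p => u p ^ 2) (⋃ x ∈ t, ball (x : Euc m) (r x)) :=
        hu2.mono_set (iUnion₂_subset fun x _ => (hr x (hKΩ x.2)).2.1)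
      refine le_trans ?_ (add_le_add_right ih _)
      have hm : MeasurableSet (⋃ x ∈ t, ball (x : Euc m) (r x)) :=
        t.measurableSet_biUnion fun _ _ => measurableSet_ball
      rw [← union_sdiff_self, setIntegral_union disjoint_sdiff_right (hm.diff measurableSet_ball)
        (hIntg x) (hi.mono_set sdiff_subset)]
      exact add_le_add_right (setIntegral_mono_set hi (Eventually.of_forall fun x => sq_nonneg _)
        (Eventually.of_forall sdiff_subset)) _
  have hE : 2 * (N + 1) * Real.exp (A * s) ≤ Real.exp (A₀ * s) := by
    have h1 : 2 * (N + 1) ≤ 2 * (N + 1) * s := le_mul_of_one_le_right (by positivity) hs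
    have h2 : 2 * (N + 1) ≤ Real.exp (2 * (N + 1) * s) := by
      linarith [Real.add_one_le_exp (2 * (N + 1) * s)]
    calc 2 * (N + 1) * Real.exp (A * s) ≤ Real.exp (2 * (N + 1) * s) * Real.exp (A * s) := by
          gcongr
      _ = _ := by rw [hA₀, ← Real.exp_add]; ring_nf
  have hA1 : 1 ≤ Real.exp (A * s) := Real.one_le_exp (by positivity)
  have hN0 : 0 ≤ N := by positivity
  -- it suffices to find a good ball
  have key : ∀ M : ℝ, 0 ≤ M → ∫ x in K, u x ^ 2 ≤ N * M →
      (∫ x in Ω, u x ^ 2) + (∫ x in Ω, f x ^ 2) ≤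
        Real.exp (A₀ * s) * (M + ∫ x in Ω, f x ^ 2) := by
    intro M hM hKM
    have h1 : (∫ x in Ω, u x ^ 2) ≤ Real.exp (A * s) * (N * M + ∫ x in Ω, f x ^ 2) :=
      hb.trans (by gcongr)
    have h2 := le_mul_of_one_le_left hF0 hA1
    have h3 := mul_le_mul_of_nonneg_right hE (add_nonneg hM hF0)
    have h4 : 0 ≤ Real.exp (A * s) * M := by positivity
    have h5 : 0 ≤ Real.exp (A * s) * (N * ∫ x in Ω, f x ^ 2) := by positivity
    have h6 : 0 ≤ Real.exp (A * s) * (N * M) := by positivity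
    linarith
  rcases t.eq_empty_or_nonempty with hte | hte
  · have h1 := key 0 le_rfl (by rw [hte, Finset.sum_empty] at hsum; rwa [mul_zero])
    refine h1.trans ?_
    gcongr
    exact le_max_right _ _
  · obtain ⟨x, hxt, hxm⟩ := t.exists_max_image
      (fun x => ∫ p in ball (x : Euc m) (r x), u p ^ 2) hte
    have h1 := key (∫ p in ball (x : Euc m) (r x), u p ^ 2) (integral_nonneg fun x => sq_nonneg _)
      (hsum.trans (by
        have := Finset.sum_le_card_nsmul t _ _ hxm
        rwa [nsmul_eq_mul] at this))
    refine (hA' x s lam u G f hs hlam hls h h1).trans ?_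
    gcongr
    exact (hA₁' x hxt).trans (le_max_left _ _)

end

section
variable {m : ℕ} {Ω : Set (Euc m)} {ψ₀ : Euc m → ℝ} {P₀ : Euc m → Euc m}

/-! ### Poincare inequality on a ball and the spectral gap -/

theorem sq_integral_le {φ : ℝ → ℝ} (hφ : ContinuousOn φ (Icc 0 1)) :
    (∫ t in Icc (0 : ℝ) 1, φ t) ^ 2 ≤ ∫ t in Icc (0 : ℝ) 1, φ t ^ 2 := by
  have i1 : IntegrableOn φ (Icc 0 1) := hφ.integrableOn_Icc
  have i2 : IntegrableOn (fun t => φ t ^ 2) (Icc 0 1) := (hφ.pow 2).integrableOn_Icc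
  set c := ∫ t in Icc (0 : ℝ) 1, φ t with hc
  have h0 : 0 ≤ ∫ t in Icc (0 : ℝ) 1, (φ t - c) ^ 2 := integral_nonneg fun t => sq_nonneg _
  have h1 : ∫ t in Icc (0 : ℝ) 1, (φ t - c) ^ 2
      = (∫ t in Icc (0 : ℝ) 1, φ t ^ 2) - 2 * c * c + c ^ 2 := by
    have e : ∀ t, (φ t - c) ^ 2 = φ t ^ 2 - 2 * c * φ t + c ^ 2 := fun t => by ring
    simp_rw [e]
    have i3 : IntegrableOn (fun t => 2 * c * φ t) (Icc 0 1) := i1.const_mul _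
    have i4 : IntegrableOn (fun _ : ℝ => c ^ 2) (Icc 0 1) := continuousOn_const.integrableOn_Icc
    have i5 : IntegrableOn (fun t => φ t ^ 2 - 2 * c * φ t) (Icc 0 1) := i2.sub i3
    rw [integral_add i5 i4, integral_sub i2 i3, integral_const_mul, ← hc]
    simp
  linarith

theorem seg_bound {u : Euc m → ℝ} {G : Euc m → Euc m} {z : Euc m} {ρ : ℝ} (hρ : 0 < ρ)
    (hug : ∀ x ∈ ball z ρ, HasFDerivAt u (innerSL ℝ (G x)) x) (hG : ContinuousOn G (ball z ρ))
    {x y : Euc m} (hx : x ∈ ball z ρ) (hy : y ∈ ball z ρ) :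
    ENNReal.ofReal ((u y - u x) ^ 2) ≤ ENNReal.ofReal (4 * ρ ^ 2) *
      ∫⁻ t in Icc (0 : ℝ) 1, (ball z ρ).indicator (fun p => ENNReal.ofReal (‖G p‖ ^ 2))
        (x + t • (y - x)) := by
  have hseg : ∀ t ∈ Icc (0 : ℝ) 1, x + t • (y - x) ∈ ball z ρ := fun t ht =>
    (convex_ball z ρ).add_smul_sub_mem hx hy ht
  have hγ : Continuous fun t : ℝ => x + t • (y - x) := by fun_prop
  have hGγ : ContinuousOn (fun t : ℝ => G (x + t • (y - x))) (Icc 0 1) :=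
    hG.comp hγ.continuousOn hseg
  set φ : ℝ → ℝ := fun t => ⟪G (x + t • (y - x)), y - x⟫ with hφ
  have hφc : ContinuousOn φ (Icc 0 1) := hGγ.inner continuousOn_const
  have hftc : u y - u x = ∫ t in Icc (0 : ℝ) 1, φ t := by
    have h1 : ∀ t ∈ uIcc (0 : ℝ) 1, HasDerivAt (fun t : ℝ => u (x + t • (y - x))) (φ t) t := by
      intro t ht
      rw [uIcc_of_le zero_le_one] at ht
      have h2 : HasDerivAt (fun t : ℝ => x + t • (y - x)) (y - x) t := by
        simpa using ((hasDerivAt_id t).smul_const (y - x)).const_add x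
      exact (hug _ (hseg t ht)).comp_hasDerivAt t h2
    have h3 := intervalIntegral.integral_eq_sub_of_hasDerivAt h1
      (ContinuousOn.intervalIntegrable (by rwa [uIcc_of_le zero_le_one]))
    rw [intervalIntegral.integral_of_le zero_le_one, ← integral_Icc_eq_integral_Ioc] at h3
    rw [h3]
    simp
  have hnorm : ‖y - x‖ ≤ 2 * ρ := by
    rw [← dist_eq_norm]
    rw [mem_ball] at hx hy
    have := dist_triangle_right y x z
    linarith
  have hreal : (u y - u x) ^ 2 ≤ ∫ t in Icc (0 : ℝ) 1, 4 * ρ ^ 2 * ‖G (x + t • (y - x))‖ ^ 2 := by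
    rw [hftc]
    refine (sq_integral_le hφc).trans ?_
    refine setIntegral_mono_on (hφc.pow 2).integrableOn_Icc
      (ContinuousOn.integrableOn_Icc (continuousOn_const.mul (hGγ.norm.pow 2))) measurableSet_Icc fun t _ => ?_
    have h1 := abs_real_inner_le_norm (G (x + t • (y - x))) (y - x)
    have h2 : |φ t| ≤ ‖G (x + t • (y - x))‖ * (2 * ρ) :=
      h1.trans (mul_le_mul_of_nonneg_left hnorm (norm_nonneg _))
    have h3 := pow_le_pow_left₀ (abs_nonneg _) h2 2
    rw [sq_abs] at h3
    linarith
  refine (ENNReal.ofReal_le_ofReal hreal).trans ?_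
  have hi4 : IntegrableOn (fun t => 4 * ρ ^ 2 * ‖G (x + t • (y - x))‖ ^ 2) (Icc (0 : ℝ) 1) :=
    ContinuousOn.integrableOn_Icc (continuousOn_const.mul (hGγ.norm.pow 2))
  rw [ofReal_integral_eq_lintegral_ofReal hi4
    (Eventually.of_forall fun t => by positivity)]
  rw [← lintegral_const_mul' _ _ ENNReal.ofReal_ne_top]
  refine setLIntegral_mono' measurableSet_Icc fun t ht => ?_
  rw [indicator_of_mem (hseg t ht), ENNReal.ofReal_mul (by positivity)]

theorem poincare_lintegral {u : Euc m → ℝ} {G : Euc m → Euc m} {z : Euc m} {ρ : ℝ} (hρ : 0 < ρ)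
    (hug : ∀ x ∈ ball z ρ, HasFDerivAt u (innerSL ℝ (G x)) x) (hG : ContinuousOn G (ball z ρ)) :
    ∫⁻ x in ball z ρ, ∫⁻ y in ball z ρ, ENNReal.ofReal ((u y - u x) ^ 2) ≤
      ENNReal.ofReal (4 * ρ ^ 2) * volume (ball (0 : Euc m) (2 * ρ)) *
        ∫⁻ x in ball z ρ, ENNReal.ofReal (‖G x‖ ^ 2) := by
  set B := ball z ρ with hB
  have hBm : MeasurableSet B := measurableSet_ball
  set g : Euc m → ℝ≥0∞ := B.indicator (fun p => ENNReal.ofReal (‖G p‖ ^ 2)) with hg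
  have hgm : Measurable g := by
    have h1 : Measurable (B.indicator G) := by
      classical
      have := (hG.measurable_piecewise (g := (0 : Euc m → Euc m)) continuousOn_const hBm)
      rwa [Set.piecewise_eq_indicator] at this
    have h2 : g = B.indicator (fun p => ENNReal.ofReal (‖B.indicator G p‖ ^ 2)) := by
      funext p
      by_cases hp : p ∈ B <;> simp [hg, hp]
    rw [h2]
    exact ((h1.norm.pow_const 2).ennreal_ofReal).indicator hBm
  set c := ENNReal.ofReal (4 * ρ ^ 2) with hc
  have hF1 : Measurable fun q : (Euc m × Euc m) × ℝ => g (q.1.1 + q.2 • q.1.2) := by fun_prop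
  calc ∫⁻ x in B, ∫⁻ y in B, ENNReal.ofReal ((u y - u x) ^ 2)
      ≤ ∫⁻ x in B, ∫⁻ h in ball (0 : Euc m) (2 * ρ), c * ∫⁻ t in Icc (0 : ℝ) 1, g (x + t • h) := by
        refine setLIntegral_mono' hBm fun x hx => ?_
        have h1 : ∫⁻ y in B, ENNReal.ofReal ((u y - u x) ^ 2) ≤
            ∫⁻ y, B.indicator (fun y => c * ∫⁻ t in Icc (0 : ℝ) 1, g (x + t • (y - x))) y := by
          rw [lintegral_indicator hBm]
          exact setLIntegral_mono' hBm fun y hy => seg_bound hρ hug hG hx hy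
        refine h1.trans ?_
        rw [← lintegral_add_left_eq_self _ x, ← lintegral_indicator measurableSet_ball]
        refine lintegral_mono fun h => ?_
        by_cases hh : x + h ∈ B
        · have : h ∈ ball (0 : Euc m) (2 * ρ) := by
            rw [mem_ball_zero_iff]
            rw [hB, mem_ball] at hx hh
            have h2 := dist_triangle_right (x + h) x z
            rw [dist_eq_norm (x + h) x] at h2
            simp only [add_sub_cancel_left] at h2
            linarith
          rw [indicator_of_mem hh, indicator_of_mem this]
          simp
        · rw [indicator_of_notMem hh]
          exact zero_le
    _ ≤ ∫⁻ x, ∫⁻ h in ball (0 : Euc m) (2 * ρ), c * ∫⁻ t in Icc (0 : ℝ) 1, g (x + t • h) :=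
        setLIntegral_le_lintegral _ _
    _ = ∫⁻ h in ball (0 : Euc m) (2 * ρ), ∫⁻ x, c * ∫⁻ t in Icc (0 : ℝ) 1, g (x + t • h) := by
        refine lintegral_lintegral_swap (Measurable.aemeasurable ?_)
        exact (Measurable.lintegral_prod_right' (ν := volume.restrict (Icc (0 : ℝ) 1)) hF1).const_mul c
    _ = ∫⁻ h in ball (0 : Euc m) (2 * ρ), c * ∫⁻ x, g x := by
        refine lintegral_congr fun h => ?_
        rw [lintegral_const_mul' _ _ ENNReal.ofReal_ne_top]
        congr 1
        rw [lintegral_lintegral_swap (Measurable.aemeasurable (by fun_prop))]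
        simp_rw [lintegral_add_right_eq_self]
        simp
    _ = _ := by
        rw [setLIntegral_const, hg, lintegral_indicator hBm]
        ring

theorem NData.poincare {lam : ℝ} {u : Euc m → ℝ} {G : Euc m → Euc m} {f : Euc m → ℝ}
    (h : NData Ω P₀ lam u G f) (hd : IsDef Ω ψ₀ P₀) {z : Euc m} {ρ : ℝ} (hρ : 0 < ρ)
    (hz : ball z ρ ⊆ Ω) {E : ℝ} (hE : ∫ x in Ω, ‖G x‖ ^ 2 ≤ E) (hE0 : 0 < E) :
    ∃ c : ℝ, ∫ x in ball z ρ, (u x - c) ^ 2 ≤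
      8 * ρ ^ 2 * (volume (ball (0 : Euc m) (2 * ρ))).toReal / (volume (ball z ρ)).toReal * E := by
  by_contra hcon
  push Not at hcon
  set V := (volume (ball z ρ)).toReal with hV
  set W := (volume (ball (0 : Euc m) (2 * ρ))).toReal with hW
  have hVt : volume (ball z ρ) ≠ ∞ := measure_ball_lt_top.ne
  have hWt : volume (ball (0 : Euc m) (2 * ρ)) ≠ ∞ := measure_ball_lt_top.ne
  have hV0 : 0 < V := ENNReal.toReal_pos (measure_ball_pos _ _ hρ).ne' hVt
  have hW0 : 0 < W := ENNReal.toReal_pos (measure_ball_pos _ _ (by positivity)).ne' hWt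
  have hP := poincare_lintegral hρ (fun x hx => h.ug x (hz hx))
    (h.Gc.mono (hz.trans subset_closure))
  set κ := 8 * ρ ^ 2 * W / V * E with hκ
  have hκ0 : 0 ≤ κ := by positivity
  have hlow : ENNReal.ofReal κ * ENNReal.ofReal V ≤
      ∫⁻ x in ball z ρ, ∫⁻ y in ball z ρ, ENNReal.ofReal ((u y - u x) ^ 2) := by
    rw [hV, ENNReal.ofReal_toReal hVt, ← setLIntegral_const]
    refine setLIntegral_mono' measurableSet_ball fun x hx => ?_
    have uc := h.uc
    have hi : IntegrableOn (fun y => (u y - u x) ^ 2) (ball z ρ) :=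
      (hd.integrableOn_cont (by fun_prop)).mono_set hz
    rw [← ofReal_integral_eq_lintegral_ofReal hi (Eventually.of_forall fun t => sq_nonneg _)]
    exact ENNReal.ofReal_le_ofReal (hcon (u x)).le
  have hG2 := h.int_G2 hd
  have hup : ∫⁻ x in ball z ρ, ENNReal.ofReal (‖G x‖ ^ 2) ≤ ENNReal.ofReal E := by
    rw [← ofReal_integral_eq_lintegral_ofReal (hG2.mono_set hz)
      (Eventually.of_forall fun t => sq_nonneg _)]
    refine ENNReal.ofReal_le_ofReal (le_trans ?_ hE)
    exact setIntegral_mono_set hG2 (Eventually.of_forall fun x => sq_nonneg _)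
      (Eventually.of_forall hz)
  have hall : ENNReal.ofReal κ * ENNReal.ofReal V ≤
      ENNReal.ofReal (4 * ρ ^ 2) * ENNReal.ofReal W * ENNReal.ofReal E := by
    refine (hlow.trans hP).trans ?_
    rw [hW, ENNReal.ofReal_toReal hWt]
    gcongr
  rw [← ENNReal.ofReal_mul hκ0, ← ENNReal.ofReal_mul (by positivity),
    ← ENNReal.ofReal_mul (by positivity), ENNReal.ofReal_le_ofReal_iff (by positivity)] at hall
  have : κ * V = 8 * ρ ^ 2 * W * E := by
    rw [hκ]
    field_simp
  rw [this] at hall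
  have : 0 < ρ ^ 2 * W * E := by positivity
  linarith

theorem IsDef.spectral_gap (hd : IsDef Ω ψ₀ P₀) (hconn : IsPreconnected Ω) (hne : Ω.Nonempty) :
    ∃ lam₁ : ℝ, 0 < lam₁ ∧ ∀ lam u G, 0 < lam → NData Ω P₀ lam u G (fun _ => 0) →
      0 < ∫ x in Ω, u x ^ 2 → lam₁ ≤ lam := by
  obtain ⟨z, hz⟩ := hne
  obtain ⟨ρ, hρ, hzρ⟩ := Metric.isOpen_iff.1 hd.isOpen z hz
  obtain ⟨A, hA, hprop⟩ := hd.propagation hconn hρ hzρ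
  set Cp := 8 * ρ ^ 2 * (volume (ball (0 : Euc m) (2 * ρ))).toReal / (volume (ball z ρ)).toReal
    with hCp
  have hCp0 : 0 ≤ Cp := by positivity
  set Q := Real.exp A * (Cp + 1) with hQ
  have hQ0 : 0 < Q := by positivity
  refine ⟨min 1 (1 / Q), lt_min one_pos (by positivity), fun lam u G hlam h hpos => ?_⟩
  by_contra hlt
  rw [not_le, lt_min_iff] at hlt
  obtain ⟨hl1, hl2⟩ := hlt
  rw [lt_div_iff₀ hQ0] at hl2
  set T := ∫ x in Ω, u x ^ 2 with hT
  have uc := h.uc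
  have Gc := h.Gc
  have hu2 := h.int_u2 hd
  have hG2 := h.int_G2 hd
  have hui : IntegrableOn u Ω := hd.integrableOn_cont uc
  have hmean : ∫ x in Ω, u x = 0 := by
    obtain ⟨B, hB⟩ := hd.bddF (f := fun x => - lam * u x) (by fun_prop)
    have := (hd.div_thm (F := G) (D := fun x => - lam * u x) (fun x hx => (h.Gd x hx).llipAt) h.Gc
      h.bc hB (by
        filter_upwards [ae_restrict_mem hd.isOpen.measurableSet] with x hx
        exact ⟨(h.G_diff hx).differentiableAt, by simpa using h.lap x hx⟩)).2
    rw [integral_const_mul] at this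
    rcases mul_eq_zero.1 this with h1 | h1
    · linarith
    · exact h1
  have hen : ∫ x in Ω, ‖G x‖ ^ 2 = lam * T := by
    have h1 := (h.energy hd (ω := fun _ => 1) (Q := fun _ => 0)
      (fun x => by simpa using hasFDerivAt_const (1 : ℝ) x) continuous_const).2
    simp only [one_mul, mul_zero, add_zero, inner_zero_left] at h1
    rw [integral_sub hG2 (hu2.const_mul lam), integral_const_mul] at h1
    linarith
  obtain ⟨c, hc⟩ := h.poincare hd hρ hzρ hen.le (by positivity)
  have hv := hprop 1 0 _ _ _ le_rfl le_rfl (by norm_num) (h.sub_const c)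
  have hf : ∫ x in Ω, (-lam * u x + 0) ^ 2 = lam ^ 2 * T := by
    rw [hT, ← integral_const_mul]
    congr 1
    funext x
    ring
  have hvT : T ≤ ∫ x in Ω, (u x - c) ^ 2 := by
    have e : ∀ x, (u x - c) ^ 2 = u x ^ 2 - 2 * c * u x + c ^ 2 := fun t => by ring
    simp_rw [e]
    have i3 : IntegrableOn (fun t => 2 * c * u t) Ω := hui.const_mul _
    have i4 : IntegrableOn (fun _ : Euc m => c ^ 2) Ω := hd.integrableOn_cont continuousOn_const
    have i5 : IntegrableOn (fun t => u t ^ 2 - 2 * c * u t) Ω := hu2.sub i3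
    rw [integral_add i5 i4, integral_sub hu2 i3, integral_const_mul, hmean]
    have : 0 ≤ ∫ _ in Ω, c ^ 2 := integral_nonneg fun x => sq_nonneg c
    linarith
  rw [hf, mul_one] at hv
  have h2 : T ≤ Real.exp A * (Cp * (lam * T) + lam ^ 2 * T) := by
    have h3 : 0 ≤ lam ^ 2 * T := by positivity
    have h4 := mul_le_mul_of_nonneg_left (add_le_add hc (le_refl (lam ^ 2 * T)))
      (Real.exp_nonneg A)
    linarith
  have h5 : Real.exp A * (Cp * (lam * T) + lam ^ 2 * T) ≤ lam * Q * T := by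
    have h6 : lam ^ 2 * T ≤ lam * T := by
      have : lam ^ 2 ≤ lam := by nlinarith
      exact mul_le_mul_of_nonneg_right this hpos.le
    have h7 := mul_le_mul_of_nonneg_left h6 (Real.exp_nonneg A)
    rw [hQ]
    linarith
  have h8 : lam * Q * T < 1 * T := mul_lt_mul_of_pos_right hl2 hpos
  linarith

end

section

/-! ### Local charts -/

/-- The projection on the first coordinates, as a continuous linear map. -/
def frontL (n : ℕ) : Euc (n + 1) →L[ℝ] Euc n :=
  (EuclideanSpace.equiv (Fin n) ℝ).symm.toContinuousLinearMap ∘L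
    ContinuousLinearMap.pi fun i : Fin n => EuclideanSpace.proj (𝕜 := ℝ) i.castSucc

theorem frontL_apply {n : ℕ} (y : Euc (n + 1)) : frontL n y = front y := rfl

theorem front_apply {n : ℕ} (y : Euc (n + 1)) (i : Fin n) : front y i = y i.castSucc := rfl

/-- The last coordinate as a continuous linear map. -/
def lastL (n : ℕ) : Euc (n + 1) →L[ℝ] ℝ := EuclideanSpace.proj (𝕜 := ℝ) (Fin.last n)

theorem lastL_apply {n : ℕ} (y : Euc (n + 1)) : lastL n y = lastc y := rfl

/-- `ψ` (with gradient `P`, strictly increasing in the direction `e`) describes `Ω` in `U`. -/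
structure IsChart {m : ℕ} (Ω U : Set (Euc m)) (ψ : Euc m → ℝ) (P : Euc m → Euc m) (e : Euc m) :
    Prop where
  isOpen : IsOpen Ω
  openU : IsOpen U
  grad : ∀ p, HasFDerivAt ψ (innerSL ℝ (P p)) p
  llip : ∀ p, LLipAt P p
  iff : ∀ p ∈ U, (p ∈ Ω ↔ 0 < ψ p)
  dir : ∀ p (s : ℝ), ψ (p + s • e) = ψ p + s

theorem exists_chart {n : ℕ} {Ω : Set (Euc (n + 1))} (hΩ : IsOpen Ω) {x : Euc (n + 1)} {ρ : ℝ}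
    {M : ℝ≥0} (h : IsGraphBall Ω x ρ (IsC11FunWith M)) :
    ∃ ψ P e, IsChart Ω (ball x ρ) ψ P e := by
  obtain ⟨T, f, ⟨hf1, -, hf3⟩, hT0, hf0, hΩT⟩ := h
  set A := T.symm.linearIsometryEquiv with hA
  have hS : ∀ p, T.symm p = A (p - x) := by
    intro p
    have h1 := T.symm.map_vsub p x
    have h2 : T.symm x = 0 := by rw [← hT0]; simp
    rw [h2] at h1
    simpa [hA] using h1.symm
  set AL : Euc (n + 1) →L[ℝ] Euc (n + 1) := A.toContinuousLinearEquiv.toContinuousLinearMap with hAL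
  have hSd : ∀ p, HasFDerivAt (fun p => T.symm p) AL p := by
    intro p
    have : (fun p => T.symm p) = fun p => AL (p - x) := funext hS
    rw [this]
    have h1 := (AL.hasFDerivAt (x := p - x)).comp p ((hasFDerivAt_id p).sub_const x)
    rwa [ContinuousLinearMap.comp_id] at h1
  set D : Euc (n + 1) → (Euc (n + 1) →L[ℝ] ℝ) := fun p =>
    (lastL n).comp AL - ((fderiv ℝ f (front (T.symm p))).comp ((frontL n).comp AL)) with hD
  set J := (InnerProductSpace.toDual ℝ (Euc (n + 1))).symm with hJ
  have hJi : ∀ L, innerSL ℝ (J L) = L := by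
    intro L
    ext v
    simp [hJ]
  refine ⟨fun p => lastc (T.symm p) - f (front (T.symm p)), fun p => J (D p),
    A.symm (EuclideanSpace.single (Fin.last n) 1), hΩ, isOpen_ball, fun p => ?_, fun p => ?_,
    fun p hp => ?_, fun p s => ?_⟩
  · rw [hJi]
    have h1 : HasFDerivAt (fun p => lastc (T.symm p)) ((lastL n).comp AL) p :=
      (lastL n).hasFDerivAt.comp p (hSd p)
    have h2 : HasFDerivAt (fun p => front (T.symm p)) ((frontL n).comp AL) p :=
      (frontL n).hasFDerivAt.comp p (hSd p)
    exact h1.sub ((hf1 _).hasFDerivAt.comp p h2)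
  · have h1 : LLipAt (fun p => front (T.symm p)) p := by
      have : (fun p => front (T.symm p)) = fun p => (frontL n) (AL (p - x)) := by
        funext p
        rw [hS p]
        rfl
      rw [this]
      exact (((frontL n).contDiff.comp AL.contDiff).comp
        (contDiff_id.sub contDiff_const)).contDiffAt.llipAt
    have h2 : LLipAt (fun p => fderiv ℝ f (front (T.symm p))) p := (hf3.llipAt _).comp h1
    have h3 : ContDiff ℝ 1 (fun L : Euc n →L[ℝ] ℝ =>
        J ((lastL n).comp AL - L.comp ((frontL n).comp AL))) :=
      J.contDiff.comp (contDiff_const.sub (contDiff_id.clm_comp contDiff_const))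
    exact LLipAt.comp (g := fun L : Euc n →L[ℝ] ℝ =>
        J ((lastL n).comp AL - L.comp ((frontL n).comp AL))) h3.contDiffAt.llipAt h2
  · have h1 : p ∈ Ω ↔ p ∈ Ω ∩ ball x ρ := ⟨fun h => ⟨h, hp⟩, fun h => h.1⟩
    rw [h1, hΩT]
    constructor
    · rintro ⟨y, ⟨-, hy⟩, rfl⟩
      simpa using hy
    · intro h2
      refine ⟨T.symm p, ⟨?_, by simpa using h2⟩, by simp⟩
      rw [mem_ball_zero_iff, hS p, A.norm_map]
      rwa [mem_ball, dist_eq_norm] at hp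
  · have h1 : T.symm (p + s • A.symm (EuclideanSpace.single (Fin.last n) 1))
        = T.symm p + s • (EuclideanSpace.single (Fin.last n) 1) := by
      rw [hS, hS, show p + s • A.symm (EuclideanSpace.single (Fin.last n) (1 : ℝ)) - x
        = (p - x) + s • A.symm (EuclideanSpace.single (Fin.last n) 1) by abel, map_add, map_smul]
      simp
    have h2 : front (T.symm p + s • (EuclideanSpace.single (Fin.last n) (1 : ℝ)))
        = front (T.symm p) := by
      ext i
      simp [front_apply, Fin.castSucc_ne_last]
    have h3 : lastc (T.symm p + s • (EuclideanSpace.single (Fin.last n) (1 : ℝ)))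
        = lastc (T.symm p) + s := by
      simp [lastc]
    simp only [h1, h2, h3]
    ring

variable {m : ℕ} {Ω U : Set (Euc m)} {ψ : Euc m → ℝ} {P : Euc m → Euc m} {e : Euc m}

namespace IsChart

theorem cont (h : IsChart Ω U ψ P e) : Continuous ψ :=
  continuous_iff_continuousAt.2 fun p => (h.grad p).continuousAt

theorem inner_dir (h : IsChart Ω U ψ P e) (p : Euc m) : ⟪P p, e⟫ = 1 := by
  have h1 : HasDerivAt (fun s : ℝ => p + s • e) e 0 := by
    simpa using ((hasDerivAt_id (0 : ℝ)).smul_const e).const_add p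
  have h2 : HasDerivAt (fun s : ℝ => ψ (p + s • e)) ⟪P p, e⟫ 0 := by
    have h3 : HasFDerivAt ψ (innerSL ℝ (P p)) (p + (0 : ℝ) • e) := by simpa using h.grad p
    exact h3.comp_hasDerivAt 0 h1
  simp_rw [h.dir] at h2
  have h4 : HasDerivAt (fun s : ℝ => ψ p + s) 1 0 := by
    simpa using (hasDerivAt_id (0 : ℝ)).const_add (ψ p)
  exact h2.unique h4

theorem zero_of_frontier (h : IsChart Ω U ψ P e) {p : Euc m} (hp : p ∈ frontier Ω) (hU : p ∈ U) :
    ψ p = 0 := by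
  rw [frontier, h.isOpen.interior_eq] at hp
  have h1 : ψ p ≤ 0 := not_lt.1 fun h0 => hp.2 ((h.iff p hU).2 h0)
  refine le_antisymm h1 (not_lt.1 fun h0 => ?_)
  have h2 : U ∩ ψ ⁻¹' Iio 0 ∈ 𝓝 p :=
    inter_mem (h.openU.mem_nhds hU) (h.cont.continuousAt.preimage_mem_nhds (Iio_mem_nhds h0))
  obtain ⟨q, hq, hqΩ⟩ := mem_closure_iff_nhds.1 hp.1 _ h2
  have h3 := (h.iff q hq.1).1 hqΩ
  have h4 : ψ q < 0 := hq.2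
  linarith

theorem frontier_of_zero (h : IsChart Ω U ψ P e) {p : Euc m} (hp : ψ p = 0) (hU : p ∈ U) :
    p ∈ frontier Ω := by
  rw [frontier, h.isOpen.interior_eq]
  refine ⟨?_, fun hΩ => ((h.iff p hU).1 hΩ).ne' hp⟩
  have h1 : Tendsto (fun s : ℝ => p + s • e) (𝓝[>] 0) (𝓝 p) := by
    have : Continuous (fun s : ℝ => p + s • e) := by fun_prop
    simpa using (this.tendsto 0).mono_left nhdsWithin_le_nhds
  refine mem_closure_of_tendsto h1 ?_
  filter_upwards [h1 (h.openU.mem_nhds hU), self_mem_nhdsWithin] with s hs hs0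
  rw [h.iff _ hs, h.dir, hp, zero_add]
  exact hs0

theorem line_deriv (h : IsChart Ω U ψ P e) (p v : Euc m) :
    HasDerivAt (fun s : ℝ => ψ (p + s • v)) ⟪P p, v⟫ 0 := by
  have h1 : HasDerivAt (fun s : ℝ => p + s • v) v 0 := by
    simpa using ((hasDerivAt_id (0 : ℝ)).smul_const v).const_add p
  have h3 : HasFDerivAt ψ (innerSL ℝ (P p)) (p + (0 : ℝ) • v) := by simpa using h.grad p
  exact h3.comp_hasDerivAt 0 h1

theorem line_mem (h : IsChart Ω U ψ P e) {p v : Euc m} (hp : ψ p = 0) (hU : p ∈ U)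
    (hv : 0 < ⟪P p, v⟫) : ∀ᶠ s : ℝ in 𝓝[>] 0, p + s • v ∈ Ω := by
  have h1 : Tendsto (fun s : ℝ => p + s • v) (𝓝[>] 0) (𝓝 p) := by
    have : Continuous (fun s : ℝ => p + s • v) := by fun_prop
    simpa using (this.tendsto 0).mono_left nhdsWithin_le_nhds
  have h2 := (h.line_deriv p v).hasDerivWithinAt (s := Ioi 0)
  have h3 := (hasDerivWithinAt_iff_tendsto_slope' (by simp)).1 h2
  filter_upwards [h1 (h.openU.mem_nhds hU), h3 (Ioi_mem_nhds hv), self_mem_nhdsWithin]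
    with s hs hs1 hs0
  rw [h.iff _ hs]
  have h5 : 0 < slope (fun s : ℝ => ψ (p + s • v)) 0 s := hs1
  rw [slope_def_field] at h5
  simp only [zero_smul, add_zero, hp, sub_zero] at h5
  have hs0' : (0 : ℝ) < s := hs0
  exact (div_pos_iff_of_pos_right hs0').1 h5

theorem uniqueDiff (h : IsChart Ω U ψ P e) {p : Euc m} (hp : p ∈ frontier Ω) (hU : p ∈ U) :
    UniqueDiffWithinAt ℝ (closure Ω) p := by
  have hp0 := h.zero_of_frontier hp hU
  have key : ∀ v, 0 < ⟪P p, v⟫ → v ∈ tangentConeAt ℝ (closure Ω) p := by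
    intro v hv
    have h1 := h.line_mem hp0 hU hv
    refine mem_tangentConeAt_of_add_smul_mem (l := 𝓝[>] (0 : ℝ)) (c := fun s => s) ?_
      (h1.mono fun s hs => subset_closure hs)
    exact tendsto_nhdsWithin_mono_right (fun s hs => (ne_of_gt hs)) tendsto_id
  refine ⟨?_, subset_closure (frontier_subset_closure hp)⟩
  have : Submodule.span ℝ (tangentConeAt ℝ (closure Ω) p) = ⊤ := by
    rw [eq_top_iff]
    intro w _
    set c : ℝ := |⟪P p, w⟫| + 1 with hc
    have h1 : w = (w + c • e) - c • e := by abel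
    rw [h1]
    have hi := h.inner_dir p
    refine Submodule.sub_mem _ (Submodule.subset_span (key _ ?_))
      (Submodule.subset_span (key _ ?_))
    · rw [inner_add_right, inner_smul_right, hi]
      have := neg_abs_le ⟪P p, w⟫
      linarith
    · rw [inner_smul_right, hi]
      positivity
  rw [this]
  exact dense_univ

theorem normal (h : IsChart Ω U ψ P e) {p ν : Euc m} (hp : p ∈ frontier Ω) (hU : p ∈ U)
    (hν : OutwardNormalAt Ω p ν) : ∃ κ : ℝ, 0 < κ ∧ P p = - κ • ν := by
  obtain ⟨hn, hout, -, ho⟩ := hν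
  have hp0 := h.zero_of_frontier hp hU
  have key : ∀ v, ⟪ν, v⟫ = ⟪P p, v⟫ * ⟪ν, e⟫ := by
    intro v
    set γ : ℝ → Euc m := fun s => p + s • v - ψ (p + s • v) • e with hγ
    have h1 : HasDerivAt γ (v - ⟪P p, v⟫ • e) 0 := by
      have h2 : HasDerivAt (fun s : ℝ => p + s • v) v 0 := by
        simpa using ((hasDerivAt_id (0 : ℝ)).smul_const v).const_add p
      exact h2.sub ((h.line_deriv p v).smul_const e)
    have hγ0 : γ 0 = p := by simp [hγ, hp0]
    have hγU : ∀ᶠ s in 𝓝 (0 : ℝ), γ s ∈ frontier Ω := by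
      have := h1.continuousAt (h.openU.mem_nhds (by rw [hγ0]; exact hU))
      filter_upwards [this] with s hs
      refine h.frontier_of_zero ?_ hs
      have := h.dir (p + s • v) (-ψ (p + s • v))
      simp only [neg_smul, ← sub_eq_add_neg, sub_self] at this
      exact this
    have ht : Tendsto γ (𝓝 0) (𝓝[frontier Ω] p) := by
      refine tendsto_nhdsWithin_iff.2 ⟨?_, hγU⟩
      have := h1.continuousAt.tendsto
      rwa [hγ0] at this
    have h2 := ho.comp_tendsto ht
    have h3 : (fun s => γ s - p) =O[𝓝 0] fun s : ℝ => s := by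
      have := h1.isBigO_sub
      simpa [hγ0] using this
    have h4 : (fun s => ⟪ν, γ s - p⟫) =o[𝓝 0] fun s : ℝ => s := h2.trans_isBigO h3.norm_left
    have h5 : HasDerivAt (fun s => ⟪ν, γ s - p⟫) 0 0 := by
      rw [hasDerivAt_iff_isLittleO]
      simpa [hγ0] using h4
    have h6 : HasDerivAt (fun s => ⟪ν, γ s - p⟫) ⟪ν, v - ⟪P p, v⟫ • e⟫ 0 :=
      ((innerSL ℝ ν).hasFDerivAt.comp_hasDerivAt 0 (h1.sub_const p))
    have h7 := h6.unique h5
    rw [inner_sub_right, inner_smul_right] at h7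
    linarith
  have h1 : ν = ⟪ν, e⟫ • P p := by
    refine ext_inner_right ℝ fun v => ?_
    rw [key v, inner_smul_left]
    simp [mul_comm]
  set a := ⟪ν, e⟫ with ha
  have ha0 : a ≠ 0 := by
    intro h0
    rw [h0, zero_smul] at h1
    rw [h1] at hn
    simp at hn
  have hneg : a < 0 := by
    refine lt_of_le_of_ne (not_lt.1 fun hpos => ?_) ha0
    have hP : 0 < ⟪P p, P p⟫ := by
      rw [real_inner_self_eq_norm_sq]
      have : P p ≠ 0 := by
        intro h0
        have := h.inner_dir p
        rw [h0, inner_zero_left] at this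
        norm_num at this
      positivity
    have h2 : 0 < ⟪P p, ν⟫ := by
      rw [h1, inner_smul_right]
      positivity
    obtain ⟨s, hs1, hs2⟩ := (hout.and (h.line_mem hp0 hU h2)).exists
    exact hs1 (subset_closure hs2)
  refine ⟨-a⁻¹, by simpa using hneg, ?_⟩
  have h2 : a⁻¹ • ν = a⁻¹ • (a • P p) := congrArg (fun w => a⁻¹ • w) h1
  rw [smul_smul, inv_mul_cancel₀ ha0, one_smul] at h2
  rw [neg_neg, h2]

end IsChart
end

section

/-! ### Construction of the defining function and of the Neumann data -/

variable {m : ℕ} {Ω : Set (Euc m)} {ν : Euc m → Euc m}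

/-- A nonnegative `C^{1,1}` piece of a defining function. -/
structure IsPiece (Ω : Set (Euc m)) (ν : Euc m → Euc m) (φ : Euc m → ℝ) (R : Euc m → Euc m) :
    Prop where
  grad : ∀ p, HasFDerivAt φ (innerSL ℝ (R p)) p
  lip : ∃ K : ℝ≥0, LipschitzWith K R
  nonneg : ∀ p ∈ Ω, 0 ≤ φ p
  zero : ∀ p ∈ frontier Ω, φ p = 0
  normal : ∀ p ∈ frontier Ω, ∃ κ : ℝ, 0 ≤ κ ∧ R p = - κ • ν p

theorem IsPiece.sum {ι : Type*} (s : Finset ι) {φ : ι → Euc m → ℝ} {R : ι → Euc m → Euc m}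
    (h : ∀ i ∈ s, IsPiece Ω ν (φ i) (R i)) :
    IsPiece Ω ν (fun p => ∑ i ∈ s, φ i p) (fun p => ∑ i ∈ s, R i p) := by
  classical
  induction s using Finset.induction_on with
  | empty =>
    refine ⟨fun p => ?_, ⟨0, ?_⟩, fun p _ => by simp, fun p _ => by simp,
      fun p _ => ⟨0, le_rfl, by simp⟩⟩
    · simpa using hasFDerivAt_const (0 : ℝ) p
    · simp
  | insert a t ha ih =>
    have h1 := h a (Finset.mem_insert_self a t)
    have h2 := ih fun i hi => h i (Finset.mem_insert_of_mem hi)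
    simp only [Finset.sum_insert ha]
    refine ⟨fun p => ?_, ?_, fun p hp => add_nonneg (h1.nonneg p hp) (h2.nonneg p hp),
      fun p hp => by rw [h1.zero p hp, h2.zero p hp, add_zero], fun p hp => ?_⟩
    · rw [map_add]
      exact (h1.grad p).add (h2.grad p)
    · obtain ⟨K, hK⟩ := h1.lip
      obtain ⟨K', hK'⟩ := h2.lip
      exact ⟨K + K', hK.add hK'⟩
    · obtain ⟨κ, hκ, e⟩ := h1.normal p hp
      obtain ⟨κ', hκ', e'⟩ := h2.normal p hp
      refine ⟨κ + κ', add_nonneg hκ hκ', ?_⟩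
      rw [e, e', ← add_smul]
      congr 1
      ring

theorem IsPiece.sum_ne {ι : Type*} (s : Finset ι) {φ : ι → Euc m → ℝ} {R : ι → Euc m → Euc m}
    (h : ∀ i ∈ s, IsPiece Ω ν (φ i) (R i)) {p : Euc m} (hp : p ∈ frontier Ω) {i : ι} (hi : i ∈ s)
    (hne : R i p ≠ 0) : ∑ i ∈ s, R i p ≠ 0 := by
  classical
  obtain ⟨κ, hκ, e⟩ := (h i hi).normal p hp
  obtain ⟨κ', hκ', e'⟩ := (IsPiece.sum (s.erase i)
    (fun j hj => h j (Finset.mem_of_mem_erase hj))).normal p hp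
  rw [← Finset.add_sum_erase s _ hi, e, e', ← add_smul]
  rw [e] at hne
  have h1 : κ ≠ 0 := by
    rintro rfl
    simp at hne
  have h2 : ν p ≠ 0 := by
    intro h0
    rw [h0] at hne
    simp at hne
  refine smul_ne_zero ?_ h2
  have : 0 < κ := lt_of_le_of_ne hκ h1.symm
  linarith

theorem IsChart.piece {x : Euc m} {ρ : ℝ} {ψ : Euc m → ℝ} {P : Euc m → Euc m} {e : Euc m}
    (h : IsChart Ω (ball x ρ) ψ P e) (hρ : 0 < ρ) (hν : OutwardNormalFieldOn Ω ν univ) :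
    ∃ φ R, IsPiece Ω ν φ R ∧ ∀ p ∈ frontier Ω, p ∈ ball x (ρ / 2) → R p ≠ 0 := by
  obtain ⟨η, Z, L, B, hη, hZ, hη01, hLc, hLU, -, hK1, hL0, -, -⟩ :=
    exists_cut (isCompact_closedBall x (ρ / 2)) (isOpen_ball (x := x) (ε := ρ))
      (closedBall_subset_ball (by linarith))
  have hfr : ∀ p ∈ frontier Ω, p ∈ L → ψ p = 0 := fun p hp hpL => h.zero_of_frontier hp (hLU hpL)
  refine ⟨fun p => η p * ψ p, fun p => η p • P p + ψ p • Z p, ⟨fun p => ?_, ?_, fun p hp => ?_,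
    fun p hp => ?_, fun p hp => ?_⟩, fun p hp hpb => ?_⟩
  · have := (hη p).fun_mul (h.grad p)
    have h2 : innerSL ℝ (η p • P p + ψ p • Z p) = η p • innerSL ℝ (P p) + ψ p • innerSL ℝ (Z p) := by
      rw [map_add, map_smul, map_smul]
    rw [h2]
    exact this
  · have hη1 : ContDiff ℝ 1 η := contDiff_one_of_grad hη hZ.continuous
    have hψ1 : ContDiff ℝ 1 ψ := contDiff_one_of_grad h.grad
      (continuous_iff_continuousAt.2 fun p => (h.llip p).continuousAt)
    refine exists_lipschitz_of_compactSupport (fun p => ?_) ?_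
    · exact (hη1.contDiffAt.llipAt.smul (h.llip p)).add
        (hψ1.contDiffAt.llipAt.smul hZ.contDiffAt.llipAt)
    · refine HasCompactSupport.intro hLc fun p hp => ?_
      obtain ⟨h1, h2, -⟩ := hL0 p hp
      simp [h1, h2]
  · by_cases hpL : p ∈ L
    · exact mul_nonneg (hη01 p).1 ((h.iff p (hLU hpL)).1 hp).le
    · simp [(hL0 p hpL).1]
  · by_cases hpL : p ∈ L
    · simp [hfr p hp hpL]
    · simp [(hL0 p hpL).1]
  · by_cases hpL : p ∈ L
    · obtain ⟨κ, hκ, e⟩ := h.normal hp (hLU hpL) (hν p ⟨hp, mem_univ _⟩)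
      refine ⟨η p * κ, mul_nonneg (hη01 p).1 hκ.le, ?_⟩
      rw [hfr p hp hpL, e, smul_smul]
      simp
    · obtain ⟨h1, h2, -⟩ := hL0 p hpL
      exact ⟨0, le_rfl, by simp [h1, h2]⟩
  · have hb := ball_subset_closedBall hpb
    obtain ⟨h1, h2, -⟩ := hK1 p hb
    simp only [h1, h2, one_smul, smul_zero, add_zero]
    intro h0
    have := h.inner_dir p
    rw [h0, inner_zero_left] at this
    norm_num at this

theorem interior_piece (hΩ : IsOpen Ω) (hb : Bornology.IsBounded Ω) :
    ∃ φ R, IsPiece Ω ν φ R ∧ ∀ p ∈ Ω, 0 < φ p := by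
  obtain ⟨χ, hs, hχ, hr⟩ := hΩ.exists_contDiff_support_eq (E := Euc m) (n := 2)
  have hχ0 : ∀ p, 0 ≤ χ p := fun p => (hr (mem_range_self p)).1
  have hfr : ∀ p, p ∉ Ω → χ p = 0 := fun p hp => by
    rw [← hs] at hp
    simpa using hp
  obtain ⟨Z, hZ, hZ1⟩ := exists_grad hχ
  have hfrZ : ∀ p, p ∉ Ω → Z p = 0 := fun p hp => by
    have hmin : IsLocalMin χ p := Eventually.of_forall fun q => by rw [hfr p hp]; exact hχ0 q
    have := hmin.hasFDerivAt_eq_zero (hZ p)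
    have h2 := congrArg (fun L => L (Z p)) this
    simpa using h2
  have hne : ∀ p ∈ frontier Ω, p ∉ Ω := fun p hp => by
    rw [frontier, hΩ.interior_eq] at hp
    exact hp.2
  refine ⟨χ, Z, ⟨hZ, ?_, fun p _ => hχ0 p, fun p hp => hfr p (hne p hp),
    fun p hp => ⟨0, le_rfl, by simp [hfrZ p (hne p hp)]⟩⟩, fun p hp => ?_⟩
  · refine exists_lipschitz_of_compactSupport (fun p => hZ1.contDiffAt.llipAt) ?_
    exact HasCompactSupport.intro hb.isCompact_closure fun p hp =>
      hfrZ p fun h => hp (subset_closure h)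
  · refine lt_of_le_of_ne (hχ0 p) fun h0 => ?_
    rw [← hs] at hp
    exact hp h0.symm

theorem exists_isDef {n : ℕ} {Ω : Set (Euc (n + 1))} {ν : Euc (n + 1) → Euc (n + 1)}
    (hbd : Bornology.IsBounded Ω) (hΩ : IsC11Domain Ω) (hν : OutwardNormalFieldOn Ω ν univ) :
    ∃ ψ₀ P₀, IsDef Ω ψ₀ P₀ ∧ (∀ p ∈ frontier Ω, ∃ κ : ℝ, P₀ p = κ • ν p) ∧
      UniqueDiffOn ℝ (closure Ω) := by
  obtain ⟨ρ, M, hop, hconn, hρ, hch⟩ := hΩ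
  have hch' : ∀ x : frontier Ω, ∃ ψ P e, IsChart Ω (ball x.1 ρ) ψ P e :=
    fun x => exists_chart hop (hch x.1 x.2)
  choose ψ P e hc using hch'
  have hpiece := fun x => (hc x).piece hρ hν
  choose φ R hp hR using hpiece
  obtain ⟨χ, Z, hχ, hχpos⟩ := interior_piece (ν := ν) hop hbd
  have hcomp : IsCompact (frontier Ω) := hbd.isCompact_closure.of_isClosed_subset
    isClosed_frontier frontier_subset_closure
  obtain ⟨t, ht⟩ := hcomp.elim_finite_subcover (fun x : frontier Ω => ball x.1 (ρ / 2))
    (fun x => isOpen_ball) (fun x hx => mem_iUnion.2 ⟨⟨x, hx⟩, mem_ball_self (by positivity)⟩)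
  set φ' : Option (frontier Ω) → Euc (n + 1) → ℝ := fun o => o.elim χ φ with hφ'
  set R' : Option (frontier Ω) → Euc (n + 1) → Euc (n + 1) := fun o => o.elim Z R with hR'
  have hall : ∀ o ∈ Finset.insertNone t, IsPiece Ω ν (φ' o) (R' o) := by
    intro o _
    cases o with
    | none => exact hχ
    | some x => exact hp x
  have hs := IsPiece.sum _ hall
  refine ⟨_, _, ⟨hop, hbd, hs.grad, hs.lip, fun p hp => ?_, hs.zero, fun p hp => ?_⟩,
    fun p hp => ?_, fun p hp => ?_⟩
  · refine Finset.sum_pos' (fun o ho => (hall o ho).nonneg p hp) ⟨none, by simp, hχpos p hp⟩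
  · obtain ⟨x, hx, hpx⟩ := mem_iUnion₂.1 (ht hp)
    exact IsPiece.sum_ne _ hall hp (i := some x) (by simpa using hx) (hR x p hp hpx)
  · obtain ⟨κ, -, e⟩ := hs.normal p hp
    exact ⟨_, e⟩
  · by_cases h : p ∈ Ω
    · exact (hop.uniqueDiffWithinAt h).mono subset_closure
    · have hf : p ∈ frontier Ω := by
        rw [frontier, hop.interior_eq]
        exact ⟨hp, h⟩
      exact (hc ⟨p, hf⟩).uniqueDiff hf (mem_ball_self hρ)

theorem ndata_of_eigen {ψ₀ : Euc m → ℝ} {P₀ : Euc m → Euc m} (hd : IsDef Ω ψ₀ P₀)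
    (hPν : ∀ p ∈ frontier Ω, ∃ κ : ℝ, P₀ p = κ • ν p) (hU : UniqueDiffOn ℝ (closure Ω))
    {lam : ℝ} {u : Euc m → ℝ} (hu2 : ContDiffOn ℝ 2 u Ω) (hu1 : ContDiffOn ℝ 1 u (closure Ω))
    (hlap : ∀ x ∈ Ω, laplacian u x + lam * u x = 0) (hN : NeumannBC Ω ν u univ) :
    ∃ G, NData Ω P₀ lam u G (fun _ => 0) := by
  set J := (InnerProductSpace.toDual ℝ (Euc m)).symm with hJ
  have hJi : ∀ L, innerSL ℝ (J L) = L := by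
    intro L
    ext v
    simp [hJ]
  have hJv : ∀ L v, ⟪J L, v⟫ = L v := by
    intro L v
    simp [hJ]
  set G : Euc m → Euc m := fun x => J (fderivWithin ℝ u (closure Ω) x) with hG
  have hnb : ∀ x ∈ Ω, closure Ω ∈ 𝓝 x := fun x hx =>
    mem_of_superset (hd.isOpen.mem_nhds hx) subset_closure
  have hGeq : ∀ x ∈ Ω, G x = J (fderiv ℝ u x) := fun x hx => by
    simp only [hG]
    rw [fderivWithin_of_mem_nhds (hnb x hx)]
  have hev : ∀ x ∈ Ω, G =ᶠ[𝓝 x] fun y => J (fderiv ℝ u y) := fun x hx => by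
    filter_upwards [hd.isOpen.mem_nhds hx] with y hy using hGeq y hy
  have hud : ∀ x ∈ Ω, ContDiffAt ℝ 2 u x := fun x hx => hu2.contDiffAt (hd.isOpen.mem_nhds hx)
  have hf1 : ∀ x ∈ Ω, ContDiffAt ℝ 1 (fderiv ℝ u) x := fun x hx =>
    (hud x hx).fderiv_right (by norm_num)
  have hug : ∀ x ∈ Ω, HasFDerivAt u (innerSL ℝ (G x)) x := fun x hx => by
    rw [hGeq x hx, hJi]
    exact ((hud x hx).differentiableAt two_ne_zero).hasFDerivAt
  have hGd : ∀ x ∈ Ω, ContDiffAt ℝ 1 G x := fun x hx => by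
    have h1 : ContDiffAt ℝ 1 (fun y => J (fderiv ℝ u y)) x :=
      J.contDiff.contDiffAt.comp x (hf1 x hx)
    exact h1.congr_of_eventuallyEq (hev x hx)
  refine ⟨G, hu1.continuousOn, ?_, continuousOn_const, hug, hGd, fun x hx v w => ?_,
    fun x hx => ?_, fun x hx => ?_⟩
  · exact J.continuous.comp_continuousOn (hu1.continuousOn_fderivWithin hU le_rfl)
  · refine symm_of_grad (u := u) ?_ ((hGd x hx).differentiableAt one_ne_zero) v w
    filter_upwards [hd.isOpen.mem_nhds hx] with y hy using hug y hy
  · have h1 := hlap x hx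
    have h2 : dv (fderiv ℝ G x) = laplacian u x := by
      unfold dv laplacian
      refine Finset.sum_congr rfl fun i _ => ?_
      have hD := ((hf1 x hx).differentiableAt one_ne_zero).hasFDerivAt
      have h3 : HasFDerivAt (fun y => fderiv ℝ u y (EuclideanSpace.single i 1))
          ((ContinuousLinearMap.apply ℝ ℝ (EuclideanSpace.single i (1 : ℝ))).comp
            (fderiv ℝ (fderiv ℝ u) x)) x :=
        (ContinuousLinearMap.apply ℝ ℝ (EuclideanSpace.single i (1 : ℝ))).hasFDerivAt.comp x hD
      have hDG := ((hGd x hx).differentiableAt one_ne_zero).hasFDerivAt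
      have h4 : HasFDerivAt (fun y => ⟪EuclideanSpace.single i (1 : ℝ), G y⟫)
          ((innerSL ℝ (EuclideanSpace.single i (1 : ℝ))).comp (fderiv ℝ G x)) x :=
        (innerSL ℝ (EuclideanSpace.single i (1 : ℝ))).hasFDerivAt.comp x hDG
      have h5 : (fun y => ⟪EuclideanSpace.single i (1 : ℝ), G y⟫) =ᶠ[𝓝 x]
          fun y => fderiv ℝ u y (EuclideanSpace.single i 1) := by
        filter_upwards [hev x hx] with y hy
        rw [hy, real_inner_comm, hJv]
      rw [h5.symm.fderiv_eq, h4.fderiv, real_inner_comm]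
      rfl
    rw [h2]
    linarith
  · obtain ⟨κ, e⟩ := hPν x hx
    obtain ⟨-, hb⟩ := hN x ⟨hx, mem_univ _⟩
    rw [e, inner_smul_left, real_inner_comm]
    simp only [hG]
    rw [hJv, hb]
    simp

end

section

/-! ### The cylinder and the doubling index -/

variable {m : ℕ} {Ω : Set (Euc m)} {ψ₀ : Euc m → ℝ} {P₀ : Euc m → Euc m}

/-- Splitting of the last coordinate. -/
def splitE (m : ℕ) : Euc (m + 1) ≃ᵐ ℝ × Euc m :=
  ((MeasurableEquiv.toLp 2 (Fin (m + 1) → ℝ)).symm.trans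
    (MeasurableEquiv.piFinSuccAbove (fun _ : Fin (m + 1) => ℝ) (Fin.last m))).trans
    (MeasurableEquiv.prodCongr (MeasurableEquiv.refl ℝ) (MeasurableEquiv.toLp 2 (Fin m → ℝ)))

theorem splitE_apply (y : Euc (m + 1)) : splitE m y = (lastc y, front y) := by
  refine Prod.ext rfl ?_
  ext i
  simp [splitE, front_apply, MeasurableEquiv.prodCongr, MeasurableEquiv.piFinSuccAbove,
    Fin.insertNthEquiv]
  rfl

theorem splitE_mp : MeasurePreserving (splitE m) volume volume := by
  unfold splitE
  refine MeasurePreserving.trans (MeasurePreserving.trans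
    (EuclideanSpace.volume_preserving_symm_measurableEquiv_toLp (Fin (m + 1)))
    (volume_preserving_piFinSuccAbove (fun _ : Fin (m + 1) => ℝ) (Fin.last m))) ?_
  exact (MeasurePreserving.id volume).prod
    (EuclideanSpace.volume_preserving_symm_measurableEquiv_toLp (Fin m)).symm

/-- The cylinder `S × I`. -/
def cylS (I : Set ℝ) (S : Set (Euc m)) : Set (Euc (m + 1)) := {y | lastc y ∈ I ∧ front y ∈ S}

theorem cylS_eq (I : Set ℝ) (S : Set (Euc m)) : cylS I S = splitE m ⁻¹' (I ×ˢ S) := by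
  ext y
  rw [mem_preimage, splitE_apply]
  rfl

theorem cyl_int (I : Set ℝ) (S : Set (Euc m)) (g : ℝ → ℝ) (w : Euc m → ℝ) :
    ∫ y in cylS I S, g (lastc y) * w (front y) = (∫ t in I, g t) * ∫ x in S, w x := by
  rw [← setIntegral_prod_mul, cylS_eq,
    ← Measure.volume_eq_prod,
    ← splitE_mp.setIntegral_preimage_emb (splitE m).measurableEmbedding]
  simp_rw [splitE_apply]

theorem cyl_integrable {I : Set ℝ} {S : Set (Euc m)} {g : ℝ → ℝ} {w : Euc m → ℝ}
    (hg : IntegrableOn g I) (hw : IntegrableOn w S) :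
    IntegrableOn (fun y => g (lastc y) * w (front y)) (cylS I S) := by
  have h1 : IntegrableOn (fun z : ℝ × Euc m => g z.1 * w z.2) (I ×ˢ S) := by
    have := Integrable.mul_prod hg hw
    rwa [Measure.prod_restrict, ← Measure.volume_eq_prod] at this
  rw [← splitE_mp.integrableOn_comp_preimage (splitE m).measurableEmbedding, ← cylS_eq] at h1
  refine h1.congr_fun_ae (Eventually.of_forall fun y => ?_)
  simp only [Function.comp, splitE_apply]

theorem norm_split (y : Euc (m + 1)) : ‖y‖ ^ 2 = ‖front y‖ ^ 2 + lastc y ^ 2 := by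
  rw [EuclideanSpace.norm_sq_eq, EuclideanSpace.norm_sq_eq, Fin.sum_univ_castSucc]
  simp [front_apply, lastc]

theorem front_sub (y z : Euc (m + 1)) : front (y - z) = front y - front z := rfl

theorem lastc_sub (y z : Euc (m + 1)) : lastc (y - z) = lastc y - lastc z := rfl

theorem ball_sub_cyl (y : Euc (m + 1)) (R : ℝ) (S : Set (Euc m)) :
    ball y R ∩ prodDomain S ⊆ cylS (Icc (lastc y - R) (lastc y + R)) S := by
  rintro z ⟨hz, hzS⟩
  refine ⟨?_, hzS⟩
  rw [mem_ball, dist_eq_norm] at hz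
  have h1 := norm_split (z - y)
  rw [lastc_sub] at h1
  have h2 : |lastc z - lastc y| ≤ ‖z - y‖ := by
    refine abs_le_of_sq_le_sq ?_ (norm_nonneg _)
    have := sq_nonneg ‖front (z - y)‖
    linarith
  have h3 := abs_le.1 (h2.trans hz.le)
  exact ⟨by linarith, by linarith⟩

theorem cyl_sub_ball (y : Euc (m + 1)) {r : ℝ} (hr : 0 < r) (S : Set (Euc m)) :
    cylS (Icc (lastc y - r / 2) (lastc y + r / 2)) (ball (front y) (r / 2) ∩ S) ⊆
      ball y r ∩ prodDomain S := by
  rintro z ⟨hz, hzb, hzS⟩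
  refine ⟨?_, hzS⟩
  rw [mem_ball, dist_eq_norm] at hzb ⊢
  have h1 := norm_split (z - y)
  rw [lastc_sub, front_sub] at h1
  have h2 : |lastc z - lastc y| ≤ r / 2 := abs_le.2 ⟨by linarith [hz.1], by linarith [hz.2]⟩
  have h3 : (lastc z - lastc y) ^ 2 ≤ (r / 2) ^ 2 := by
    rw [← sq_abs]
    exact pow_le_pow_left₀ (abs_nonneg _) h2 2
  have h4 : ‖front z - front y‖ ^ 2 ≤ (r / 2) ^ 2 := pow_le_pow_left₀ (norm_nonneg _) hzb.le 2
  refine lt_of_pow_lt_pow_left₀ 2 hr.le ?_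
  have : 0 < r ^ 2 := by positivity
  linarith

theorem hExt_sq (lam : ℝ) (u : Euc m → ℝ) (y : Euc (m + 1)) :
    hExt lam u y ^ 2 = Real.exp (2 * √lam * lastc y) * u (front y) ^ 2 := by
  unfold hExt
  rw [mul_pow, ← Real.exp_nat_mul]
  congr 2
  push_cast
  ring

theorem exp_int_upper {a t R : ℝ} (ha : 0 ≤ a) (hR : 0 ≤ R) :
    ∫ s in Icc (t - R) (t + R), Real.exp (a * s) ≤ 2 * R * Real.exp (a * (t + R)) := by
  have h1 : ∫ s in Icc (t - R) (t + R), Real.exp (a * s)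
      ≤ ∫ s in Icc (t - R) (t + R), Real.exp (a * (t + R)) := by
    refine setIntegral_mono_on (Continuous.integrableOn_Icc (by fun_prop))
      (Continuous.integrableOn_Icc (by fun_prop)) measurableSet_Icc fun s hs => ?_
    exact Real.exp_le_exp.2 (mul_le_mul_of_nonneg_left hs.2 ha)
  refine h1.trans (le_of_eq ?_)
  rw [setIntegral_const, measureReal_def, Real.volume_Icc, ENNReal.toReal_ofReal (by linarith),
    smul_eq_mul]
  ring

theorem exp_int_lower {a t R : ℝ} (ha : 0 ≤ a) (hR : 0 ≤ R) :
    2 * R * Real.exp (a * (t - R)) ≤ ∫ s in Icc (t - R) (t + R), Real.exp (a * s) := by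
  have h1 : ∫ s in Icc (t - R) (t + R), Real.exp (a * (t - R))
      ≤ ∫ s in Icc (t - R) (t + R), Real.exp (a * s) := by
    refine setIntegral_mono_on (Continuous.integrableOn_Icc (by fun_prop))
      (Continuous.integrableOn_Icc (by fun_prop)) measurableSet_Icc fun s hs => ?_
    exact Real.exp_le_exp.2 (mul_le_mul_of_nonneg_left hs.1 ha)
  refine le_trans (le_of_eq ?_) h1
  rw [setIntegral_const, measureReal_def, Real.volume_Icc, ENNReal.toReal_ofReal (by linarith),
    smul_eq_mul]
  ring

/-- Uniform propagation from every ball of a given radius centred on the closure. -/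
theorem IsDef.uniform_prop (hd : IsDef Ω ψ₀ P₀) (hconn : IsPreconnected Ω) {r : ℝ} (hr : 0 < r) :
    ∃ A : ℝ, 0 ≤ A ∧ ∀ x ∈ closure Ω, ∀ s lam u G, 1 ≤ s → 0 ≤ lam → lam ≤ s ^ 2 →
      NData Ω P₀ lam u G (fun _ => 0) →
      ∫ p in Ω, u p ^ 2 ≤ Real.exp (A * s) * ∫ p in ball x r ∩ Ω, u p ^ 2 := by
  have h1 : ∀ q : Ω, ∃ ρ : ℝ, 0 < ρ ∧ ρ ≤ r / 2 ∧ ball q.1 ρ ⊆ Ω := by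
    intro q
    obtain ⟨ε, hε, hq⟩ := Metric.isOpen_iff.1 hd.isOpen q.1 q.2
    exact ⟨min ε (r / 2), lt_min hε (by positivity), min_le_right _ _,
      (ball_subset_ball (min_le_left _ _)).trans hq⟩
  choose ρ hρ hρr hρΩ using h1
  choose A hA hprop using fun q : Ω => hd.propagation hconn (hρ q) (hρΩ q)
  obtain ⟨t, ht⟩ := hd.compact.elim_finite_subcover (fun q : Ω => ball q.1 (r / 2))
    (fun x => isOpen_ball) (fun x hx => by
      obtain ⟨q, hq, hxq⟩ := Metric.mem_closure_iff.1 hx (r / 2) (by positivity)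
      exact mem_iUnion.2 ⟨⟨q, hq⟩, hxq⟩)
  refine ⟨∑ q ∈ t, A q, Finset.sum_nonneg fun q _ => hA q, fun x hx s lam u G hs hl hls h => ?_⟩
  obtain ⟨q, hq, hxq⟩ := mem_iUnion₂.1 (ht hx)
  have h2 := hprop q s lam u G _ hs hl hls h
  simp only [ne_eq, OfNat.ofNat_ne_zero, not_false_eq_true, zero_pow, integral_zero, add_zero] at h2
  have h3 : ball q.1 (ρ q) ⊆ ball x r ∩ Ω := by
    intro p hp
    refine ⟨?_, hρΩ q hp⟩
    rw [mem_ball] at hp hxq ⊢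
    have h4 := dist_triangle_right p x q.1
    have := hρr q
    linarith
  have h4 : ∫ p in ball q.1 (ρ q), u p ^ 2 ≤ ∫ p in ball x r ∩ Ω, u p ^ 2 :=
    setIntegral_mono_set ((h.int_u2 hd).mono_set inter_subset_right)
      (Eventually.of_forall fun p => sq_nonneg (u p)) (Eventually.of_forall h3)
  have h5 : A q ≤ ∑ q ∈ t, A q := Finset.single_le_sum (fun q _ => hA q) hq
  refine h2.trans ?_
  refine mul_le_mul (Real.exp_le_exp.2 (mul_le_mul_of_nonneg_right h5 (by linarith))) h4
    (integral_nonneg fun p => sq_nonneg _) (Real.exp_nonneg _)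

theorem NData.pos_int {lam : ℝ} {u : Euc m → ℝ} {G : Euc m → Euc m} {f : Euc m → ℝ}
    (h : NData Ω P₀ lam u G f) (hd : IsDef Ω ψ₀ P₀) (hne : ∃ x ∈ Ω, u x ≠ 0) :
    0 < ∫ x in Ω, u x ^ 2 := by
  obtain ⟨x, hx, hux⟩ := hne
  refine lt_of_le_of_ne (integral_nonneg fun p => sq_nonneg _) fun h0 => hux ?_
  have h1 := (setIntegral_eq_zero_iff_of_nonneg_ae
    (Eventually.of_forall fun p => sq_nonneg (u p)) (h.int_u2 hd)).1 h0.symm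
  have h2 := Measure.eqOn_open_of_ae_eq h1 hd.isOpen ((h.uc.mono subset_closure).pow 2)
    continuousOn_const hx
  simpa using h2

theorem NData.Nbound {lam : ℝ} {u : Euc m → ℝ} {G : Euc m → Euc m} {f : Euc m → ℝ}
    (h : NData Ω P₀ lam u G f) (hd : IsDef Ω ψ₀ P₀) {r : ℝ} (hr : 0 < r) (y : Euc (m + 1))
    {X : ℝ} (hX : 0 ≤ X) (hpos : 0 < ∫ x in Ω, u x ^ 2)
    (hprop : ∫ p in Ω, u p ^ 2 ≤ Real.exp X * ∫ p in ball (front y) (r / 2) ∩ Ω, u p ^ 2) :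
    Nfun (prodDomain Ω) (hExt lam u) y r ≤ 3 + 5 * r * √lam + X := by
  set a := 2 * √lam with ha
  have ha0 : 0 ≤ a := by positivity
  set t := lastc y with ht
  set W := ∫ p in Ω, u p ^ 2 with hW
  set w := ∫ p in ball (front y) (r / 2) ∩ Ω, u p ^ 2 with hw
  have hiu := h.int_u2 hd
  have hw0 : 0 < w := by
    by_contra hcon
    have := mul_nonpos_of_nonneg_of_nonpos (Real.exp_nonneg X) (not_lt.1 hcon)
    linarith
  have hsq : ∀ z, hExt lam u z ^ 2 = Real.exp (a * lastc z) * u (front z) ^ 2 := hExt_sq lam u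
  have hIntg : ∀ R, IntegrableOn (fun z => hExt lam u z ^ 2) (cylS (Icc (t - R) (t + R)) Ω) := by
    intro R
    simp_rw [hsq]
    exact cyl_integrable (g := fun s => Real.exp (a * s)) (w := fun x => u x ^ 2)
      (Continuous.integrableOn_Icc (by fun_prop)) hiu
  have hup : Hfun (prodDomain Ω) (hExt lam u) y (2 * r)
      ≤ 2 * (2 * r) * Real.exp (a * (t + 2 * r)) * W := by
    have h1 : Hfun (prodDomain Ω) (hExt lam u) y (2 * r)
        ≤ ∫ z in cylS (Icc (t - 2 * r) (t + 2 * r)) Ω, hExt lam u z ^ 2 :=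
      setIntegral_mono_set (hIntg _) (Eventually.of_forall fun z => sq_nonneg _)
        (Eventually.of_forall (ball_sub_cyl y (2 * r) Ω))
    refine h1.trans ?_
    simp_rw [hsq]
    rw [cyl_int _ _ (fun s => Real.exp (a * s)) (fun x => u x ^ 2)]
    exact mul_le_mul_of_nonneg_right (exp_int_upper ha0 (by positivity)) hpos.le
  have hlow : 2 * (r / 2) * Real.exp (a * (t - r / 2)) * w
      ≤ Hfun (prodDomain Ω) (hExt lam u) y r := by
    have h1 : ∫ z in cylS (Icc (t - r / 2) (t + r / 2)) (ball (front y) (r / 2) ∩ Ω),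
        hExt lam u z ^ 2 ≤ Hfun (prodDomain Ω) (hExt lam u) y r :=
      setIntegral_mono_set ((hIntg r).mono_set (ball_sub_cyl y r Ω))
        (Eventually.of_forall fun z => sq_nonneg _)
        (Eventually.of_forall (cyl_sub_ball y hr Ω))
    refine le_trans ?_ h1
    simp_rw [hsq]
    rw [cyl_int _ _ (fun s => Real.exp (a * s)) (fun x => u x ^ 2)]
    exact mul_le_mul_of_nonneg_right (exp_int_lower ha0 (by positivity)) hw0.le
  set H1 := Hfun (prodDomain Ω) (hExt lam u) y r with hH1
  set H2 := Hfun (prodDomain Ω) (hExt lam u) y (2 * r) with hH2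
  have hH1pos : 0 < H1 := lt_of_lt_of_le (by positivity) hlow
  have hH2n : 0 ≤ H2 := integral_nonneg fun z => sq_nonneg _
  have hratio : H2 / H1 ≤ Real.exp (3 + 5 * r * √lam + X) := by
    rw [div_le_iff₀ hH1pos]
    have e1 : Real.exp (3 + 5 * r * √lam + X) * (2 * (r / 2) * Real.exp (a * (t - r / 2)) * w)
        = Real.exp 3 * r * Real.exp (a * (t + 2 * r)) * (Real.exp X * w) := by
      have : Real.exp (3 + 5 * r * √lam + X) * Real.exp (a * (t - r / 2))
          = Real.exp 3 * Real.exp (a * (t + 2 * r)) * Real.exp X := by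
        rw [← Real.exp_add, ← Real.exp_add, ← Real.exp_add]
        congr 1
        rw [ha]
        ring
      linear_combination r * w * this
    have e2 : (4 : ℝ) ≤ Real.exp 3 := by
      have := Real.add_one_le_exp (3 : ℝ)
      linarith
    calc H2 ≤ 4 * (r * Real.exp (a * (t + 2 * r)) * W) := by linarith
      _ ≤ Real.exp 3 * (r * Real.exp (a * (t + 2 * r)) * W) :=
        mul_le_mul_of_nonneg_right e2 (by positivity)
      _ = Real.exp 3 * r * Real.exp (a * (t + 2 * r)) * W := by ring
      _ ≤ Real.exp 3 * r * Real.exp (a * (t + 2 * r)) * (Real.exp X * w) :=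
        mul_le_mul_of_nonneg_left hprop (by positivity)
      _ = _ := e1.symm
      _ ≤ _ := mul_le_mul_of_nonneg_left hlow (Real.exp_nonneg _)
  unfold Nfun
  rcases (div_nonneg hH2n hH1pos.le).eq_or_lt with h0 | h0
  · rw [← hH2, ← hH1, ← h0, Real.log_zero]
    positivity
  · exact (Real.log_le_iff_le_exp h0).2 hratio

end

/-- Doubling index bound for the harmonic extension: for a
bounded `C^{1,1}` domain `Ω₀` there is `r₀(Ω₀) > 0` such that for every
`r < r₀/16` there is `C = C(r,Ω₀)` with: for every Neumann eigenfunction `u`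
with eigenvalue `λ > 0`, the extension `h(x,t) = e^{√λ t} u(x)` satisfies
`N_h(y,r) ≤ C √λ` for all `y ∈ Ω̄ = Ω̄₀ × ℝ`. -/
theorem doubling_index_bound_extension {n : ℕ}
    (Ω₀ : Set (Euc (n + 1))) (ν₀ : Euc (n + 1) → Euc (n + 1))
    (hbd : Bornology.IsBounded Ω₀) (hΩ₀ : IsC11Domain Ω₀)
    (hν : OutwardNormalFieldOn Ω₀ ν₀ univ) :
    ∃ r₀ : ℝ, 0 < r₀ ∧ ∀ r : ℝ, 0 < r → r < r₀ / 16 →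
      ∃ C : ℝ, 0 < C ∧ ∀ (lam : ℝ) (u : Euc (n + 1) → ℝ), 0 < lam →
        ContDiffOn ℝ 2 u Ω₀ → ContDiffOn ℝ 1 u (closure Ω₀) →
        (∀ x ∈ Ω₀, laplacian u x + lam * u x = 0) →
        NeumannBC Ω₀ ν₀ u univ → (∃ x ∈ Ω₀, u x ≠ 0) →
        ∀ y ∈ closure (prodDomain Ω₀),
          Nfun (prodDomain Ω₀) (hExt lam u) y r ≤ C * Real.sqrt lam := by
  obtain ⟨ψ₀, P₀, hd, hPν, hU⟩ := exists_isDef hbd hΩ₀ hν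
  have hconn : IsConnected Ω₀ := by
    obtain ⟨ρ, M, -, h, -⟩ := hΩ₀
    exact h
  obtain ⟨lam₁, hlam₁, hgap⟩ := hd.spectral_gap hconn.isPreconnected hconn.nonempty
  refine ⟨1, one_pos, fun r hr _ => ?_⟩
  obtain ⟨A, hA, hprop⟩ := hd.uniform_prop hconn.isPreconnected (r := r / 2) (by positivity)
  set c : ℝ := 1 + 1 / √lam₁ with hc
  have hsl : 0 < √lam₁ := Real.sqrt_pos.2 hlam₁
  have hc0 : 0 < c := by positivity
  refine ⟨3 * c + 5 * r + A * c, by positivity, fun lam u hlam hu2 hu1 hlap hN hne y hy => ?_⟩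
  obtain ⟨G, hG⟩ := ndata_of_eigen hd hPν hU hu2 hu1 hlap hN
  have hpos := hG.pos_int hd hne
  have hge := hgap lam u G hlam hG hpos
  have hsq : √lam₁ ≤ √lam := Real.sqrt_le_sqrt hge
  have hone : 1 ≤ √lam / √lam₁ := (one_le_div hsl).2 hsq
  have hcl : c * √lam = √lam + √lam / √lam₁ := by
    rw [hc]
    ring
  have h1 : 1 ≤ c * √lam := by
    rw [hcl]
    linarith [Real.sqrt_nonneg lam]
  have h2 : √lam ≤ c * √lam := by
    rw [hcl]
    linarith
  have h3 : lam ≤ (c * √lam) ^ 2 := by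
    have := pow_le_pow_left₀ (Real.sqrt_nonneg lam) h2 2
    rwa [Real.sq_sqrt hlam.le] at this
  have hfy : front y ∈ closure Ω₀ :=
    map_mem_closure (frontL (n + 1)).continuous hy fun z hz => hz
  have h4 := hprop (front y) hfy (c * √lam) lam u G h1 hlam.le h3 hG
  have h5 := hG.Nbound hd hr y (X := A * (c * √lam)) (by positivity) hpos h4
  refine h5.trans ?_
  linarith

end NodalNeumann
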